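/- Assume GRH for L(s,χ). There is an absolute constant C such that for every primitive Dirichlet character χ mod M, every real t, and every X with 4 ≤ X ≤ t², setting σ₁ = 1/2 + 4/log X: Σ_{γ_χ} (σ₁ − 1/2)/((σ₁ − 1/2)² + (t − γ_χ)²) ≤ C·E_χ(X,t), where the sum is over the ordinates γ_χ of the nontrivial zeros 1/2 + iγ_χ of L(s,χ) counted with multiplicity, and E_χ(X,t) = |Σ_{n≤X²} Λ_X(n)χ(n)·n^{−σ₁−it}| + log(M(1+|t|)). -/

import Mathlib

open Complex MeasureTheory ProbabilityTheory Filter Finset DirichletCharacter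

noncomputable section

/-- The finset of primes `p ≤ X²`. -/
def primesUptoSq (X : ℝ) : Finset ℕ := (Finset.range (⌊X ^ 2⌋₊ + 1)).filter Nat.Prime

/-- The finset of primes `p ≤ x`. -/
def primesUpto (x : ℝ) : Finset ℕ := (Finset.range (⌊x⌋₊ + 1)).filter Nat.Prime

/-- The Dirichlet polynomial `P_χ(γ) = ∑_{p ≤ X²} χ(p) p^{-1/2 - iγ}`. -/
def Pgamma {N : ℕ} (χ : DirichletCharacter ℂ N) (X γ : ℝ) : ℂ :=
  ∑ p ∈ primesUptoSq X, χ (p : ZMod N) * (p : ℂ) ^ (-(1 / 2 : ℂ) - I * γ)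

/-- `P_ℒ(γ) = a₁ P_{χ₁}(γ) + a₂ P_{χ₂}(γ)`. -/
def PLgamma {N₁ N₂ : ℕ} (a₁ a₂ : ℝ) (χ₁ : DirichletCharacter ℂ N₁)
    (χ₂ : DirichletCharacter ℂ N₂) (X γ : ℝ) : ℂ :=
  (a₁ : ℂ) * Pgamma χ₁ X γ + (a₂ : ℂ) * Pgamma χ₂ X γ

/-- The value of the random polynomial `P_χ(θ) = ∑_{p ≤ X²} χ(p) e^{2πiθ_p}/√p` at a
point `v = (θ_p)_p`. -/
def Ptheta {N : ℕ} (χ : DirichletCharacter ℂ N) (X : ℝ) (v : ℕ → ℝ) : ℂ :=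
  ∑ p ∈ primesUptoSq X, χ (p : ZMod N) * Complex.exp (2 * Real.pi * I * (v p)) / Real.sqrt p

/-- `P_ℒ(θ) = a₁ P_{χ₁}(θ) + a₂ P_{χ₂}(θ)`. -/
def PLtheta {N₁ N₂ : ℕ} (a₁ a₂ : ℝ) (χ₁ : DirichletCharacter ℂ N₁)
    (χ₂ : DirichletCharacter ℂ N₂) (X : ℝ) (v : ℕ → ℝ) : ℂ :=
  (a₁ : ℂ) * Ptheta χ₁ X v + (a₂ : ℂ) * Ptheta χ₂ X v

/-- The ordinates `γ ∈ (0, T]` of the zeros of `ζ` on the critical line (under RH, these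
are exactly the ordinates of the nontrivial zeros of `ζ` in the upper half plane up to `T`). -/
def zetaZerosIn (T : ℝ) : Set ℝ :=
  {γ : ℝ | 0 < γ ∧ γ ≤ T ∧ riemannZeta (1 / 2 + I * γ) = 0}

/-- `N(T)`, the number of nontrivial zeros of `ζ` with ordinate in `(0, T]`. -/
def NT (T : ℝ) : ℝ := ((zetaZerosIn T).ncard : ℝ)

/-- The Riemann Hypothesis: all nontrivial zeros of `ζ` lie on the critical line. -/
def RHzeta : Prop := ∀ s : ℂ, 0 < s.re → s.re < 1 → riemannZeta s = 0 → s.re = 1 / 2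

/-- GRH for `L(s, χ)`: all nontrivial zeros of `L(s,χ)` lie on the critical line. -/
def GRHchar {N : ℕ} [NeZero N] (χ : DirichletCharacter ℂ N) : Prop :=
  ∀ s : ℂ, 0 < s.re → s.re < 1 → LFunction χ s = 0 → s.re = 1 / 2

/-- Hypothesis 𝒟: no nontrivial zero of `L(s,χ)` coincides with a nontrivial zero of `ζ`. -/
def HypD {N : ℕ} [NeZero N] (χ : DirichletCharacter ℂ N) : Prop :=
  ∀ s : ℂ, 0 < s.re → s.re < 1 → riemannZeta s = 0 → LFunction χ s ≠ 0

/-- Hypothesis `H_{α,χ}`: there is `c > 0` such that for every `C ∈ (0,1)`, the limsup as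
`T → ∞` of the proportion of ordinates `γ ∈ (0,T]` of zeros of `ζ` lying within `C/log T`
of an ordinate of a (critical-line) zero of `L(s,χ)` is at most `c C^α`. -/
def HypH {N : ℕ} [NeZero N] (χ : DirichletCharacter ℂ N) (α : ℝ) : Prop :=
  ∃ c > (0 : ℝ), ∀ C : ℝ, 0 < C → C < 1 →
    Filter.limsup (fun T : ℝ =>
      (((zetaZerosIn T ∩ {γ : ℝ | ∃ x : ℝ,
          LFunction χ (1 / 2 + I * x) = 0 ∧ |x - γ| ≤ C / Real.log T}).ncard : ℝ) / NT T))
      Filter.atTop ≤ c * C ^ α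

/-- `Ψ = ∑_{p ≤ X²} 1/p`. -/
def Psi (X : ℝ) : ℝ := ∑ p ∈ primesUptoSq X, (1 : ℝ) / p

/-- `Ψ(T) = ∑_{p ≤ T} 1/p`. -/
def PsiT (T : ℝ) : ℝ := ∑ p ∈ primesUpto T, (1 : ℝ) / p

/-- The weight `w_X(n)`. -/
def wX (X : ℝ) (n : ℕ) : ℝ :=
  if (n : ℝ) ≤ X then 1 else Real.log (X ^ 2 / n) / Real.log X

/-- `Λ_X(n) = Λ(n) w_X(n)`. -/
def LambdaX (X : ℝ) (n : ℕ) : ℝ := ArithmeticFunction.vonMangoldt n * wX X n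

/-- `σ₁ = 1/2 + 4/log X`. -/
def sigma1 (X : ℝ) : ℝ := 1 / 2 + 4 / Real.log X

/-- `E_χ(X,t) = |∑_{n ≤ X²} Λ_X(n) χ(n) n^{-σ₁-it}| + log(M(1+|t|))`. -/
def EchiT {N : ℕ} (χ : DirichletCharacter ℂ N) (X t : ℝ) : ℝ :=
  ‖∑ m ∈ Finset.Icc 1 ⌊X ^ 2⌋₊,
      (LambdaX X m : ℂ) * χ (m : ZMod N) * (m : ℂ) ^ (-(sigma1 X : ℂ) - I * t)‖
    + Real.log (N * (1 + |t|))

/-- Integral over a vertical line. -/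
def VI (F : ℂ → ℂ) (x : ℝ) : ℂ := ∫ y : ℝ, F ((x : ℂ) + (y : ℂ) * I)

/-- the strip -/
def Strip (x₁ x₂ : ℝ) : Set ℂ := {z | x₁ ≤ z.re ∧ z.re ≤ x₂}

/-- decay in a set of order `-3/2`, for large imaginary part -/
def Decays (F : ℂ → ℂ) (S : Set ℂ) (r : ℝ) : Prop :=
  ∃ C Y : ℝ, ∀ z ∈ S, Y ≤ |z.im| → ‖F z‖ ≤ C * (1 + ‖z‖) ^ r

lemma decay_split (z : ℂ) : (1 + ‖z‖) ^ (-(3/2) : ℝ) ≤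
    (1 + |z.re|) ^ (-(1/4) : ℝ) * (1 + |z.im|) ^ (-(5/4) : ℝ) := by
  have h : (1 + ‖z‖) ^ (-(3/2) : ℝ) = (1 + ‖z‖) ^ (-(1/4) : ℝ) * (1 + ‖z‖) ^ (-(5/4) : ℝ) := by
    rw [← Real.rpow_add (by positivity)]; norm_num
  rw [h]
  have h1 := abs_re_le_norm z
  have h2 := abs_im_le_norm z
  have e1 := abs_nonneg z.re
  have e2 := abs_nonneg z.im
  gcongr ?_ * ?_
  · exact Real.rpow_le_rpow_of_nonpos (by positivity) (by linarith) (by norm_num)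
  · exact Real.rpow_le_rpow_of_nonpos (by positivity) (by linarith) (by norm_num)

lemma integrable_decay : Integrable (fun y : ℝ => (1 + |y|) ^ (-(5/4) : ℝ)) := by
  have := integrable_one_add_norm (E := ℝ) (μ := volume) (r := 5/4) (by simp; norm_num)
  simpa using this

lemma decays_global {F : ℂ → ℂ} {x₁ x₂ : ℝ} (hc : ContinuousOn F (Strip x₁ x₂))
    (hd : Decays F (Strip x₁ x₂) (-(3/2))) :
    ∃ C, 0 ≤ C ∧ ∀ z ∈ Strip x₁ x₂, ‖F z‖ ≤ C * (1 + ‖z‖) ^ (-(3/2) : ℝ) := by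
  obtain ⟨C, Y, h⟩ := hd
  have hcomp : IsCompact (Set.Icc x₁ x₂ ×ℂ Set.Icc (-Y) Y) := isCompact_Icc.reProdIm isCompact_Icc
  have hsub : Set.Icc x₁ x₂ ×ℂ Set.Icc (-Y) Y ⊆ Strip x₁ x₂ := by
    intro z hz
    simp only [mem_reProdIm, Set.mem_Icc] at hz
    exact hz.1
  have hcont : ContinuousOn (fun z => ‖F z‖ / (1 + ‖z‖) ^ (-(3/2) : ℝ))
      (Set.Icc x₁ x₂ ×ℂ Set.Icc (-Y) Y) := by
    apply ContinuousOn.div (hc.mono hsub).norm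
    · apply ContinuousOn.rpow_const (by fun_prop)
      intro z _; left; positivity
    · intro z _; positivity
  obtain ⟨C', hC'⟩ := hcomp.bddAbove_image hcont
  refine ⟨max 0 (max C C'), le_max_left _ _, fun z hz => ?_⟩
  have hpos : 0 < (1 + ‖z‖) ^ (-(3/2) : ℝ) := by positivity
  by_cases hY : Y ≤ |z.im|
  · refine (h z hz hY).trans ?_
    gcongr
    exact (le_max_left _ _).trans (le_max_right _ _)
  · push Not at hY
    have hz' : z ∈ Set.Icc x₁ x₂ ×ℂ Set.Icc (-Y) Y := by
      simp only [mem_reProdIm, Set.mem_Icc]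
      exact ⟨hz, abs_le.mp hY.le⟩
    have := hC' (Set.mem_image_of_mem _ hz')
    rw [div_le_iff₀ hpos] at this
    refine this.trans ?_
    gcongr
    exact (le_max_right _ _).trans (le_max_right _ _)

lemma mem_strip_line {x₁ x₂ x : ℝ} (h1 : x₁ ≤ x) (h2 : x ≤ x₂) (y : ℝ) :
    (x : ℂ) + (y : ℂ) * I ∈ Strip x₁ x₂ := by
  simp [Strip, h1, h2]

lemma line_norm_le {F : ℂ → ℂ} {x₁ x₂ C : ℝ} (hC : 0 ≤ C)
    (h : ∀ z ∈ Strip x₁ x₂, ‖F z‖ ≤ C * (1 + ‖z‖) ^ (-(3/2) : ℝ)) {x : ℝ} (h1 : x₁ ≤ x)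
    (h2 : x ≤ x₂) (y : ℝ) :
    ‖F ((x : ℂ) + (y : ℂ) * I)‖ ≤ C * (1 + |x|) ^ (-(1/4) : ℝ) * (1 + |y|) ^ (-(5/4) : ℝ) := by
  refine (h _ (mem_strip_line h1 h2 y)).trans ?_
  rw [mul_assoc]
  gcongr
  simpa using decay_split ((x : ℂ) + (y : ℂ) * I)

lemma line_integrable {F : ℂ → ℂ} {x₁ x₂ : ℝ} (hc : ContinuousOn F (Strip x₁ x₂))
    (hd : Decays F (Strip x₁ x₂) (-(3/2))) {x : ℝ} (h1 : x₁ ≤ x) (h2 : x ≤ x₂) :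
    Integrable (fun y : ℝ => F ((x : ℂ) + (y : ℂ) * I)) := by
  obtain ⟨C, hC, h⟩ := decays_global hc hd
  refine (integrable_decay.const_mul (C * (1 + |x|) ^ (-(1/4) : ℝ))).mono' ?_ ?_
  · apply Continuous.aestronglyMeasurable
    exact hc.comp_continuous (by fun_prop) (fun y => mem_strip_line h1 h2 y)
  · exact Eventually.of_forall fun y => line_norm_le hC h h1 h2 y

lemma VI_eq {F : ℂ → ℂ} {x₁ x₂ : ℝ} (h12 : x₁ ≤ x₂) (hF : DifferentiableOn ℂ F (Strip x₁ x₂))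
    (hd : Decays F (Strip x₁ x₂) (-(3/2))) : VI F x₁ = VI F x₂ := by
  obtain ⟨C, hC, h⟩ := decays_global hF.continuousOn hd
  have i1 := line_integrable hF.continuousOn hd le_rfl h12
  have i2 := line_integrable hF.continuousOn hd h12 le_rfl
  have t1 := intervalIntegral_tendsto_integral i1 tendsto_neg_atTop_atBot tendsto_id
  have t2 := intervalIntegral_tendsto_integral i2 tendsto_neg_atTop_atBot tendsto_id
  simp only [id] at t1 t2
  -- horizontal sides tend to zero
  have hor : ∀ e : ℝ, (e = 1 ∨ e = -1) → Tendsto (fun T : ℝ => ∫ x in x₁..x₂, F ((x : ℂ) + ((e * T : ℝ) : ℂ) * I))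
      atTop (nhds 0) := by
    intro e he
    have hlim : Tendsto (fun T : ℝ => C * (1 + T) ^ (-(5/4) : ℝ) * |x₂ - x₁|) atTop (nhds 0) := by
      have : Tendsto (fun T : ℝ => (1 + T) ^ (-(5/4) : ℝ)) atTop (nhds 0) :=
        (tendsto_rpow_neg_atTop (by norm_num)).comp (tendsto_atTop_add_const_left _ 1 tendsto_id)
      simpa using (this.const_mul C).mul_const |x₂ - x₁|
    refine squeeze_zero_norm' ?_ hlim
    filter_upwards [eventually_ge_atTop 0] with T hT
    apply intervalIntegral.norm_integral_le_of_norm_le_const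
    intro x hx
    rw [Set.uIoc_of_le h12] at hx
    refine (line_norm_le hC h hx.1.le hx.2 (e * T)).trans ?_
    have : |e * T| = T := by rcases he with rfl | rfl <;> simp [abs_of_nonneg hT]
    rw [this, mul_assoc]
    gcongr
    have hx1 : (1 + |x|) ^ (-(1/4) : ℝ) ≤ 1 := Real.rpow_le_one_of_one_le_of_nonpos
      (by linarith [abs_nonneg x]) (by norm_num)
    have := Real.rpow_nonneg (show (0:ℝ) ≤ 1 + T by linarith) (-(5/4))
    nlinarith
  have hT : ∀ T : ℝ, (∫ y in (-T)..T, F (x₂ + y * I)) - (∫ y in (-T)..T, F (x₁ + y * I)) =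
      I * ((∫ x in x₁..x₂, F ((x : ℂ) + (((-1) * T : ℝ) : ℂ) * I)) -
        ∫ x in x₁..x₂, F ((x : ℂ) + ((1 * T : ℝ) : ℂ) * I)) := by
    intro T
    have := integral_boundary_rect_eq_zero_of_differentiableOn F (x₁ + ((-T : ℝ) : ℂ) * I)
      (x₂ + (T : ℂ) * I) (hF.mono ?_)
    · simp at this
      simp
      linear_combination (-I) * this + ((∫ y in (-T)..T, F (x₂ + y * I)) - (∫ y in (-T)..T, F (x₁ + y * I))) * I_mul_I
    · intro z hz
      simp only [mem_reProdIm] at hz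
      have := hz.1
      simp [Set.uIcc_of_le h12] at this
      exact this
  have l1 := (t2.sub t1).congr hT
  have l2 := ((hor (-1) (Or.inr rfl)).sub (hor 1 (Or.inl rfl))).const_mul I
  have := tendsto_nhds_unique l1 l2
  simp at this
  exact (sub_eq_zero.mp this).symm

lemma VI_right {F : ℂ → ℂ} {x₀ C : ℝ} (hF : DifferentiableOn ℂ F {z | x₀ ≤ z.re})
    (hd : ∀ z : ℂ, x₀ ≤ z.re → ‖F z‖ ≤ C * (1 + ‖z‖) ^ (-(3/2) : ℝ)) : VI F x₀ = 0 := by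
  have hC : 0 ≤ C := by
    have := (norm_nonneg _).trans (hd x₀ (by simp))
    have h2 : 0 < (1 + ‖(x₀:ℂ)‖) ^ (-(3/2) : ℝ) := by positivity
    exact nonneg_of_mul_nonneg_left this h2
  have hcst : ∀ x, x₀ ≤ x → VI F x₀ = VI F x := fun x hx =>
    VI_eq hx (hF.mono fun z hz => hz.1) ⟨C, 0, fun z hz _ => hd z hz.1⟩
  have hlim : Tendsto (fun x : ℝ => VI F x) atTop (nhds 0) := by
    have hl : Tendsto (fun x : ℝ => C * (1 + x) ^ (-(1/4) : ℝ) * ∫ y : ℝ, (1 + |y|) ^ (-(5/4) : ℝ))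
        atTop (nhds 0) := by
      have : Tendsto (fun T : ℝ => (1 + T) ^ (-(1/4) : ℝ)) atTop (nhds 0) :=
        (tendsto_rpow_neg_atTop (by norm_num)).comp (tendsto_atTop_add_const_left _ 1 tendsto_id)
      simpa using (this.const_mul C).mul_const (∫ y : ℝ, (1 + |y|) ^ (-(5/4) : ℝ))
    refine squeeze_zero_norm' ?_ hl
    filter_upwards [eventually_ge_atTop 0, eventually_ge_atTop x₀] with x hx hx0
    rw [VI, ← integral_const_mul]
    refine norm_integral_le_of_norm_le (integrable_decay.const_mul _) (Eventually.of_forall fun y => ?_)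
    have := line_norm_le (x₁ := x₀) (x₂ := x) hC (fun z hz => hd z hz.1) hx0 le_rfl y
    rwa [abs_of_nonneg hx] at this
  refine tendsto_nhds_unique (tendsto_const_nhds.congr' ?_) hlim
  filter_upwards [eventually_ge_atTop x₀] with x hx using hcst x hx

lemma VI_left {F : ℂ → ℂ} {x₀ C : ℝ} (hF : DifferentiableOn ℂ F {z | z.re ≤ x₀})
    (hd : ∀ z : ℂ, z.re ≤ x₀ → ‖F z‖ ≤ C * (1 + ‖z‖) ^ (-(3/2) : ℝ)) : VI F x₀ = 0 := by
  have := VI_right (F := fun z => F (-z)) (x₀ := -x₀) (C := C)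
    (hF.comp (by fun_prop) (fun z hz => by simp at hz ⊢; linarith))
    (fun z hz => by simpa using hd (-z) (by simp; linarith))
  rw [VI, ← integral_neg_eq_self] at this
  rw [VI, ← this]
  congr 1; ext y; congr 1; push_cast; ring

lemma integral_poisson {b : ℝ} (hb : 0 < b) : ∫ y : ℝ, b / (b ^ 2 + y ^ 2) = Real.pi := by
  have h := Measure.integral_comp_div (fun x : ℝ => (1 + x ^ 2)⁻¹) b
  rw [integral_univ_inv_one_add_sq, abs_of_pos hb] at h
  have h2 : ∀ y : ℝ, b / (b ^ 2 + y ^ 2) = b⁻¹ * (1 + (y / b) ^ 2)⁻¹ := by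
    intro y; field_simp
  simp_rw [h2]
  rw [integral_const_mul, h]
  simp; field_simp

lemma integrable_poisson {b : ℝ} (hb : 0 < b) : Integrable (fun y : ℝ => b / (b ^ 2 + y ^ 2)) := by
  by_contra h
  have := integral_poisson hb
  rw [integral_undef h] at this
  exact Real.pi_ne_zero this.symm

lemma VI_sub {F G : ℂ → ℂ} {x : ℝ} (hF : Integrable (fun y : ℝ => F ((x : ℂ) + (y : ℂ) * I)))
    (hG : Integrable (fun y : ℝ => G ((x : ℂ) + (y : ℂ) * I))) :
    VI (fun z => F z - G z) x = VI F x - VI G x := integral_sub hF hG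

lemma Decays.mul {F G : ℂ → ℂ} {S : Set ℂ} {r q e : ℝ} (hF : Decays F S r) (hG : Decays G S q)
    (he : r + q = e) : Decays (fun z => F z * G z) S e := by
  obtain ⟨C, Y, h⟩ := hF
  obtain ⟨C', Y', h'⟩ := hG
  refine ⟨C * C', max Y Y', fun z hz hY => ?_⟩
  have a := h z hz ((le_max_left _ _).trans hY)
  have b := h' z hz ((le_max_right _ _).trans hY)
  rw [norm_mul, ← he, Real.rpow_add (by positivity)]
  calc _ ≤ (C * (1 + ‖z‖) ^ r) * (C' * (1 + ‖z‖) ^ q) :=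
        mul_le_mul a b (norm_nonneg _) ((norm_nonneg _).trans a)
    _ = _ := by ring

lemma Decays.sub {F G : ℂ → ℂ} {S : Set ℂ} {r : ℝ} (hF : Decays F S r) (hG : Decays G S r) :
    Decays (fun z => F z - G z) S r := by
  obtain ⟨C, Y, h⟩ := hF
  obtain ⟨C', Y', h'⟩ := hG
  refine ⟨C + C', max Y Y', fun z hz hY => ?_⟩
  have a := h z hz ((le_max_left _ _).trans hY)
  have b := h' z hz ((le_max_right _ _).trans hY)
  refine (norm_sub_le _ _).trans ?_
  linarith

lemma Decays.mono_exp {F : ℂ → ℂ} {S : Set ℂ} {r q : ℝ} (hF : Decays F S r) (h : r ≤ q) :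
    Decays F S q := by
  obtain ⟨C, Y, hh⟩ := hF
  refine ⟨|C|, Y, fun z hz hY => (hh z hz hY).trans ?_⟩
  have : (1 + ‖z‖) ^ r ≤ (1 + ‖z‖) ^ q :=
    Real.rpow_le_rpow_of_exponent_le (by linarith [norm_nonneg z]) h
  calc _ ≤ |C| * (1 + ‖z‖) ^ r := by gcongr; exact le_abs_self C
    _ ≤ _ := by gcongr

lemma Decays.mono_set {F : ℂ → ℂ} {S T : Set ℂ} {r : ℝ} (hF : Decays F S r) (h : T ⊆ S) :
    Decays F T r := by
  obtain ⟨C, Y, hh⟩ := hF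
  exact ⟨C, Y, fun z hz hY => hh z (h hz) hY⟩

lemma Decays.of_bdd {F : ℂ → ℂ} {S : Set ℂ} {C : ℝ} (h : ∀ z ∈ S, ‖F z‖ ≤ C) : Decays F S 0 :=
  ⟨C, 0, fun z hz _ => by simpa using h z hz⟩

lemma Decays.congr {F G : ℂ → ℂ} {S : Set ℂ} {r Y : ℝ} (hF : Decays F S r)
    (h : ∀ z ∈ S, Y ≤ |z.im| → F z = G z) : Decays G S r := by
  obtain ⟨C, Y', hh⟩ := hF
  refine ⟨C, max Y' Y, fun z hz hY => ?_⟩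
  rw [← h z hz ((le_max_right _ _).trans hY)]
  exact hh z hz ((le_max_left _ _).trans hY)

lemma decays_inv (p : ℂ) (S : Set ℂ) : Decays (fun w => (w - p)⁻¹) S (-1) := by
  refine ⟨4, 2 * ‖p‖ + 1, fun z _ hY => ?_⟩
  have h1 := abs_im_le_norm z
  have h2 := norm_sub_norm_le z p
  have h3 : (1 + ‖z‖) / 4 ≤ ‖z - p‖ := by linarith [norm_nonneg p]
  rw [norm_inv, Real.rpow_neg_one]
  calc _ ≤ ((1 + ‖z‖) / 4)⁻¹ := inv_anti₀ (by positivity) h3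
    _ = _ := by field_simp

lemma isNhds_strip {x₁ x₂ : ℝ} {p : ℂ} (h1 : x₁ < p.re) (h2 : p.re < x₂) :
    Strip x₁ x₂ ∈ nhds p := by
  have : Continuous fun z : ℂ => z.re := continuous_re
  have h := this.continuousAt.preimage_mem_nhds (Icc_mem_nhds h1 h2)
  exact h

lemma inv_norm_le {p : ℂ} {δ : ℝ} (hδ : 0 < δ) {w : ℂ} (hw : δ ≤ ‖w - p‖) :
    ‖(w - p)⁻¹‖ ≤ ((1 + ‖p‖) / δ + 1) * (1 + ‖w‖) ^ (-1 : ℝ) := by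
  have hpos : 0 < ‖w - p‖ := hδ.trans_le hw
  rw [norm_inv, Real.rpow_neg_one, inv_le_iff_one_le_mul₀ hpos]
  have h : 1 + ‖w‖ ≤ (1 + ‖p‖) + ‖w - p‖ := by
    have := norm_sub_norm_le w p
    linarith
  have h2 : (1 + ‖p‖) ≤ (1 + ‖p‖) / δ * ‖w - p‖ := by
    rw [div_mul_eq_mul_div, le_div_iff₀ hδ]
    gcongr
  rw [mul_assoc, mul_comm, mul_assoc, ]
  rw [← div_eq_inv_mul, le_div_iff₀ (by positivity)] 
  rw [one_mul]
  nlinarith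

lemma VI_residue {F : ℂ → ℂ} {x₁ x₂ : ℝ} {p : ℂ} (h1 : x₁ < p.re) (h2 : p.re < x₂)
    (hF : DifferentiableOn ℂ F (Strip x₁ x₂)) (hd : Decays F (Strip x₁ x₂) (-(1/2))) :
    VI (fun z => F z * (z - p)⁻¹) x₂ - VI (fun z => F z * (z - p)⁻¹) x₁ = 2 * Real.pi * F p := by
  obtain ⟨β, hβ⟩ : ∃ β : ℝ, β = p.re - x₁ := ⟨_, rfl⟩
  have hβ0 : 0 < β := by linarith
  let R : ℂ → ℂ := fun w => 2 * β * (w - (p - 2 * β))⁻¹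
  have hRne : ∀ w : ℂ, x₁ ≤ w.re → β ≤ ‖w - (p - 2 * β)‖ := by
    intro w hw
    refine le_trans ?_ (abs_re_le_norm _)
    simp
    refine le_trans ?_ (le_abs_self _)
    linarith
  have hRne' : ∀ w : ℂ, x₁ ≤ w.re → w - (p - 2 * β) ≠ 0 := fun w hw =>
    norm_pos_iff.mp (hβ0.trans_le (hRne w hw))
  have hRp : R p = 1 := by
    have : (β : ℂ) ≠ 0 := by exact_mod_cast hβ0.ne'
    simp [R]; field_simp
  have hRd : DifferentiableOn ℂ R {w | x₁ ≤ w.re} := by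
    refine DifferentiableOn.const_mul ?_ _
    exact DifferentiableOn.inv (by fun_prop) fun w hw => hRne' w hw
  have hRdec : Decays R (Strip x₁ x₂) (-1) := by
    have := (Decays.of_bdd (F := fun _ => (2 * β : ℂ)) (S := Strip x₁ x₂) (fun _ _ => le_rfl)).mul
      (decays_inv (p - 2 * β) (Strip x₁ x₂)) (e := -1) (by norm_num)
    exact this
  let H : ℂ → ℂ := fun w => F w - F p * R w
  have hHd : DifferentiableOn ℂ H (Strip x₁ x₂) :=
    hF.sub ((hRd.mono fun z hz => hz.1).const_mul _)
  have hHp : H p = 0 := by simp [H, hRp]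
  have hQd := (differentiableOn_dslope (isNhds_strip h1 h2)).mpr hHd
  have hQ : ∀ w, w ≠ p → dslope H p w = F w * (w - p)⁻¹ - F p * (R w * (w - p)⁻¹) := by
    intro w hw
    rw [dslope_of_ne _ hw, slope_def_field, hHp]
    simp only [H]; ring
  have dF : Decays (fun z => F z * (z - p)⁻¹) (Strip x₁ x₂) (-(3/2)) :=
    hd.mul (decays_inv p _) (by norm_num)
  have dR : Decays (fun z => R z * (z - p)⁻¹) (Strip x₁ x₂) (-(3/2)) :=
    (hRdec.mul (decays_inv p _) (by norm_num : (-1:ℝ) + -1 = -2)).mono_exp (by norm_num)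
  have dcst : Decays (fun _ => F p) (Strip x₁ x₂) 0 := Decays.of_bdd (fun _ _ => le_rfl)
  have dQ : Decays (dslope H p) (Strip x₁ x₂) (-(3/2)) := by
    refine (dF.sub (dcst.mul dR (zero_add _))).congr (Y := |p.im| + 1) ?_
    intro z _ hY
    refine (hQ z ?_).symm
    rintro rfl
    linarith
  have key := VI_eq (h1.le.trans h2.le) hQd dQ
  have hsp : ∀ x : ℝ, x₁ ≤ x → x ≤ x₂ → x ≠ p.re →
      VI (dslope H p) x = VI (fun z => F z * (z - p)⁻¹) x - F p * VI (fun z => R z * (z - p)⁻¹) x := by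
    intro x hx1 hx2 hx
    have hsub : Strip x x ⊆ Strip x₁ x₂ := fun z hz => ⟨hx1.trans hz.1, hz.2.trans hx2⟩
    have hcinv : ContinuousOn (fun z : ℂ => (z - p)⁻¹) (Strip x x) := by
      apply ContinuousOn.inv₀ (by fun_prop)
      intro z hz h0
      apply hx
      have := le_antisymm hz.1 hz.2
      rw [this, sub_eq_zero.mp h0]
    have iF : Integrable (fun y : ℝ => F (x + y * I) * ((x + y * I) - p)⁻¹) := line_integrable ((hF.continuousOn.mono hsub).mul hcinv) (dF.mono_set hsub) le_rfl le_rfl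
    have iR : Integrable (fun y : ℝ => R (x + y * I) * ((x + y * I) - p)⁻¹) := line_integrable (((hRd.continuousOn.mono fun z hz => hx1.trans hz.1)).mul hcinv)
      (dR.mono_set hsub) le_rfl le_rfl
    rw [VI, VI, VI, ← integral_const_mul, ← integral_sub iF (iR.const_mul _)]
    congr 1; ext y
    apply hQ
    intro h
    apply hx
    rw [← h]; simp
  rw [hsp x₁ le_rfl (h1.le.trans h2.le) h1.ne, hsp x₂ (h1.le.trans h2.le) le_rfl h2.ne'] at key
  have e2 : VI (fun z => R z * (z - p)⁻¹) x₂ = 0 := by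
    let C1 := ((1 + ‖p - 2 * β‖) / β + 1)
    let C2 := ((1 + ‖p‖) / (x₂ - p.re) + 1)
    apply VI_right (C := (2 * β) * C1 * C2)
    · refine (hRd.mono fun z hz => (h1.le.trans h2.le).trans hz).mul ?_
      apply DifferentiableOn.inv (by fun_prop)
      intro z hz h0
      have : x₂ ≤ z.re := hz
      rw [sub_eq_zero.mp h0] at this
      linarith
    · intro z hz
      have b1 := inv_norm_le hβ0 (hRne z ((h1.le.trans h2.le).trans hz))
      have b2 := inv_norm_le (p := p) (w := z) (sub_pos.mpr h2) (by
        refine le_trans ?_ (abs_re_le_norm _)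
        rw [sub_re]
        refine le_trans ?_ (le_abs_self _)
        linarith)
      have hR : ‖R z‖ ≤ (2 * β) * C1 * (1 + ‖z‖) ^ (-1 : ℝ) := by
        calc ‖R z‖ = 2 * β * ‖(z - (p - 2 * β))⁻¹‖ := by
              simp only [R, norm_mul]; simp [abs_of_pos hβ0]
          _ ≤ 2 * β * (C1 * (1 + ‖z‖) ^ (-1 : ℝ)) := mul_le_mul_of_nonneg_left b1 (by positivity)
          _ = _ := by ring
      rw [norm_mul]
      have hx2 : 0 < x₂ - p.re := by linarith
      calc _ ≤ ((2 * β) * C1 * (1 + ‖z‖) ^ (-1 : ℝ)) * (C2 * (1 + ‖z‖) ^ (-1 : ℝ)) := by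
            gcongr
        _ = (2 * β) * C1 * C2 * ((1 + ‖z‖) ^ (-1 : ℝ) * (1 + ‖z‖) ^ (-1 : ℝ)) := by ring
        _ ≤ _ := by
            rw [← Real.rpow_add (by positivity)]
            refine mul_le_mul_of_nonneg_left ?_ (by positivity)
            exact Real.rpow_le_rpow_of_exponent_le (by linarith [norm_nonneg z]) (by norm_num)
  have e1 : VI (fun z => R z * (z - p)⁻¹) x₁ = -2 * Real.pi := by
    have : ∀ y : ℝ, R (x₁ + y * I) * ((x₁ + y * I) - p)⁻¹ = -2 * ((β / (β ^ 2 + (y - p.im) ^ 2) : ℝ) : ℂ) := by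
      intro y
      have hx : (x₁ : ℂ) + y * I - p = -β + (y - p.im) * I := by
        apply Complex.ext <;> simp [hβ]
      have hx' : (x₁ : ℂ) + y * I - (p - 2 * β) = β + (y - p.im) * I := by
        linear_combination hx
      have hne : (β ^ 2 + (y - p.im) ^ 2 : ℂ) ≠ 0 := by
        have : 0 < β ^ 2 + (y - p.im) ^ 2 := by positivity
        exact_mod_cast this.ne'
      simp only [R]
      rw [hx, hx', mul_assoc, ← mul_inv]
      have : ((β : ℂ) + (y - p.im) * I) * (-β + (y - p.im) * I) = -(β ^ 2 + (y - p.im) ^ 2) := by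
        linear_combination (y - p.im : ℂ) ^ 2 * I_sq
      rw [this]
      push_cast
      field_simp
    rw [VI]
    simp_rw [this]
    rw [integral_const_mul, integral_complex_ofReal, integral_sub_right_eq_self (fun y => β / (β ^ 2 + y ^ 2)), integral_poisson hβ0]
  rw [e1, e2] at key
  linear_combination -key

/-- the Selberg kernel -/
def Ker (L : ℝ) (w : ℂ) : ℂ := (cexp (2 * L * w) - cexp (L * w)) / (w ^ 2 * L)

lemma Ker_conj (L : ℝ) (w : ℂ) : Ker L ((starRingEnd ℂ) w) = (starRingEnd ℂ) (Ker L w) := by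
  have h2 : (starRingEnd ℂ) 2 = 2 := conj_ofNat 2
  simp [Ker, ← exp_conj, h2]

lemma Ker_norm_le {L : ℝ} (hL : 0 < L) {w : ℂ} (hw : w.re ≤ 0) : ‖Ker L w‖ ≤ 2 / (‖w‖ ^ 2 * L) := by
  rw [Ker, norm_div, norm_mul, norm_pow, norm_real, Real.norm_of_nonneg hL.le]
  gcongr
  refine (norm_sub_le _ _).trans ?_
  rw [norm_exp, norm_exp]
  have h1 : Real.exp (2 * L * w : ℂ).re ≤ 1 := by
    apply Real.exp_le_one_iff.mpr
    have : (2 * L * w : ℂ).re = 2 * L * w.re := by simp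
    rw [this]; nlinarith
  have h2 : Real.exp (L * w : ℂ).re ≤ 1 := by
    apply Real.exp_le_one_iff.mpr
    have : (L * w : ℂ).re = L * w.re := by simp
    rw [this]; nlinarith
  linarith

lemma bound_mul {f g : ℂ} {x C D r q e : ℝ} (hx : 0 ≤ x) (hf : ‖f‖ ≤ C * (1 + x) ^ r)
    (hg : ‖g‖ ≤ D * (1 + x) ^ q) (he : r + q = e) : ‖f * g‖ ≤ (C * D) * (1 + x) ^ e := by
  rw [norm_mul, ← he, Real.rpow_add (by positivity)]
  calc _ ≤ (C * (1 + x) ^ r) * (D * (1 + x) ^ q) :=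
        mul_le_mul hf hg (norm_nonneg _) ((norm_nonneg _).trans hf)
    _ = _ := by ring

lemma inv_shift_le {b : ℝ} (hb : 0 < b) {w : ℂ} (hw : -b ≤ w.re) :
    ‖(w + 2 * b)⁻¹‖ ≤ ((1 + ‖(-(2 * b) : ℂ)‖) / b + 1) * (1 + ‖w‖) ^ (-1 : ℝ) := by
  have h := inv_norm_le (p := (-(2 * b) : ℂ)) (w := w) hb (by
    refine le_trans ?_ (abs_re_le_norm _)
    refine le_trans ?_ (le_abs_self _)
    simp; linarith)
  simpa using h

lemma shift_ne {b : ℝ} (hb : 0 < b) {w : ℂ} (hw : -b ≤ w.re) : w + 2 * b ≠ 0 := by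
  intro h
  have := congrArg re h
  simp at this; linarith

/-- Poisson representation -/
lemma poisson_rep {H : ℂ → ℂ} {b C : ℝ} (hb : 0 < b)
    (hd : DifferentiableOn ℂ H {z | -b ≤ z.re})
    (hbd : ∀ z : ℂ, -b ≤ z.re → ‖H z‖ ≤ C * (1 + ‖z‖) ^ (1/2 : ℝ)) :
    ∫ y : ℝ, H (((-b : ℝ) : ℂ) + y * I) * ((b / (b ^ 2 + y ^ 2) : ℝ) : ℂ) = Real.pi * H 0 := by
  let R : ℂ → ℂ := fun w => 2 * b * (w + 2 * b)⁻¹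
  have hRd : DifferentiableOn ℂ R {z | -b ≤ z.re} := by
    refine DifferentiableOn.const_mul ?_ _
    exact DifferentiableOn.inv (by fun_prop) fun w hw => shift_ne hb hw
  obtain ⟨C1, hC1⟩ : ∃ C1 : ℝ, ∀ w : ℂ, -b ≤ w.re → ‖R w‖ ≤ C1 * (1 + ‖w‖) ^ (-1 : ℝ) := by
    refine ⟨(2 * b) * ((1 + ‖(-(2 * b) : ℂ)‖) / b + 1), fun w hw => ?_⟩
    have : ‖(2 * b : ℂ)‖ ≤ (2 * b) * (1 + ‖w‖) ^ (0 : ℝ) := by simp [abs_of_pos hb]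
    exact bound_mul (norm_nonneg w) this (inv_shift_le hb hw) (by norm_num)
  have hF : ∀ w : ℂ, -b ≤ w.re → ‖H w * R w‖ ≤ (C * C1) * (1 + ‖w‖) ^ (-(1/2) : ℝ) := fun w hw =>
    bound_mul (norm_nonneg w) (hbd w hw) (hC1 w hw) (by norm_num)
  have hFd : DifferentiableOn ℂ (fun w => H w * R w) {z | -b ≤ z.re} := hd.mul hRd
  have key := VI_residue (F := fun w => H w * R w) (x₁ := -b) (x₂ := 1) (p := 0)
    (by simp [hb]) (by simp) (hFd.mono fun z hz => hz.1) ⟨C * C1, 0, fun z hz _ => hF z hz.1⟩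
  have e2 : VI (fun z => H z * R z * (z - 0)⁻¹) 1 = 0 := by
    refine VI_right (C := (C * C1) * ((1 + ‖(0:ℂ)‖) / 1 + 1)) ?_ ?_
    · refine (hFd.mono fun z (hz : 1 ≤ z.re) => by show -b ≤ z.re; linarith).mul ?_
      refine DifferentiableOn.inv (by fun_prop) fun w (hw : 1 ≤ w.re) h0 => ?_
      rw [sub_zero] at h0
      rw [h0] at hw; norm_num at hw
    · intro z hz
      refine bound_mul (norm_nonneg z) (hF z (by linarith)) (inv_norm_le one_pos ?_) (by norm_num)
      rw [sub_zero]
      exact (hz.trans (le_abs_self _)).trans (abs_re_le_norm _)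
  have e1 : VI (fun z => H z * R z * (z - 0)⁻¹) (-b) =
      -2 * ∫ y : ℝ, H (((-b : ℝ) : ℂ) + y * I) * ((b / (b ^ 2 + y ^ 2) : ℝ) : ℂ) := by
    rw [VI, ← integral_const_mul]
    congr 1; ext y
    have hne : (b ^ 2 + y ^ 2 : ℂ) ≠ 0 := by
      have : 0 < b ^ 2 + y ^ 2 := by positivity
      exact_mod_cast this.ne'
    have : R (((-b : ℝ) : ℂ) + y * I) * ((((-b : ℝ) : ℂ) + y * I) - 0)⁻¹ =
        -2 * ((b / (b ^ 2 + y ^ 2) : ℝ) : ℂ) := by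
      simp only [R]
      rw [mul_assoc, ← mul_inv]
      have : (((-b : ℝ) : ℂ) + y * I + 2 * b) * ((((-b : ℝ) : ℂ) + y * I) - 0) = -(b ^ 2 + y ^ 2) := by
        push_cast
        linear_combination (y : ℂ) ^ 2 * I_sq
      rw [this]
      push_cast
      field_simp
    rw [mul_assoc, this]; ring
  rw [e1, e2] at key
  simp only [R] at key
  have hb' : (b : ℂ) ≠ 0 := by exact_mod_cast hb.ne'
  have h3 : (2 * (b:ℂ) * (0 + 2 * (b:ℂ))⁻¹) = 1 := by rw [zero_add]; field_simp
  rw [h3] at key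
  linear_combination key / 2

lemma norm_exp_real_mul_le {L c : ℝ} (hL : 0 ≤ L) {w : ℂ} (hw : w.re ≤ c) :
    ‖cexp (L * w)‖ ≤ Real.exp (L * c) := by
  rw [norm_exp]
  have : (L * w : ℂ).re = L * w.re := by simp
  rw [this]
  gcongr

lemma line_sq (b y : ℝ) : ‖((-b : ℝ) : ℂ) + y * I‖ ^ 2 = b ^ 2 + y ^ 2 := by
  rw [← normSq_eq_norm_sq, normSq_add_mul_I]; ring

/-- main kernel estimate -/
lemma kernel_est {H : ℂ → ℂ} {b L C : ℝ} (hb : 0 < b) (hbL : b * L = 2)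
    (hd : DifferentiableOn ℂ H {z | -b ≤ z.re})
    (hbd : ∀ z : ℂ, -b ≤ z.re → ‖H z‖ ≤ C * (1 + ‖z‖) ^ (1/2 : ℝ))
    (hpos : ∀ z : ℂ, -b ≤ z.re → 0 ≤ (H z).re) :
    ‖VI (fun w => H w * Ker L w) (-b)‖ ≤ Real.pi * (H 0).re := by
  have hL : 0 < L := by
    by_contra h
    push Not at h
    nlinarith
  have hLb : L * b = 2 := by linarith
  let z : ℝ → ℂ := fun y => ((-b : ℝ) : ℂ) + y * I
  have hzre : ∀ y, (z y).re = -b := fun y => by simp [z]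
  have hz0 : ∀ y, z y ≠ 0 := fun y h => by
    have := hzre y; rw [h] at this; simp at this; linarith
  have hHc : Continuous fun y => H (z y) :=
    hd.continuousOn.comp_continuous (by fun_prop) fun y => by
      show -b ≤ (z y).re
      rw [hzre]
  have hKc : Continuous fun y => Ker L (z y) := by
    unfold Ker
    refine Continuous.div (by fun_prop) (by fun_prop) fun y => ?_
    exact mul_ne_zero (pow_ne_zero _ (hz0 y)) (by exact_mod_cast hL.ne')
  -- bound for kernel
  have e2 : Real.exp (-2) ≤ 1/2 := by
    rw [Real.exp_neg]
    rw [inv_le_comm₀ (Real.exp_pos _) (by norm_num)]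
    have := Real.add_one_le_exp (2:ℝ)
    norm_num; linarith
  have e4 : Real.exp (-4) ≤ 1/2 := (Real.exp_le_exp.mpr (by norm_num)).trans e2
  have hK : ∀ y : ℝ, ‖Ker L (z y)‖ ≤ 1 / 2 * (b / (b ^ 2 + y ^ 2)) := by
    intro y
    have hsq : ‖z y‖ ^ 2 = b ^ 2 + y ^ 2 := line_sq b y
    rw [Ker, norm_div, norm_mul, norm_pow, norm_real, Real.norm_of_nonneg hL.le, hsq]
    have h1 : ‖cexp (2 * L * z y) - cexp (L * z y)‖ ≤ 1 := by
      refine (norm_sub_le _ _).trans ?_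
      have a1 := norm_exp_real_mul_le (L := 2 * L) (c := -b) (w := z y) (by positivity) (hzre y).le
      have a2 := norm_exp_real_mul_le (L := L) (c := -b) (w := z y) (by positivity) (hzre y).le
      rw [show 2 * L * -b = -4 by linarith] at a1
      rw [show L * -b = -2 by linarith] at a2
      push_cast at a1
      linarith
    have hp : 0 < b ^ 2 + y ^ 2 := by positivity
    rw [show 1 / 2 * (b / (b ^ 2 + y ^ 2)) = 1 / ((b ^ 2 + y ^ 2) * L) by
      have : L = 2 / b := by field_simp; linarith
      rw [this]; field_simp]
    gcongr
  -- integrability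
  have hint : Integrable (fun y => H (z y) * Ker L (z y)) := by
    have hCnn : 0 ≤ C := by
      have := (norm_nonneg _).trans (hbd 0 (by simp [hb.le]))
      simpa using this
    refine line_integrable (F := fun w => H w * Ker L w) (x₁ := -b) (x₂ := -b) ?_ ?_ le_rfl le_rfl
    · refine (hd.continuousOn.mono fun w hw => hw.1).mul ?_
      unfold Ker
      refine ContinuousOn.div (by fun_prop) (by fun_prop) fun w hw => ?_
      refine mul_ne_zero (pow_ne_zero _ ?_) (by exact_mod_cast hL.ne')
      rintro rfl
      have := hw.2; simp at this; linarith
    · have hA : Decays H (Strip (-b) (-b)) (1/2) := ⟨C, 0, fun w hw _ => hbd w hw.1⟩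
      have hK : Decays (Ker L) (Strip (-b) (-b)) (-2) := by
        have i1 := decays_inv 0 (Strip (-b) (-b))
        have i2 := i1.mul i1 (e := -2) (by norm_num)
        have i3 : Decays (fun w => (cexp (2 * L * w) - cexp (L * w)) / L) (Strip (-b) (-b)) 0 := by
          refine Decays.of_bdd (C := (1 + 1) / L) fun w hw => ?_
          rw [norm_div, norm_real, Real.norm_of_nonneg hL.le]
          gcongr
          refine (norm_sub_le _ _).trans ?_
          have a1 := norm_exp_real_mul_le (L := 2 * L) (c := 0) (w := w) (by positivity) (hw.2.trans (by linarith))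
          have a2 := norm_exp_real_mul_le (L := L) (c := 0) (w := w) (by positivity) (hw.2.trans (by linarith))
          simp only [mul_zero, Real.exp_zero] at a1 a2
          push_cast at a1
          linarith
        refine (i3.mul i2 (zero_add _)).congr (Y := 0) fun w hw _ => ?_
        rw [Ker]; simp only [sub_zero]; ring
      exact (hA.mul hK (e := -(3/2)) (by norm_num))
  -- K2
  have k2 : VI (fun w => H w * Ker L (-2 * b - w)) (-b) = 0 := by
    obtain ⟨C1, hC1⟩ : ∃ C1 : ℝ, ∀ w : ℂ, -b ≤ w.re → ‖(w + 2 * b)⁻¹‖ ≤ C1 * (1 + ‖w‖) ^ (-1 : ℝ) :=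
      ⟨_, fun w hw => inv_shift_le hb hw⟩
    have hrw : ∀ w : ℂ, H w * Ker L (-2 * b - w) = H w * (((w + 2 * b)⁻¹ * (w + 2 * b)⁻¹) *
        ((cexp (2 * L * (-2 * b - w)) - cexp (L * (-2 * b - w))) / L)) := by
      intro w
      rw [Ker]
      rw [show (-2 * (b:ℂ) - w) ^ 2 = (w + 2 * b) ^ 2 by ring]
      rw [div_eq_mul_inv, mul_inv, ← inv_pow]
      ring
    simp_rw [hrw]
    refine VI_right (C := C * (C1 * C1 * (2 / L))) ?_ ?_
    · refine hd.mul (DifferentiableOn.mul ?_ (by fun_prop))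
      have : DifferentiableOn ℂ (fun w : ℂ => (w + 2 * b)⁻¹) {z | -b ≤ z.re} :=
        DifferentiableOn.inv (by fun_prop) fun w hw => shift_ne hb hw
      exact this.mul this
    · intro w hw
      have h0 := norm_nonneg w
      refine bound_mul h0 (hbd w hw) (bound_mul h0 (bound_mul h0 (hC1 w hw) (hC1 w hw) rfl) (q := 0) ?_ rfl) (by norm_num)
      rw [norm_div, norm_real, Real.norm_of_nonneg hL.le, Real.rpow_zero, mul_one]
      gcongr
      refine (norm_sub_le _ _).trans ?_
      have hre : (-2 * b - w : ℂ).re ≤ 0 := by simp; linarith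
      have a1 := norm_exp_real_mul_le (L := 2 * L) (c := 0) (w := -2 * b - w) (by positivity) hre
      have a2 := norm_exp_real_mul_le (L := L) (c := 0) (w := -2 * b - w) (by positivity) hre
      simp only [mul_zero, Real.exp_zero] at a1 a2
      push_cast at a1
      linarith
  have k2' : ∫ y : ℝ, (starRingEnd ℂ) (H (z y)) * Ker L (z y) = 0 := by
    have : ∀ y : ℝ, (starRingEnd ℂ) (H (z y)) * Ker L (z y) =
        (starRingEnd ℂ) (H (z y) * Ker L (-2 * b - z y)) := by
      intro y
      have : (-2 * b - z y : ℂ) = (starRingEnd ℂ) (z y) := by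
        apply Complex.ext <;> simp [z]
        ring
      rw [this, Ker_conj, map_mul, conj_conj]
    simp_rw [this]
    rw [integral_conj]
    rw [VI] at k2
    rw [k2, map_zero]
  have hint2 : Integrable (fun y => (starRingEnd ℂ) (H (z y)) * Ker L (z y)) := by
    refine hint.mono ((continuous_conj.comp hHc).mul hKc).aestronglyMeasurable ?_
    refine Eventually.of_forall fun y => ?_
    simp
  have k3 : VI (fun w => H w * Ker L w) (-b) = ∫ y : ℝ, ((2 * (H (z y)).re : ℝ) : ℂ) * Ker L (z y) := by
    have : ∀ y : ℝ, ((2 * (H (z y)).re : ℝ) : ℂ) * Ker L (z y) =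
        H (z y) * Ker L (z y) + (starRingEnd ℂ) (H (z y)) * Ker L (z y) := by
      intro y
      rw [← add_mul, add_conj]
    simp_rw [this]
    rw [integral_add hint hint2, k2', add_zero]
    rfl
  rw [k3]
  have hp := poisson_rep hb hd hbd
  have hintP : Integrable (fun y : ℝ => H (z y) * ((b / (b ^ 2 + y ^ 2) : ℝ) : ℂ)) := by
    by_cases h0 : H 0 = 0
    · -- direct comparison
      have hA : Decays H (Strip (-b) (-b)) (1/2) := ⟨C, 0, fun w hw _ => hbd w hw.1⟩
      have i1 := decays_inv 0 (Strip (-b) (-b))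
      have i2 := decays_inv (-(2*b)) (Strip (-b) (-b))
      have i3 := (hA.mul (i1.mul i2 rfl) (e := -(3/2)) (by norm_num))
      have := line_integrable (x := -b) (x₁ := -b) (x₂ := -b) ?_ i3 le_rfl le_rfl
      · refine (this.const_mul (-b : ℂ)).congr (Eventually.of_forall fun y => ?_)
        have hne : (b ^ 2 + y ^ 2 : ℂ) ≠ 0 := by
          have : 0 < b ^ 2 + y ^ 2 := by positivity
          exact_mod_cast this.ne'
        simp only [z]
        have e : (((-b : ℝ) : ℂ) + y * I - 0) * ((((-b : ℝ) : ℂ) + y * I) - (-(2*b))) = -(b ^ 2 + y ^ 2) := by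
          push_cast
          linear_combination (y : ℂ) ^ 2 * I_sq
        rw [← mul_inv, e]
        push_cast
        field_simp
      · refine (hd.continuousOn.mono fun w hw => hw.1).mul (ContinuousOn.mul ?_ ?_)
        · refine ContinuousOn.inv₀ (by fun_prop) fun w hw h0 => ?_
          rw [sub_zero] at h0
          have := hw.2; rw [h0] at this; simp at this; linarith
        · refine ContinuousOn.inv₀ (by fun_prop) fun w hw h0 => ?_
          apply shift_ne hb hw.1
          rw [← h0]; ring
    · by_contra h
      have hp' := integral_undef h
      rw [hp'] at hp
      have := mul_ne_zero (show (Real.pi : ℂ) ≠ 0 by exact_mod_cast Real.pi_ne_zero) h0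
      exact this hp.symm
  have hpre : ∫ y : ℝ, (H (z y)).re * (b / (b ^ 2 + y ^ 2)) = Real.pi * (H 0).re := by
    have h1 := reCLM.integral_comp_comm hintP
    have h2 : reCLM (∫ y : ℝ, H (z y) * ((b / (b ^ 2 + y ^ 2) : ℝ) : ℂ)) = Real.pi * (H 0).re := by
      have : ∫ y : ℝ, H (z y) * ((b / (b ^ 2 + y ^ 2) : ℝ) : ℂ) = Real.pi * H 0 := hp
      rw [this]; simp
    rw [h2] at h1
    rw [← h1]
    congr 1; ext y
    rw [reCLM_apply, re_mul_ofReal]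
  have hintR : Integrable (fun y : ℝ => (H (z y)).re * (b / (b ^ 2 + y ^ 2))) := by
    refine hintP.re.congr (Eventually.of_forall fun y => ?_)
    exact re_mul_ofReal _ _
  rw [← hpre]
  refine norm_integral_le_of_norm_le hintR (Eventually.of_forall fun y => ?_)
  have hnn := hpos (z y) (hzre y).ge
  rw [norm_mul, norm_real, Real.norm_of_nonneg (by positivity)]
  calc _ ≤ 2 * (H (z y)).re * (1 / 2 * (b / (b ^ 2 + y ^ 2))) := by gcongr; exact hK y
    _ = _ := by ring

lemma inv_right_le {c : ℝ} (hc : 0 < c) {w : ℂ} (hw : c ≤ |w.re|) :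
    ‖w⁻¹‖ ≤ (1 / c + 1) * (1 + ‖w‖) ^ (-1 : ℝ) := by
  have h := inv_norm_le (p := 0) (w := w) hc (by
    rw [sub_zero]
    exact hw.trans (abs_re_le_norm _))
  simpa using h

lemma bound_weaken {C D x r q : ℝ} (hx : 0 ≤ x) (hC : 0 ≤ C) (hrq : r ≤ q) (h : D ≤ C * (1 + x) ^ r) :
    D ≤ C * (1 + x) ^ q :=
  h.trans (mul_le_mul_of_nonneg_left (Real.rpow_le_rpow_of_exponent_le (by linarith) hrq) hC)

lemma ne_of_re {w : ℂ} {c : ℝ} (hc : 0 < c) (hw : c ≤ |w.re|) : w ≠ 0 := by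
  rintro rfl
  simp at hw; linarith

lemma exp_sq_bound {v c B : ℝ} (hc : 0 < c) {w : ℂ} (hw : c ≤ |w.re|) {g : ℂ} (hg : ‖g‖ ≤ B) :
    ‖g * (w⁻¹ * w⁻¹)‖ ≤ (B * ((1 / c + 1) * (1 / c + 1))) * (1 + ‖w‖) ^ (-(3/2) : ℝ) := by
  have h0 := norm_nonneg w
  have hB : 0 ≤ B := (norm_nonneg _).trans hg
  refine bound_weaken h0 (by positivity) (by norm_num : (-2:ℝ) ≤ -(3/2)) ?_
  refine bound_mul h0 (r := 0) (by simpa using hg) (bound_mul h0 (inv_right_le hc hw) (inv_right_le hc hw) rfl) (by norm_num)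

lemma perron_integrable {c : ℝ} (hc : 0 < c) (v : ℝ) :
    Integrable (fun y : ℝ => cexp (v * ((c : ℂ) + y * I)) * (((c : ℂ) + y * I)⁻¹ * ((c : ℂ) + y * I)⁻¹)) := by
  refine line_integrable (F := fun w => cexp (v * w) * (w⁻¹ * w⁻¹)) (x₁ := c) (x₂ := c) ?_ ?_ le_rfl le_rfl
  · have : ContinuousOn (fun w : ℂ => w⁻¹) (Strip c c) :=
      ContinuousOn.inv₀ (by fun_prop) fun w hw => ne_of_re hc (hw.1.trans (le_abs_self _))
    exact ContinuousOn.mul (by fun_prop) (this.mul this)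
  · refine ⟨_, 0, fun w hw _ => exp_sq_bound (v := v) (B := Real.exp (v * c)) hc (hw.1.trans (le_abs_self _)) ?_⟩
    rw [norm_exp]
    have : (v * w : ℂ).re = v * w.re := by simp
    rw [this, le_antisymm hw.2 hw.1]

lemma inv_diffOn {S : Set ℂ} (h : ∀ w ∈ S, w ≠ 0) : DifferentiableOn ℂ (fun w : ℂ => w⁻¹ * w⁻¹) S := by
  have : DifferentiableOn ℂ (fun w : ℂ => w⁻¹) S := DifferentiableOn.inv (by fun_prop) h
  exact this.mul this

lemma perron_neg {c : ℝ} (hc : 0 < c) {v : ℝ} (hv : v ≤ 0) :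
    VI (fun w => cexp (v * w) * (w⁻¹ * w⁻¹)) c = 0 := by
  have hle : ∀ w : ℂ, c ≤ w.re → c ≤ |w.re| := fun w hw => hw.trans (le_abs_self _)
  refine VI_right (C := 1 * ((1 / c + 1) * (1 / c + 1))) ?_ fun w hw => exp_sq_bound (v := v) hc (hle w hw) ?_
  · exact DifferentiableOn.mul (by fun_prop) (inv_diffOn fun w hw => ne_of_re hc (hle w hw))
  · rw [norm_exp, Real.exp_le_one_iff]
    have : (v * w : ℂ).re = v * w.re := by simp
    rw [this]
    nlinarith

lemma perron_pos {c : ℝ} (hc : 0 < c) {v : ℝ} (hv : 0 ≤ v) :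
    VI (fun w => cexp (v * w) * (w⁻¹ * w⁻¹)) c = 2 * Real.pi * v := by
  let E : ℂ → ℂ := fun w => cexp (v * w)
  have hE0 : E 0 = 1 := by simp [E]
  let F : ℂ → ℂ := dslope E 0
  have hFd : Differentiable ℂ F := by
    have : DifferentiableOn ℂ F Set.univ :=
      (differentiableOn_dslope (by simp)).mpr (by simp only [E]; fun_prop)
    exact differentiableOn_univ.mp this
  have hF0 : F 0 = v := by
    simp only [F, dslope_same]
    have : HasDerivAt E (cexp (v * 0) * (v * 1)) 0 :=
      ((hasDerivAt_id (0:ℂ)).const_mul (v:ℂ)).cexp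
    rw [this.deriv]; simp
  have hFne : ∀ w, w ≠ 0 → F w = (E w - 1) * w⁻¹ := by
    intro w hw
    simp only [F]
    rw [dslope_of_ne _ hw, slope_def_field, hE0]; simp [div_eq_mul_inv]
  have hEb : ∀ w : ℂ, w.re ≤ c → ‖E w‖ ≤ Real.exp (v * c) := fun w hw => norm_exp_real_mul_le hv hw
  have hdec : Decays F (Strip (-1) c) (-(1/2)) := by
    have i1 := decays_inv 0 (Strip (-1) c)
    have i2 : Decays (fun w => E w - 1) (Strip (-1) c) 0 := by
      refine Decays.of_bdd (C := Real.exp (v * c) + 1) fun w hw => ?_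
      refine (norm_sub_le _ _).trans ?_
      rw [norm_one]; gcongr; exact hEb w hw.2
    refine ((i2.mul i1 (zero_add _)).mono_exp (by norm_num)).congr (Y := 1) fun w _ hY => ?_
    rw [hFne w, sub_zero]
    rintro rfl
    norm_num at hY
  have key := VI_residue (F := F) (x₁ := -1) (x₂ := c) (p := 0) (by simp) (by simpa) hFd.differentiableOn hdec
  rw [hF0] at key
  have eL : VI (fun z => F z * (z - 0)⁻¹) (-1) = 0 := by
    have hle : ∀ w : ℂ, w.re ≤ -1 → 1 ≤ |w.re| := fun w hw => by
      rw [abs_of_neg (by linarith)]; linarith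
    refine VI_left (C := (Real.exp (v * c) + 1) * ((1 / 1 + 1) * (1 / 1 + 1))) ?_ ?_
    · refine hFd.differentiableOn.mul (DifferentiableOn.inv (by fun_prop) fun w hw => ?_)
      rw [sub_zero]
      exact ne_of_re one_pos (hle w hw)
    · intro w hw
      rw [hFne w (ne_of_re one_pos (hle w hw)), sub_zero, mul_assoc]
      refine exp_sq_bound (v := v) one_pos (hle w hw) ?_
      refine (norm_sub_le _ _).trans ?_
      rw [norm_one]; gcongr; exact hEb w (by linarith)
  have eR : VI (fun z => F z * (z - 0)⁻¹) c = VI (fun w => E w * (w⁻¹ * w⁻¹)) c -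
      VI (fun w => cexp ((0:ℝ) * w) * (w⁻¹ * w⁻¹)) c := by
    rw [← VI_sub (perron_integrable hc v) (perron_integrable hc 0)]
    simp only [VI]
    congr 1; ext y
    have hne : (c : ℂ) + y * I ≠ 0 := ne_of_re hc (by simp [le_abs_self])
    rw [hFne _ hne, sub_zero]; simp only [ofReal_zero, zero_mul, exp_zero]; ring
  rw [eL, eR, perron_neg hc le_rfl] at key
  linear_combination key

lemma perron {c : ℝ} (hc : 0 < c) (v : ℝ) :
    VI (fun w => cexp (v * w) * (w⁻¹ * w⁻¹)) c = 2 * Real.pi * (max v 0 : ℝ) := by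
  rcases le_total v 0 with h | h
  · rw [perron_neg hc h, max_eq_right h]; simp
  · rw [perron_pos hc h, max_eq_left h]

lemma perron_ker {c L : ℝ} (hc : 0 < c) (hL : 0 < L) (u : ℝ) :
    VI (fun w => cexp (-u * w) * Ker L w) c =
      2 * Real.pi * (((max (2 * L - u) 0 - max (L - u) 0) / L : ℝ) : ℂ) := by
  have h : ∀ w : ℂ, cexp (-u * w) * Ker L w = (L : ℂ)⁻¹ * (cexp ((2 * L - u : ℝ) * w) * (w⁻¹ * w⁻¹) -
      cexp ((L - u : ℝ) * w) * (w⁻¹ * w⁻¹)) := by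
    intro w
    rw [Ker]
    have e1 : cexp ((2 * L - u : ℝ) * w) = cexp (-u * w) * cexp (2 * L * w) := by
      rw [← exp_add]; congr 1; push_cast; ring
    have e2 : cexp ((L - u : ℝ) * w) = cexp (-u * w) * cexp (L * w) := by
      rw [← exp_add]; congr 1; push_cast; ring
    rw [e1, e2, div_eq_mul_inv, mul_inv, pow_two, mul_inv]; ring
  simp_rw [h]
  have h2 := VI_sub (F := fun w => cexp ((2 * L - u : ℝ) * w) * (w⁻¹ * w⁻¹))
    (G := fun w => cexp ((L - u : ℝ) * w) * (w⁻¹ * w⁻¹)) (x := c)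
    (perron_integrable hc _) (perron_integrable hc _)
  rw [perron hc, perron hc] at h2
  rw [VI] at h2 ⊢
  rw [integral_const_mul, h2]
  push_cast
  have : (L : ℂ) ≠ 0 := by exact_mod_cast hL.ne'
  field_simp

lemma ker_integrable {c L : ℝ} (hc : 0 < c) (u : ℝ) :
    Integrable (fun y : ℝ => cexp (-u * ((c : ℂ) + y * I)) * Ker L ((c : ℂ) + y * I)) := by
  have := ((perron_integrable hc (2 * L - u)).sub (perron_integrable hc (L - u))).const_mul ((L:ℂ)⁻¹)
  refine this.congr (Eventually.of_forall fun y => ?_)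
  simp only [Pi.sub_apply]
  generalize (c : ℂ) + y * I = w
  rw [Ker]
  have e1 : cexp ((2 * L - u : ℝ) * w) = cexp (-u * w) * cexp (2 * L * w) := by
    rw [← exp_add]; congr 1; push_cast; ring
  have e2 : cexp ((L - u : ℝ) * w) = cexp (-u * w) * cexp (L * w) := by
    rw [← exp_add]; congr 1; push_cast; ring
  rw [e1, e2, div_eq_mul_inv, mul_inv, pow_two, mul_inv]; ring

/-- the weights -/
def Wt (L : ℝ) (n : ℕ) : ℝ := (max (2 * L - Real.log n) 0 - max (L - Real.log n) 0) / L

lemma term_shift (a : ℕ → ℂ) (s w : ℂ) (n : ℕ) :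
    LSeries.term a (s + w) n = LSeries.term a s n * cexp (-(Real.log n : ℝ) * w) := by
  rcases eq_or_ne n 0 with rfl | hn
  · simp
  · rw [LSeries.term_of_ne_zero hn, LSeries.term_of_ne_zero hn]
    have hn' : (n : ℂ) ≠ 0 := by exact_mod_cast hn
    rw [cpow_add _ _ hn', div_mul_eq_div_div, div_eq_mul_inv _ ((n:ℂ) ^ w), ← cpow_neg,
      cpow_def_of_ne_zero hn' (-w), natCast_log]
    congr 2; ring

lemma VI_series {a : ℕ → ℂ} {s : ℂ} {L : ℝ} (hL : 0 < L) (ha : LSeriesSummable a (s + 1)) :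
    VI (fun w => LSeries a (s + w) * Ker L w) 1 = 2 * Real.pi * ∑' n, LSeries.term a s n * Wt L n := by
  let F : ℕ → ℝ → ℂ := fun n y => LSeries.term a (s + (((1:ℝ):ℂ) + y * I)) n * Ker L (((1:ℝ):ℂ) + y * I)
  have hF : ∀ n y, F n y = LSeries.term a s n *
      (cexp (-(Real.log n : ℝ) * (((1:ℝ):ℂ) + y * I)) * Ker L (((1:ℝ):ℂ) + y * I)) := by
    intro n y
    simp only [F]
    rw [term_shift, mul_assoc]
  have hint : ∀ n, Integrable (F n) := by
    intro n
    refine ((ker_integrable one_pos (L := L) (Real.log n)).const_mul (LSeries.term a s n)).congr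
      (Eventually.of_forall fun y => (hF n y).symm)
  have hnorm : ∀ n y, ‖F n y‖ = ‖LSeries.term a (s + 1) n‖ * ‖Ker L (((1:ℝ):ℂ) + y * I)‖ := by
    intro n y
    simp only [F]
    rw [norm_mul, LSeries.norm_term_eq, LSeries.norm_term_eq]
    simp
  have hsum : Summable fun n => ∫ y, ‖F n y‖ := by
    simp_rw [hnorm, integral_const_mul]
    exact ha.norm.mul_right _
  have key := hasSum_integral_of_summable_integral_norm hint hsum
  have h1 : ∀ n, ∫ y, F n y = (2 * Real.pi) * (LSeries.term a s n * Wt L n) := by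
    intro n
    simp_rw [hF, integral_const_mul]
    have := perron_ker one_pos hL (Real.log n)
    rw [VI] at this
    rw [this, Wt]; ring
  simp_rw [h1] at key
  have h2 := key.tsum_eq
  rw [tsum_mul_left] at h2
  rw [h2, VI]
  congr 1; ext y
  rw [LSeries, ← tsum_mul_right]

/-- regular part of the kernel -/
def Ker1 (L : ℝ) (w : ℂ) : ℂ := dslope (fun w => cexp (2 * L * w) - cexp (L * w)) 0 w * (L : ℂ)⁻¹

lemma Ker1_diff (L : ℝ) : Differentiable ℂ (Ker1 L) := by
  have : DifferentiableOn ℂ (dslope (fun w => cexp (2 * L * w) - cexp (L * w)) 0) Set.univ :=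
      (differentiableOn_dslope (by simp)).mpr (by fun_prop)
  exact (differentiableOn_univ.mp this).mul_const _

lemma Ker1_zero {L : ℝ} (hL : 0 < L) : Ker1 L 0 = 1 := by
  rw [Ker1, dslope_same]
  have h1 : HasDerivAt (fun w : ℂ => cexp (2 * L * w)) (cexp (2 * L * 0) * (2 * L * 1)) 0 :=
      ((hasDerivAt_id (0:ℂ)).const_mul (2 * L:ℂ)).cexp
  have h2 : HasDerivAt (fun w : ℂ => cexp (L * w)) (cexp (L * 0) * (L * 1)) 0 :=
      ((hasDerivAt_id (0:ℂ)).const_mul (L:ℂ)).cexp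
  have h3 := (h1.sub h2).deriv
  have : deriv (fun w : ℂ => cexp (2 * L * w) - cexp (L * w)) 0 = L := by
    refine h3.trans ?_
    simp; ring
  rw [this]
  exact mul_inv_cancel₀ (by exact_mod_cast hL.ne')

lemma Ker1_ne {L : ℝ} {w : ℂ} (hw : w ≠ 0) :
    Ker1 L w = (cexp (2 * L * w) - cexp (L * w)) * (L : ℂ)⁻¹ * w⁻¹ := by
  rw [Ker1, dslope_of_ne _ hw, slope_def_field]
  simp; ring

lemma Ker_eq {L : ℝ} {w : ℂ} (hw : w ≠ 0) : Ker L w = Ker1 L w * w⁻¹ := by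
  rw [Ker1_ne hw, Ker, div_eq_mul_inv, mul_inv, pow_two, mul_inv]; ring

lemma Ker_num_bd {L : ℝ} (hL : 0 < L) (c : ℝ) : ∃ B : ℝ, ∀ w : ℂ, w.re ≤ c →
    ‖(cexp (2 * L * w) - cexp (L * w)) * (L : ℂ)⁻¹‖ ≤ B := by
  refine ⟨(Real.exp (2 * L * c) + Real.exp (L * c)) * L⁻¹, fun w hw => ?_⟩
  rw [norm_mul, norm_inv, norm_real, Real.norm_of_nonneg hL.le]
  gcongr
  refine (norm_sub_le _ _).trans ?_
  have a1 := norm_exp_real_mul_le (L := 2 * L) (by positivity) hw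
  have a2 := norm_exp_real_mul_le (L := L) (by positivity) hw
  push_cast at a1
  linarith

lemma Ker1_decays {L : ℝ} (hL : 0 < L) (x₁ x₂ : ℝ) : Decays (Ker1 L) (Strip x₁ x₂) (-1) := by
  obtain ⟨B, hB⟩ := Ker_num_bd hL x₂
  have i1 : Decays (fun w => (cexp (2 * L * w) - cexp (L * w)) * (L : ℂ)⁻¹) (Strip x₁ x₂) 0 :=
    Decays.of_bdd (C := B) fun w hw => hB w hw.2
  refine (i1.mul (decays_inv 0 _) (zero_add _)).congr (Y := 1) fun w _ hY => ?_
  rw [Ker1_ne, sub_zero]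
  rintro rfl
  norm_num at hY

/-- the residue formula with the kernel -/
lemma VI_shift {F : ℂ → ℂ} {b L C : ℝ} (hb : 0 < b) (hL : 0 < L)
    (hd : DifferentiableOn ℂ F {z | -b ≤ z.re})
    (hbd : ∀ z : ℂ, -b ≤ z.re → ‖F z‖ ≤ C * (1 + ‖z‖) ^ (1/2 : ℝ)) :
    VI (fun w => F w * Ker L w) 1 - VI (fun w => F w * Ker L w) (-b) = 2 * Real.pi * F 0 := by
  have key := VI_residue (F := fun w => F w * Ker1 L w) (x₁ := -b) (x₂ := 1) (p := 0) (by simpa) (by simp)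
    ((hd.mono fun z hz => hz.1).mul (Ker1_diff L).differentiableOn)
    (Decays.mul (r := 1/2) ⟨C, 0, fun z hz _ => hbd z hz.1⟩ (Ker1_decays hL _ _) (by norm_num))
  rw [Ker1_zero hL, mul_one] at key
  rw [← key]
  have h : ∀ x : ℝ, x ≠ 0 → VI (fun w => F w * Ker L w) x = VI (fun w => F w * Ker1 L w * (w - 0)⁻¹) x := by
    intro x hx
    simp only [VI]
    congr 1; ext y
    rw [Ker_eq, sub_zero, mul_assoc]
    intro h0
    apply hx
    simpa using congrArg re h0
  rw [h 1 one_ne_zero, h (-b) (by linarith)]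

lemma VI_pole {L : ℝ} (hL : 0 < L) {p : ℂ} (hp0 : p ≠ 0) (hp1 : p.re < 1) :
    VI (fun w => (w - p)⁻¹ * Ker L w) 1 = 2 * Real.pi * (Ker L p - p⁻¹) := by
  obtain ⟨B, hB0, hBp⟩ : ∃ B : ℝ, 0 < B ∧ -B < p.re := ⟨|p.re| + 1, by positivity, by
    linarith [neg_abs_le p.re]⟩
  obtain ⟨D, hD⟩ := Ker_num_bd hL (-B)
  have main : ∀ q : ℂ, -B < q.re → q.re < 1 →
      VI (fun w => Ker1 L w * (w - q)⁻¹) 1 = 2 * Real.pi * Ker1 L q := by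
    intro q hq1 hq2
    have key := VI_residue (F := Ker1 L) hq1 hq2 (Ker1_diff L).differentiableOn
      ((Ker1_decays hL _ _).mono_exp (by norm_num))
    rw [← key, eq_comm, sub_eq_self]
    have hδ : 0 < q.re + B := by linarith
    have hle : ∀ w : ℂ, w.re ≤ -B → q.re + B ≤ ‖w - q‖ := by
      intro w hw
      refine le_trans ?_ (abs_re_le_norm _)
      rw [sub_re]
      refine le_trans ?_ (neg_le_abs _)
      linarith
    have hDn : 0 ≤ D := (norm_nonneg _).trans (hD (-B) (by simp))
    have hleB : ∀ w : ℂ, w.re ≤ -B → B ≤ |w.re| := fun w hw => by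
      rw [abs_of_neg (by linarith)]; linarith
    refine VI_left (C := (D * (1 / B + 1)) * ((1 + ‖q‖) / (q.re + B) + 1)) ?_ ?_
    · refine (Ker1_diff L).differentiableOn.mul (DifferentiableOn.inv (by fun_prop) fun w hw h0 => ?_)
      have := hle w hw
      rw [h0] at this; simp at this; linarith
    · intro w hw
      have h0 := norm_nonneg w
      refine bound_weaken h0 (by positivity) (by norm_num : (-2:ℝ) ≤ -(3/2)) ?_
      rw [Ker1_ne (ne_of_re hB0 (hleB w hw))]
      refine bound_mul h0 (bound_mul h0 (r := 0) (by simpa using hD w hw) (inv_right_le hB0 (hleB w hw)) (e := -1) (by norm_num))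
        (inv_norm_le hδ (hle w hw)) (by norm_num)
  have m1 := main p hBp hp1
  have m2 := main 0 (by simpa) (by simp)
  rw [Ker1_zero hL] at m2
  have integ : ∀ q : ℂ, q.re < 1 → Integrable (fun y : ℝ => Ker1 L (((1:ℝ):ℂ) + y * I) * ((((1:ℝ):ℂ) + y * I) - q)⁻¹) := by
    intro q hq
    refine line_integrable (F := fun w => Ker1 L w * (w - q)⁻¹) (x₁ := 1) (x₂ := 1) ?_ ?_ le_rfl le_rfl
    · refine (Ker1_diff L).continuous.continuousOn.mul (ContinuousOn.inv₀ (by fun_prop) fun w hw h0 => ?_)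
      have := hw.1
      rw [sub_eq_zero.mp h0] at this; linarith
    · exact ((Ker1_decays hL _ _).mul (decays_inv q _) rfl).mono_exp (by norm_num)
  have hs := VI_sub (F := fun w => Ker1 L w * (w - p)⁻¹) (G := fun w => Ker1 L w * (w - 0)⁻¹) (x := 1)
    (integ p hp1) (integ 0 (by simp))
  rw [m1, m2] at hs
  have : VI (fun w => (w - p)⁻¹ * Ker L w) 1 =
      p⁻¹ * VI (fun w => Ker1 L w * (w - p)⁻¹ - Ker1 L w * (w - 0)⁻¹) 1 := by
    simp only [VI]
    rw [← integral_const_mul]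
    congr 1; ext y
    have hw0 : ((1:ℝ):ℂ) + y * I ≠ 0 := ne_of_re one_pos (by simp)
    have hwp : ((1:ℝ):ℂ) + y * I - p ≠ 0 := by
      intro h0
      have := congrArg re h0
      simp at this; linarith
    rw [Ker_eq hw0, sub_zero]
    generalize ((1:ℝ):ℂ) + y * I = w at *
    field_simp
    ring
  rw [this, hs, Ker_eq hp0]
  ring

lemma cpow_sub_one_bound {u : ℂ} (hu : 1 ≤ u.re) {y : ℝ} (hy : 0 < y) (hy1 : y ≤ 1) :
    ‖1 - (y : ℂ) ^ u‖ ≤ ‖u‖ * (1 - y) := by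
  have hd : ∀ x ∈ Set.Icc y 1, HasDerivWithinAt (fun x : ℝ => (x : ℂ) ^ u) (u * (x : ℂ) ^ (u - 1)) (Set.Icc y 1) x := by
    intro x hx
    have hx0 : 0 < x := hy.trans_le hx.1
    have h1 : HasDerivAt (fun w : ℂ => w ^ u) (u * (x : ℂ) ^ (u - 1)) (x : ℂ) := by
      have := (hasDerivAt_id (x : ℂ)).cpow_const (c := u) (Or.inl (by simpa))
      simpa using this
    exact h1.comp_ofReal.hasDerivWithinAt
  have := Convex.norm_image_sub_le_of_norm_hasDerivWithin_le hd (C := ‖u‖) (fun x hx => by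
    have hx0 : 0 < x := hy.trans_le hx.1
    rw [norm_mul, norm_cpow_eq_rpow_re_of_pos hx0]
    have : x ^ (u - 1).re ≤ 1 := Real.rpow_le_one hx0.le hx.2 (by simp; linarith)
    exact mul_le_of_le_one_right (norm_nonneg _) this) (convex_Icc y 1)
    (Set.left_mem_Icc.mpr hy1) (Set.right_mem_Icc.mpr hy1)
  simpa [Real.norm_of_nonneg (sub_nonneg.mpr hy1)] using this

lemma min_bound {N m x : ℝ} (hm : 0 < m) (hx : 0 < x) (h1 : N ≤ 2) (h2 : N ≤ m * x) :
    N ≤ 4 * (m * x) / (2 + m * x) := by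
  have : 0 < m * x := by positivity
  rw [le_div_iff₀ (by positivity)]
  nlinarith

lemma beta_diff_bound {z : ℂ} (hz : 2 ≤ z.re) {v : ℝ} (hv : 0 < v) :
    ‖1 / (v : ℂ) - betaIntegral v z‖ ≤ 4 * Real.log (2 + ‖z - 1‖) := by
  have hv' : 0 < (v : ℂ).re := by simpa
  have hm : 0 < ‖z - 1‖ := by
    have := abs_re_le_norm (z - 1)
    rw [sub_re, one_re, abs_of_nonneg (by linarith)] at this
    linarith
  set m := ‖z - 1‖ with hmdef
  rw [← betaIntegral_eval_one_right hv', betaIntegral, betaIntegral,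
    ← intervalIntegral.integral_sub (betaIntegral_convergent hv' (by simp))
      (betaIntegral_convergent hv' (by linarith))]
  have hFTC : ∫ x in (0:ℝ)..1, 4 * m / (2 + m * x) = 4 * Real.log (2 + m * 1) - 4 * Real.log (2 + m * 0) := by
    apply intervalIntegral.integral_eq_sub_of_hasDerivAt (f := fun x => 4 * Real.log (2 + m * x))
    · intro x hx
      rw [Set.uIcc_of_le zero_le_one] at hx
      have hx0 := hx.1
      have h1 : HasDerivAt (fun x : ℝ => 2 + m * x) m x := by
        simpa using ((hasDerivAt_id x).const_mul m).const_add 2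
      have := (h1.log (by positivity)).const_mul 4
      simpa [mul_div_assoc] using this
    · apply ContinuousOn.intervalIntegrable
      apply ContinuousOn.div (by fun_prop) (by fun_prop)
      intro x hx
      rw [Set.uIcc_of_le zero_le_one] at hx
      have := hx.1
      positivity
  have hle : ‖∫ (x : ℝ) in (0:ℝ)..1, ((x:ℂ) ^ ((v:ℂ) - 1) * (1 - (x:ℂ)) ^ ((1:ℂ) - 1) -
      (x:ℂ) ^ ((v:ℂ) - 1) * (1 - (x:ℂ)) ^ (z - 1))‖ ≤ ∫ x in (0:ℝ)..1, 4 * m / (2 + m * x) := by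
    apply intervalIntegral.norm_integral_le_of_norm_le zero_le_one
    · have h1 : ∀ᵐ x : ℝ, x ≠ 1 := by simp [ae_iff, measure_singleton]
      filter_upwards [h1] with x hx1 hx
      have hx0 := hx.1
      have hxl : x < 1 := lt_of_le_of_ne hx.2 hx1
      rw [sub_self, cpow_zero, mul_one]
      have : (x:ℂ) ^ ((v:ℂ) - 1) - (x:ℂ) ^ ((v:ℂ) - 1) * (1 - (x:ℂ)) ^ (z - 1) =
        (x:ℂ) ^ ((v:ℂ) - 1) * (1 - ((1 - x : ℝ):ℂ) ^ (z - 1)) := by push_cast; ring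
      rw [this, norm_mul, norm_cpow_eq_rpow_re_of_pos hx0]
      have b1 : x ^ ((v:ℂ) - 1).re ≤ x⁻¹ := by
        rw [← Real.rpow_neg_one]
        apply Real.rpow_le_rpow_of_exponent_ge hx0 hxl.le
        simp; linarith
      have b2 := cpow_sub_one_bound (u := z - 1) (by simp; linarith) (y := 1 - x) (by linarith) (by linarith)
      have b3 : ‖1 - ((1 - x : ℝ):ℂ) ^ (z - 1)‖ ≤ 2 := by
        refine (norm_sub_le _ _).trans ?_
        rw [norm_one, norm_cpow_eq_rpow_re_of_pos (by linarith)]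
        have := Real.rpow_le_one (x := 1 - x) (z := (z-1).re) (by linarith) (by linarith) (by simp; linarith)
        linarith
      have b4 := min_bound hm hx0 b3 (by simpa using b2)
      calc _ ≤ x⁻¹ * (4 * (m * x) / (2 + m * x)) := by gcongr
        _ = _ := by field_simp
    · apply ContinuousOn.intervalIntegrable
      apply ContinuousOn.div (by fun_prop) (by fun_prop)
      intro x hx
      rw [Set.uIcc_of_le zero_le_one] at hx
      have := hx.1
      positivity
  refine hle.trans ?_
  rw [hFTC]
  have : 0 ≤ Real.log 2 := Real.log_nonneg (by norm_num)
  simp only [mul_one, mul_zero, add_zero]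
  linarith

lemma digamma_bound_two {z : ℂ} (hz : 2 ≤ z.re) :
    ‖digamma z + Real.eulerMascheroniConstant‖ ≤ 4 * Real.log (2 + ‖z - 1‖) := by
  have hz0 : 0 < z.re := by linarith
  have hG : Gamma z ≠ 0 := Gamma_ne_zero_of_re_pos hz0
  have dz : ∀ w : ℂ, 0 < w.re → HasDerivAt Gamma (deriv Gamma w) w := fun w hw => by
    refine (differentiableAt_Gamma w fun m h => ?_).hasDerivAt
    rw [h] at hw; simp at hw
    have : (0:ℝ) ≤ m := m.cast_nonneg
    linarith
  let φ : ℂ → ℂ := fun v => Gamma (1 + v) * Gamma z / Gamma (z + v)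
  have hφ : HasDerivAt φ (-Real.eulerMascheroniConstant - digamma z) 0 := by
    have h1 : HasDerivAt (fun v : ℂ => Gamma (1 + v)) (deriv Gamma 1) 0 := by
      have : HasDerivAt Gamma (deriv Gamma 1) (1 + 0) := by rw [add_zero]; exact dz 1 (by simp)
      exact this.comp_const_add 1 0
    have h2 : HasDerivAt (fun v : ℂ => Gamma (z + v)) (deriv Gamma z) 0 := by
      have : HasDerivAt Gamma (deriv Gamma z) (z + 0) := by rw [add_zero]; exact dz z hz0
      exact this.comp_const_add z 0
    have h3 := (h1.mul_const (Gamma z)).div h2 (by rwa [add_zero])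
    convert! h3 using 1
    rw [hasDerivAt_Gamma_one.deriv, digamma_def, logDeriv_apply, add_zero, add_zero, Gamma_one]
    field_simp
  have hφ0 : φ 0 = 1 := by simp [φ, hG]
  have ht := (hφ.comp_ofReal (z := 0)).tendsto_slope_zero_right.norm
  have : ‖-(Real.eulerMascheroniConstant : ℂ) - digamma z‖ ≤ 4 * Real.log (2 + ‖z - 1‖) := by
    refine le_of_tendsto ht ?_
    filter_upwards [self_mem_nhdsWithin] with v hv
    have hv : 0 < v := hv
    have hv' : 0 < (v : ℂ).re := by simpa
    have hvne : (v : ℂ) ≠ 0 := by exact_mod_cast hv.ne'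
    have hb := Gamma_mul_Gamma_eq_betaIntegral hv' hz0
    have hGzv : Gamma (z + v) ≠ 0 := Gamma_ne_zero_of_re_pos (by simp; linarith)
    have : v⁻¹ • (φ ((0 + v : ℝ) : ℂ) - φ ((0:ℝ):ℂ)) = -(1 / (v : ℂ) - betaIntegral v z) := by
      rw [zero_add, ofReal_zero, hφ0]
      simp only [φ]
      rw [add_comm 1 (v:ℂ), Gamma_add_one _ hvne, mul_assoc, hb, add_comm (v:ℂ) z]
      rw [real_smul]
      push_cast
      field_simp
      ring
    rw [this, norm_neg]
    exact beta_diff_bound hz hv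
  rw [← norm_neg]
  convert! this using 2
  ring

lemma digamma_bound {z : ℂ} (hz : 1/4 ≤ z.re) : ‖digamma z‖ ≤ 16 * Real.log (2 + ‖z‖) := by
  have hne : ∀ w : ℂ, 0 < w.re → ∀ m : ℕ, w ≠ -m := by
    intro w hw m h
    rw [h] at hw; simp at hw
    have : (0:ℝ) ≤ m := m.cast_nonneg
    linarith
  have r1 := digamma_apply_add_one z (hne z (by linarith))
  have r2 := digamma_apply_add_one (z + 1) (hne _ (by simp; linarith))
  have b := digamma_bound_two (z := z + 1 + 1) (by simp; linarith)
  have hn : 1/4 ≤ ‖z‖ := hz.trans ((le_abs_self _).trans (abs_re_le_norm _))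
  have hn1 : 1 ≤ ‖z + 1‖ := by
    refine le_trans ?_ ((le_abs_self _).trans (abs_re_le_norm _)); simp; linarith
  have i1 : ‖z⁻¹‖ ≤ 4 := by
    rw [norm_inv, inv_le_comm₀ (by linarith) (by norm_num)]; linarith
  have i2 : ‖(z + 1)⁻¹‖ ≤ 1 := by
    rw [norm_inv]; exact inv_le_one_of_one_le₀ hn1
  have hγ := Real.eulerMascheroniConstant_lt_two_thirds
  have hγ' := Real.one_half_lt_eulerMascheroniConstant
  have e : digamma z = (digamma (z + 1 + 1) + Real.eulerMascheroniConstant) - Real.eulerMascheroniConstant - (z + 1)⁻¹ - z⁻¹ := by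
    rw [r2, r1]; ring
  have e5 : ‖z + 1 + 1 - 1‖ ≤ ‖z‖ + 1 := by
    rw [add_sub_cancel_right]; simpa using norm_add_le z 1
  have hl : Real.log (2 + ‖z + 1 + 1 - 1‖) ≤ Real.log (2 + ‖z‖) + 1/2 := by
    have : Real.log (2 + ‖z + 1 + 1 - 1‖) ≤ Real.log ((2 + ‖z‖) * (3/2)) := by
      apply Real.log_le_log (by positivity)
      nlinarith
    refine this.trans ?_
    rw [Real.log_mul (by positivity) (by norm_num)]
    have := Real.log_le_sub_one_of_pos (show (0:ℝ) < 3/2 by norm_num)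
    linarith
  have h2 : Real.log 2 ≤ Real.log (2 + ‖z‖) := Real.log_le_log (by norm_num) (by linarith)
  have h3 := Real.log_two_gt_d9
  have hγn : ‖(Real.eulerMascheroniConstant : ℂ)‖ ≤ 2/3 := by
    rw [norm_real, Real.norm_of_nonneg (by linarith)]; exact hγ.le
  rw [e]
  have n1 := norm_sub_le (digamma (z + 1 + 1) + Real.eulerMascheroniConstant - Real.eulerMascheroniConstant - (z + 1)⁻¹) (z⁻¹)
  have n2 := norm_sub_le (digamma (z + 1 + 1) + Real.eulerMascheroniConstant - Real.eulerMascheroniConstant) ((z + 1)⁻¹)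
  have n3 := norm_sub_le (digamma (z + 1 + 1) + Real.eulerMascheroniConstant) (Real.eulerMascheroniConstant : ℂ)
  linarith

lemma gamma_ratio {h σ : ℝ} (hh : 0 < h) (hσ : 0 < σ) :
    ∃ C : ℝ, 0 ≤ C ∧ ∀ z : ℂ, σ ≤ z.re → ‖Gamma z‖ ≤ C * ‖Gamma (z + h)‖ := by
  have hh' : 0 < (h : ℂ).re := by simpa
  have hc := (betaIntegral_convergent (u := σ) (v := h) (by simpa) hh')
  let B : ℝ := ∫ x in (0:ℝ)..1, ‖(x:ℂ) ^ ((σ:ℂ) - 1) * (1 - (x:ℂ)) ^ ((h:ℂ) - 1)‖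
  have hB : 0 ≤ B := intervalIntegral.integral_nonneg zero_le_one fun _ _ => norm_nonneg _
  refine ⟨B / ‖Gamma h‖, by positivity, fun z hz => ?_⟩
  have hΓ : Gamma h ≠ 0 := Gamma_ne_zero_of_re_pos hh'
  have key := Gamma_mul_Gamma_eq_betaIntegral (s := z) (t := h) (by linarith) hh'
  have hb : ‖betaIntegral z h‖ ≤ B := by
    apply intervalIntegral.norm_integral_le_of_norm_le zero_le_one _ hc.norm
    refine Eventually.of_forall fun x hx => ?_
    rw [norm_mul, norm_mul]
    gcongr
    rw [norm_cpow_eq_rpow_re_of_pos hx.1, norm_cpow_eq_rpow_re_of_pos hx.1]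
    apply Real.rpow_le_rpow_of_exponent_ge hx.1 hx.2
    simpa
  have hn : ‖Gamma z‖ * ‖Gamma h‖ = ‖Gamma (z + h)‖ * ‖betaIntegral z h‖ := by
    rw [← norm_mul, ← norm_mul, key]
  rw [div_mul_eq_mul_div, le_div_iff₀ (norm_pos_iff.mpr hΓ), hn]
  rw [mul_comm]
  gcongr

lemma log_branch {F : ℂ → ℂ} {c : ℂ} {R : ℝ} (hR : 0 < R) (hF : DifferentiableOn ℂ F (Metric.ball c R))
    (hne : ∀ z ∈ Metric.ball c R, F z ≠ 0) :
    ∃ g : ℂ → ℂ, g c = 0 ∧ (∀ z ∈ Metric.ball c R, HasDerivAt g (logDeriv F z) z) ∧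
      ∀ z ∈ Metric.ball c R, F z = F c * cexp (g z) := by
  have hd : DifferentiableOn ℂ (logDeriv F) (Metric.ball c R) :=
    (hF.deriv Metric.isOpen_ball).div hF hne
  obtain ⟨g, hg0, hg⟩ := hd.isExactOn_ball.with_val_at c 0
  refine ⟨g, hg0, hg, fun z hz => ?_⟩
  have hd2 : ∀ w ∈ Metric.ball c R, HasDerivAt (fun w => F w * cexp (-g w)) 0 w := by
    intro w hw
    have h1 := (hF.differentiableAt (Metric.isOpen_ball.mem_nhds hw)).hasDerivAt
    have h2 := h1.mul (hg w hw).neg.cexp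
    convert! h2 using 1
    rw [logDeriv_apply]
    have := hne w hw
    field_simp
    ring
  have hconst := Metric.isOpen_ball.is_const_of_deriv_eq_zero (convex_ball c R).isPreconnected
    (fun w hw => (hd2 w hw).differentiableAt.differentiableWithinAt) (fun w hw => (hd2 w hw).deriv)
    hz (Metric.mem_ball_self hR)
  simp only [hg0, neg_zero, Complex.exp_zero, mul_one] at hconst
  rw [← hconst, mul_assoc, ← Complex.exp_add]
  simp

lemma landau {F : ℂ → ℂ} {c : ℂ} {R r M : ℝ} (hr : 0 < r) (hrR : r < R) (hM : 0 < M)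
    (hF : DifferentiableOn ℂ F (Metric.ball c R))
    (hne : ∀ z ∈ Metric.ball c R, F z ≠ 0) (hb : ∀ z ∈ Metric.ball c R, ‖F z‖ ≤ Real.exp M * ‖F c‖)
    {z : ℂ} (hz : ‖z - c‖ ≤ r) :
    ‖logDeriv F z‖ ≤ (2 * R / ((R - r) / 2) ^ 2) * M ∧
      ‖F c‖ ≤ Real.exp (2 * R / ((R - r) / 2) * M) * ‖F z‖ := by
  have hR : 0 < R := hr.trans hrR
  obtain ⟨g, hg0, hg, hgF⟩ := log_branch hR hF hne
  have hcpos : 0 < ‖F c‖ := norm_pos_iff.mpr (hne c (Metric.mem_ball_self hR))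
  set δ := (R - r) / 2 with hδ
  have hδ0 : 0 < δ := by rw [hδ]; linarith
  have hgb : ∀ w : ℂ, ‖w - c‖ ≤ r + δ → ‖g w‖ ≤ 2 * R / δ * M := by
    intro w hw
    have hwR : ‖w - c‖ < R := by linarith
    have hmaps : ∀ u : ℂ, u ∈ Metric.ball (0:ℂ) R → c + u ∈ Metric.ball c R := by
      intro u hu
      simpa [Metric.mem_ball, dist_eq_norm] using hu
    have := borelCaratheodory_zero (f := fun u => g (c + u)) (M := M) (R := R) (z := w - c) hM
      (fun u hu => by
        have := (hg _ (hmaps u hu)).comp_const_add c u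
        exact this.differentiableAt.differentiableWithinAt)
      (fun u hu => by
        show (g (c + u)).re ≤ M
        have h1 := hb _ (hmaps u hu)
        rw [hgF _ (hmaps u hu), norm_mul, norm_exp, mul_comm] at h1
        exact Real.exp_le_exp.mp (le_of_mul_le_mul_right h1 hcpos))
      hR (by simpa using hwR) (by simpa using hg0)
    simp only [add_sub_cancel] at this
    refine this.trans ?_
    rw [div_mul_eq_mul_div]
    have : δ ≤ R - ‖w - c‖ := by linarith
    have h2 : 2 * M * ‖w - c‖ ≤ 2 * R * M := by nlinarith
    gcongr
  have hzR : z ∈ Metric.ball c R := by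
    rw [Metric.mem_ball, dist_eq_norm]; linarith
  constructor
  · rw [← (hg z hzR).deriv]
    have hsub : ∀ w ∈ Metric.closedBall z δ, ‖w - c‖ ≤ r + δ := by
      intro w hw
      have : w - c = (z - c) + (w - z) := by ring
      rw [this]
      refine (norm_add_le _ _).trans ?_
      rw [Metric.mem_closedBall, dist_eq_norm] at hw
      linarith
    have := norm_deriv_le_of_forall_mem_sphere_norm_le (f := g) (c := z) (R := δ) (C := 2 * R / δ * M) hδ0
      (by
        apply DifferentiableOn.diffContOnCl
        rw [closure_ball _ hδ0.ne']
        intro w hw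
        refine (hg w ?_).differentiableAt.differentiableWithinAt
        rw [Metric.mem_ball, dist_eq_norm]
        linarith [hsub w hw])
      (fun w hw => hgb w (hsub w (Metric.sphere_subset_closedBall hw)))
    refine this.trans (le_of_eq ?_)
    field_simp
  · rw [hgF z hzR, norm_mul, norm_exp]
    have h1 := hgb z (by linarith)
    have h2 := (neg_le_abs _).trans ((abs_re_le_norm _).trans h1)
    have h3 : 1 ≤ Real.exp (2 * R / δ * M) * Real.exp (g z).re := by
      rw [← Real.exp_add]
      apply Real.one_le_exp
      linarith
    nlinarith

/-- growth lemma: bounds for the logarithmic derivative and lower bound. -/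
lemma growth {F : ℂ → ℂ} {A C c₀ ε : ℝ} (hA : 0 ≤ A) (hC : 0 < C) (hc : 0 < c₀) (hε : 0 < ε)
    (hd : DifferentiableOn ℂ F {s | 1/2 < s.re}) (hne : ∀ s : ℂ, 1/2 < s.re → F s ≠ 0)
    (hb : ∀ s : ℂ, 1/2 < s.re → ‖F s‖ ≤ C * (1 + ‖s‖) ^ A)
    (hl : ∀ s : ℂ, 2 ≤ s.re → c₀ ≤ ‖F s‖) :
    ∃ C' A' : ℝ, 0 < C' ∧ 0 ≤ A' ∧ ∀ s : ℂ, 1/2 + ε ≤ s.re →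
      ‖logDeriv F s‖ ≤ C' * (1 + ‖s‖) ^ (1/2 : ℝ) ∧ 1 ≤ C' * (1 + ‖s‖) ^ A' * ‖F s‖ := by
  set D : ℝ := C * (5 + ε) ^ A / c₀ with hD
  have hD0 : 0 < D := by positivity
  set R : ℝ := 3/2 + ε/2
  set r : ℝ := 3/2
  have hrR : r < R := by simp only [r, R]; linarith
  have hR : 0 < R := by simp only [R]; positivity
  set κ₁ : ℝ := 2 * R / ((R - r) / 2) ^ 2
  set κ₂ : ℝ := 2 * R / ((R - r) / 2)
  have hδ0 : 0 < (R - r) / 2 := half_pos (sub_pos.mpr hrR)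
  have hκ₁ : 0 < κ₁ := by positivity
  have hκ₂ : 0 < κ₂ := by positivity
  refine ⟨max (κ₁ * (D + 2 * A)) (Real.exp (κ₂ * D) / c₀), κ₂ * A, lt_max_of_lt_right (by positivity),
    by positivity, fun s hs => ?_⟩
  have hs1 : 1 ≤ 1 + ‖s‖ := by linarith [norm_nonneg s]
  have hlog : 0 ≤ Real.log (1 + ‖s‖) := Real.log_nonneg hs1
  have hcenter : 2 ≤ (s + 3/2 : ℂ).re := by
    have : (s + 3/2 : ℂ).re = s.re + 3/2 := by
      rw [add_re]; norm_num
    rw [this]; linarith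
  have hre : ∀ z ∈ Metric.ball (s + 3/2 : ℂ) R, 1/2 < z.re := by
    intro z hz
    rw [Metric.mem_ball, dist_eq_norm] at hz
    have h1 := (neg_le_abs _).trans (abs_re_le_norm (z - (s + 3/2)))
    have : (z - (s + 3/2) : ℂ).re = z.re - (s.re + 3/2) := by
      rw [sub_re, add_re]; norm_num
    rw [this] at h1
    simp only [R] at hz
    linarith
  have key := landau (F := F) (c := s + 3/2) (R := R) (r := r) (M := D + A * Real.log (1 + ‖s‖))
    (by norm_num [r]) hrR (by positivity) (hd.mono hre) (fun z hz => hne z (hre z hz))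
    (fun z hz => by
      refine (hb z (hre z hz)).trans ?_
      have hn : 1 + ‖z‖ ≤ (5 + ε) * (1 + ‖s‖) := by
        rw [Metric.mem_ball, dist_eq_norm] at hz
        have h1 := norm_sub_norm_le z (s + 3/2)
        have h2 := norm_add_le s (3/2)
        have h3 : ‖(3/2 : ℂ)‖ = 3/2 := by norm_num
        simp only [R] at hz
        nlinarith [norm_nonneg s]
      calc C * (1 + ‖z‖) ^ A ≤ C * ((5 + ε) * (1 + ‖s‖)) ^ A := by gcongr
        _ = (D * (1 + ‖s‖) ^ A) * c₀ := by
            rw [Real.mul_rpow (by positivity) (by positivity), hD]; field_simp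
        _ ≤ Real.exp (D + A * Real.log (1 + ‖s‖)) * ‖F (s + 3/2)‖ := by
            have : D * (1 + ‖s‖) ^ A ≤ Real.exp (D + A * Real.log (1 + ‖s‖)) := by
              rw [Real.exp_add, mul_comm A, Real.exp_mul, Real.exp_log (by positivity)]
              gcongr
              linarith [Real.add_one_le_exp D]
            gcongr
            exact hl _ hcenter)
    (z := s) (by simp [r])
  constructor
  · refine key.1.trans ?_
    have h2 : Real.log (1 + ‖s‖) ≤ 2 * (1 + ‖s‖) ^ (1/2 : ℝ) := by
      have := Real.log_le_rpow_div (x := 1 + ‖s‖) (by positivity) (show (0:ℝ) < 1/2 by norm_num)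
      linarith
    have h3 : 1 ≤ (1 + ‖s‖) ^ (1/2 : ℝ) := Real.one_le_rpow hs1 (by norm_num)
    calc κ₁ * (D + A * Real.log (1 + ‖s‖)) ≤ κ₁ * (D * (1 + ‖s‖) ^ (1/2 : ℝ) + A * (2 * (1 + ‖s‖) ^ (1/2 : ℝ))) := by
          gcongr
          exact le_mul_of_one_le_right hD0.le h3
      _ = κ₁ * (D + 2 * A) * (1 + ‖s‖) ^ (1/2 : ℝ) := by ring
      _ ≤ _ := by gcongr; exact le_max_left _ _
  · have h := (hl _ hcenter).trans key.2
    have he : Real.exp (κ₂ * (D + A * Real.log (1 + ‖s‖))) = Real.exp (κ₂ * D) * (1 + ‖s‖) ^ (κ₂ * A) := by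
      rw [mul_add, Real.exp_add, ← mul_assoc, mul_comm (κ₂ * A),
        Real.exp_mul (Real.log (1 + ‖s‖)), Real.exp_log (by positivity)]
    have h' : c₀ ≤ Real.exp (κ₂ * D) * (1 + ‖s‖) ^ (κ₂ * A) * ‖F s‖ := by rw [← he]; exact h
    calc (1:ℝ) = c₀ / c₀ := by field_simp
      _ ≤ Real.exp (κ₂ * D) * (1 + ‖s‖) ^ (κ₂ * A) * ‖F s‖ / c₀ := by gcongr
      _ = Real.exp (κ₂ * D) / c₀ * (1 + ‖s‖) ^ (κ₂ * A) * ‖F s‖ := by ring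
      _ ≤ _ := by gcongr; exact le_max_right _ _

def Imel (E : ℝ → ℂ) (s : ℂ) : ℂ := ∫ x in Set.Ioi (1:ℝ), E x * (x:ℂ)^(-(s+1))

lemma Imel_eq_mellin (E : ℝ → ℂ) (s : ℂ) : Imel E s = mellin (Set.indicator (Set.Ioi 1) E) (-s) := by
  unfold Imel mellin
  rw [← integral_indicator measurableSet_Ioi, ← integral_indicator measurableSet_Ioi]
  congr 1; ext x
  by_cases hx : 1 < x
  · have h0 : 0 < x := by linarith
    simp [Set.indicator, hx, h0]
    rw [mul_comm]; congr 2; ring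
  · simp [Set.indicator, hx]

lemma Imel_diff {E : ℝ → ℂ} {B : ℝ} (hm : Measurable E) (hB : ∀ x, 1 < x → ‖E x‖ ≤ B) {s : ℂ} (hs : 0 < s.re) :
    DifferentiableAt ℂ (Imel E) s := by
  have hB0 : 0 ≤ B := (norm_nonneg _).trans (hB 2 (by norm_num))
  have hbd : ∀ x, ‖Set.indicator (Set.Ioi 1) E x‖ ≤ B := by
    intro x
    by_cases hx : 1 < x
    · simpa [Set.indicator, hx] using hB x hx
    · simpa [Set.indicator, hx] using hB0
  have h := mellin_differentiableAt_of_isBigO_rpow (f := Set.indicator (Set.Ioi 1) E) (a := 0)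
    (b := -s.re - 1) (s := -s) ?_ ?_ (by simpa using hs) ?_ (by simp)
  · have : Imel E = fun s => mellin (Set.indicator (Set.Ioi 1) E) (-s) := by
      ext s; exact Imel_eq_mellin E s
    rw [this]
    exact DifferentiableAt.comp (g := mellin (Set.indicator (Set.Ioi 1) E)) s h differentiableAt_id.neg
  · apply LocallyIntegrable.locallyIntegrableOn
    have hmi : Measurable (Set.indicator (Set.Ioi 1) E) := hm.indicator measurableSet_Ioi
    apply (locallyIntegrable_const B).mono hmi.aestronglyMeasurable
    filter_upwards with x
    rw [Real.norm_of_nonneg hB0]; exact hbd x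
  · simp only [neg_zero, Real.rpow_zero]
    exact Asymptotics.IsBigO.of_bound B (by filter_upwards with x; simpa using hbd x)
  · apply Asymptotics.IsBigO.of_bound 1
    filter_upwards [Ioo_mem_nhdsGT (show (0:ℝ) < 1 by norm_num)] with x hx
    have : ¬ (1 < x) := by linarith [hx.2]
    simp [Set.indicator, this]

lemma Imel_bound {E : ℝ → ℂ} {B : ℝ} (hB : ∀ x, 1 < x → ‖E x‖ ≤ B) {s : ℂ} (hs : 0 < s.re) :
    ‖Imel E s‖ ≤ B / s.re := by
  have hi : IntegrableOn (fun x : ℝ => B * x ^ (-s.re - 1)) (Set.Ioi 1) :=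
    (integrableOn_Ioi_rpow_of_lt (by linarith) one_pos).const_mul B
  have := norm_integral_le_of_norm_le (μ := volume.restrict (Set.Ioi (1:ℝ)))
    (f := fun x : ℝ => E x * (x:ℂ)^(-(s+1))) hi (by
      filter_upwards [ae_restrict_mem measurableSet_Ioi] with x hx
      have h0 : (0:ℝ) < x := lt_trans one_pos hx
      rw [norm_mul, norm_cpow_eq_rpow_re_of_pos h0]
      have e : (-(s+1)).re = -s.re - 1 := by simp; ring
      rw [e]
      exact mul_le_mul_of_nonneg_right (hB x hx) (by positivity))
  refine this.trans (le_of_eq ?_)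
  rw [integral_const_mul, integral_Ioi_rpow_of_lt (by linarith) one_pos]
  simp
  field_simp

/-- identity theorem on a half plane -/
lemma halfplane_identity {f g : ℂ → ℂ} {σ : ℝ} (hσ : σ < 2)
    (hf : DifferentiableOn ℂ f {s | σ < s.re}) (hg : DifferentiableOn ℂ g {s | σ < s.re})
    (h : ∀ s, 1 < s.re → f s = g s) : ∀ s, σ < s.re → f s = g s := by
  have ho : IsOpen {s : ℂ | σ < s.re} := isOpen_lt continuous_const continuous_re
  have hc : IsPreconnected {s : ℂ | σ < s.re} := (convex_halfSpace_re_gt σ).isPreconnected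
  have := (hf.analyticOnNhd ho).eqOn_of_preconnected_of_eventuallyEq (hg.analyticOnNhd ho) hc
    (z₀ := 2) (by simpa using hσ) (by
      have : {s : ℂ | 1 < s.re} ∈ nhds (2:ℂ) :=
        (isOpen_lt continuous_const continuous_re).mem_nhds (by simp)
      filter_upwards [this] with s hs using h s hs)
  exact fun s hs => this hs

def psum (f : ℕ → ℂ) (x : ℝ) : ℂ := ∑ k ∈ Finset.Icc 1 ⌊x⌋₊, f k

lemma psum_measurable (f : ℕ → ℂ) : Measurable (psum f) := by
  unfold psum
  exact (measurable_from_nat (f := fun n : ℕ => ∑ k ∈ Finset.Icc 1 n, f k)).comp Nat.measurable_floor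

lemma char_sum_bdd {M : ℕ} [NeZero M] {χ : DirichletCharacter ℂ M} (hχ : χ ≠ 1) (n : ℕ) :
    ‖∑ k ∈ Finset.range n, χ (k : ZMod M)‖ ≤ M := by
  have hfull : ∑ k ∈ Finset.range M, χ (k : ZMod M) = 0 := by
    rw [← MulChar.sum_eq_zero_of_ne_one hχ]
    refine Finset.sum_bij (fun k _ => (k : ZMod M)) (by simp) ?_ ?_ (by simp)
    · intro a ha b hb hab
      simp at ha hb
      have := congrArg ZMod.val hab
      rwa [ZMod.val_natCast_of_lt ha, ZMod.val_natCast_of_lt hb] at this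
    · intro b _
      exact ⟨b.val, by simpa using ZMod.val_lt b, by simp⟩
  induction n using Nat.strong_induction_on with
  | _ n ih =>
    by_cases hn : n < M
    · refine (norm_sum_le _ _).trans ?_
      refine (Finset.sum_le_card_nsmul _ _ 1 (fun k _ => χ.norm_le_one _)).trans ?_
      simpa using hn.le
    · push Not at hn
      obtain ⟨m, rfl⟩ := Nat.exists_eq_add_of_le hn
      rw [Finset.sum_range_add, hfull, zero_add]
      have := ih m (by have := NeZero.pos M; omega)
      simpa using this

lemma psum_char_bdd {M : ℕ} [NeZero M] {χ : DirichletCharacter ℂ M} (hχ : χ ≠ 1) (x : ℝ) :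
    ‖psum (fun n => χ (n : ZMod M)) x‖ ≤ M + 1 := by
  have h : psum (fun n => χ (n : ZMod M)) x = ∑ k ∈ Finset.range (⌊x⌋₊ + 1), χ (k : ZMod M) - χ 0 := by
    unfold psum
    rw [Finset.sum_range_succ', Nat.cast_zero, add_sub_cancel_right,
      ← Finset.Ico_add_one_right_eq_Icc, Finset.sum_Ico_eq_sum_range]
    simp [add_comm]
  rw [h]
  refine (norm_sub_le _ _).trans (add_le_add (char_sum_bdd hχ _) (χ.norm_le_one _))

lemma L_eq_Imel {M : ℕ} [NeZero M] {χ : DirichletCharacter ℂ M} (hχ : χ ≠ 1) :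
    ∀ s : ℂ, 0 < s.re → LFunction χ s = s * Imel (psum (fun n => χ (n : ZMod M))) s := by
  apply halfplane_identity (by norm_num) (differentiable_LFunction hχ).differentiableOn
  · intro s hs
    exact (differentiableAt_id.mul (Imel_diff (psum_measurable _) (fun x _ => psum_char_bdd hχ x) hs)).differentiableWithinAt
  · intro s hs
    rw [LFunction_eq_LSeries χ hs]
    refine LSeries_eq_mul_integral _ le_rfl (by linarith) (LSeriesSummable_of_one_lt_re χ hs) ?_
    apply Asymptotics.IsBigO.of_bound ((M:ℝ)+1)
    filter_upwards with n
    have := psum_char_bdd hχ (n:ℝ)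
    simpa [psum] using this

lemma L_growth_nontriv {M : ℕ} [NeZero M] {χ : DirichletCharacter ℂ M} (hχ : χ ≠ 1) (s : ℂ) (hs : 1/4 ≤ s.re) :
    ‖LFunction χ s‖ ≤ 4*(M+1) * (1+‖s‖) := by
  rw [L_eq_Imel hχ s (by linarith), norm_mul]
  have h := Imel_bound (fun x _ => psum_char_bdd hχ x) (show 0 < s.re by linarith)
  have h2 : ((M:ℝ)+1)/s.re ≤ 4*(M+1) := by
    rw [div_le_iff₀ (by linarith)]; nlinarith [show (0:ℝ) ≤ M from Nat.cast_nonneg M]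
  nlinarith [norm_nonneg s, h.trans h2, norm_nonneg (Imel (psum (fun n => χ (n : ZMod M))) s)]

lemma zeta_eq_Imel :
    ∀ s : ℂ, 0 < s.re → LFunctionTrivChar₁ 1 s = s - s * (s-1) * Imel (fun x => ((Int.fract x : ℝ) : ℂ)) s := by
  have hfm : Measurable (fun x : ℝ => ((Int.fract x : ℝ) : ℂ)) :=
    Complex.measurable_ofReal.comp measurable_fract
  have hfb : ∀ x : ℝ, 1 < x → ‖((Int.fract x : ℝ) : ℂ)‖ ≤ 1 := by
    intro x _
    rw [Complex.norm_real, Real.norm_of_nonneg (Int.fract_nonneg _)]; exact (Int.fract_lt_one x).le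
  apply halfplane_identity (by norm_num) (differentiable_LFunctionTrivChar₁ 1).differentiableOn
  · intro s hs
    have := Imel_diff hfm hfb hs
    exact (by fun_prop : DifferentiableAt ℂ _ s).differentiableWithinAt
  · intro s hs
    have hs1 : s ≠ 1 := by rintro rfl; simp at hs
    rw [LFunctionTrivChar₁, Function.update_of_ne hs1]
    have hz : LFunctionTrivChar 1 s = s * Imel (psum 1) s := by
      rw [show LFunctionTrivChar 1 s = riemannZeta s by rw [LFunctionTrivChar, LFunction_modOne_eq],
        ← LSeries_one_eq_riemannZeta hs]
      refine LSeries_eq_mul_integral _ zero_le_one hs (LSeriesSummable_one_iff.mpr hs) ?_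
      apply Asymptotics.IsBigO.of_bound 1
      filter_upwards with n
      simp
    have hI : Imel (psum 1) s = 1/(s-1) - Imel (fun x => ((Int.fract x : ℝ) : ℂ)) s := by
      have e1 : ∫ x in Set.Ioi (1:ℝ), (x:ℂ)^(-s) = 1/(s-1) := by
        rw [integral_Ioi_cpow_of_lt (by simpa using hs) one_pos]
        simp
        rw [show -s+1 = -(s-1) by ring, neg_div_neg_eq, one_div]
      rw [← e1]
      unfold Imel
      rw [← integral_sub]
      · apply setIntegral_congr_fun measurableSet_Ioi
        intro x hx
        have h0 : (0:ℝ) < x := lt_trans one_pos hx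
        have h0' : (x:ℂ) ≠ 0 := by exact_mod_cast h0.ne'
        have hp : psum 1 x = x - (Int.fract x : ℝ) := by
          simp only [psum, Pi.one_apply, sum_const, Nat.card_Icc, nsmul_eq_mul, mul_one, add_tsub_cancel_right]
          rw [← ofReal_sub, Int.self_sub_fract]
          have := natCast_floor_eq_intCast_floor (R := ℝ) h0.le
          exact_mod_cast congrArg (fun r : ℝ => (r:ℂ)) this
        simp only [hp]
        rw [sub_mul]
        congr 1
        rw [neg_add, cpow_add _ _ h0', cpow_neg_one]; field_simp
      · exact integrableOn_Ioi_cpow_of_lt (by simpa using hs) one_pos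
      · have hi : IntegrableOn (fun x : ℝ => (x:ℂ)^(-(s+1))) (Set.Ioi 1) :=
          integrableOn_Ioi_cpow_of_lt (by simp; linarith) one_pos
        exact Integrable.bdd_mul (c := 1) hi hfm.aestronglyMeasurable (by
          filter_upwards [ae_restrict_mem measurableSet_Ioi] with x hx using hfb x hx)
    have : s - 1 ≠ 0 := sub_ne_zero.mpr hs1
    rw [hz, hI]; field_simp

lemma L_growth_triv (s : ℂ) (hs : 1/4 ≤ s.re) :
    ‖LFunctionTrivChar₁ 1 s‖ ≤ 5 * (1+‖s‖)^2 := by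
  rw [zeta_eq_Imel s (by linarith)]
  have hfb : ∀ x : ℝ, 1 < x → ‖((Int.fract x : ℝ) : ℂ)‖ ≤ 1 := by
    intro x _
    rw [Complex.norm_real, Real.norm_of_nonneg (Int.fract_nonneg _)]; exact (Int.fract_lt_one x).le
  have h := Imel_bound hfb (show 0 < s.re by linarith)
  have h2 : 1/s.re ≤ 4 := by
    rw [div_le_iff₀ (by linarith)]; linarith
  have h3 := h.trans h2
  refine (norm_sub_le _ _).trans ?_
  rw [norm_mul, norm_mul]
  have h4 : ‖s-1‖ ≤ ‖s‖+1 := by simpa using norm_sub_le s 1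
  have : ‖s‖ * ‖s-1‖ * ‖Imel (fun x => ((Int.fract x : ℝ) : ℂ)) s‖ ≤ ‖s‖ * (‖s‖+1) * 4 := by
    gcongr
  nlinarith [norm_nonneg s]

lemma L_lower {M : ℕ} [NeZero M] (χ : DirichletCharacter ℂ M) (s : ℂ) (hs : 2 ≤ s.re) :
    1/4 ≤ ‖LFunction χ s‖ := by
  rw [LFunction_eq_LSeries χ (by linarith)]
  have hsum : LSeriesSummable (fun n => χ (n : ZMod M)) s := LSeriesSummable_of_one_lt_re χ (by linarith)
  have h1 : HasSum (fun n : ℕ => if n = 1 then (1:ℂ) else 0) 1 := by simpa using hasSum_ite_eq (1:ℕ) (1:ℂ)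
  have h1r : HasSum (fun n : ℕ => if n = 1 then (1:ℝ) else 0) 1 := by simpa using hasSum_ite_eq (1:ℕ) (1:ℝ)
  have hL := hsum.hasSum.sub h1
  have hb := hasSum_zeta_two.sub h1r
  have key := tsum_of_norm_bounded hb (f := fun n => LSeries.term (fun n => χ (n : ZMod M)) s n - (if n = 1 then (1:ℂ) else 0)) (by
    intro n
    rcases eq_or_ne n 0 with rfl | hn
    · simp
    rcases eq_or_ne n 1 with rfl | hn1
    · simp [LSeries.term]
    · simp only [hn1, if_false, sub_zero]
      rw [LSeries.norm_term_eq]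
      simp only [hn, if_false]
      have hn0 : (1:ℝ) ≤ n := by exact_mod_cast Nat.one_le_iff_ne_zero.mpr hn
      have e : (n:ℝ)^2 ≤ (n:ℝ)^s.re := by
        rw [← Real.rpow_natCast]; exact Real.rpow_le_rpow_of_exponent_le hn0 (by simpa using hs)
      have := χ.norm_le_one (n : ZMod M)
      gcongr)
  rw [hL.tsum_eq] at key
  have hn := norm_sub_norm_le (1:ℂ) (LSeries (fun n => χ (n : ZMod M)) s)
  rw [norm_sub_rev, norm_one] at hn
  have hpi : Real.pi^2 < 10 := by nlinarith [Real.pi_lt_d2, Real.pi_pos]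
  have key' : ‖LSeries (fun n => χ (n : ZMod M)) s - 1‖ ≤ Real.pi^2/6 - 1 := key
  linarith

structure Good (G : ℂ → ℂ) : Prop where
  diff : Differentiable ℂ G
  ne : ∀ z : ℂ, 1/2 < z.re → G z ≠ 0
  sym : ∀ h y : ℝ, 0 < h → h < 1/8 → ‖G (1/2 + I*y - h)‖ = ‖G (1/2 + I*y + h)‖
  ratio : ∀ h : ℝ, 0 < h → h < 1/8 → ∃ C : ℝ, ∃ A : ℕ, ∃ R : ℝ, 0 ≤ C ∧ ∀ z : ℂ, 0 < z.re → R ≤ ‖z‖ →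
    ‖G (1/2 + z - h)‖ ≤ C * (1+‖z‖)^A * ‖G (1/2 + z + h)‖

lemma one_add_mul_lower {ε : ℝ} (hε : 0 < ε) (hε1 : ε ≤ 1) {z : ℂ} (hz : 0 ≤ z.re) :
    1 ≤ ‖1 + ε*z‖ ∧ ε*(1+‖z‖) ≤ 2*‖1+ε*z‖ := by
  have e1 : (1 + ε*z).re = 1 + ε * z.re := by simp
  have e2 : (1 + ε*z).im = ε * z.im := by simp
  have h1 := abs_re_le_norm (1+ε*z)
  have h2 : ‖1+ε*z‖^2 = (1 + ε * z.re)^2 + (ε*z.im)^2 := by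
    rw [← normSq_eq_norm_sq, normSq_apply, e1, e2]; ring
  have h3 : ‖z‖^2 = z.re^2 + z.im^2 := by rw [← normSq_eq_norm_sq, normSq_apply]; ring
  have h1' : 1 ≤ ‖1+ε*z‖ := by
    refine le_trans ?_ h1
    rw [e1, abs_of_nonneg (by positivity)]; nlinarith
  refine ⟨h1', ?_⟩
  have : ε*‖z‖ ≤ ‖1+ε*z‖ := by
    apply le_of_sq_le_sq _ (norm_nonneg _)
    rw [h2, mul_pow, h3]
    nlinarith [mul_nonneg hε.le hz]
  nlinarith

lemma Good.le {G : ℂ → ℂ} (hG : Good G) {h : ℝ} (h0 : 0 < h) (h8 : h < 1/8) {z : ℂ} (hz : 0 ≤ z.re) :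
    ‖G (1/2 + z - h)‖ ≤ ‖G (1/2 + z + h)‖ := by
  obtain ⟨C, A, R, hC, hR⟩ := hG.ratio h h0 h8
  have hne : ∀ z : ℂ, 0 ≤ z.re → G (1/2 + z + h) ≠ 0 := by
    intro z hz
    apply hG.ne; simp; linarith
  have key : ∀ ε : ℝ, 0 < ε → ε ≤ 1 → ‖G (1/2 + z - h)‖ ≤ ‖1 + ε*z‖^A * ‖G (1/2 + z + h)‖ := by
    intro ε hε hε1
    set φ : ℂ → ℂ := fun z => G (1/2+z-h) / ((1+ε*z)^A * G (1/2+z+h)) with hφ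
    have hd := hG.diff
    have hφd : ∀ z : ℂ, 0 ≤ z.re → DifferentiableAt ℂ φ z := by
      intro z hz
      have hd1 : Differentiable ℂ (fun z : ℂ => G (1/2+z-h)) := hd.comp (by fun_prop)
      have hd2 : Differentiable ℂ (fun z : ℂ => (1+ε*z)^A * G (1/2+z+h)) :=
        Differentiable.mul (by fun_prop) (hd.comp (by fun_prop))
      refine (hd1 z).div (hd2 z) (mul_ne_zero (pow_ne_zero _ ?_) (hne z hz))
      have := (one_add_mul_lower hε hε1 hz).1
      intro h; rw [h] at this; simp at this; linarith
    have hbig : ∀ z : ℂ, 0 < z.re → R ≤ ‖z‖ → ‖φ z‖ ≤ C * (2/ε)^A := by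
      intro z hz hzR
      have h1 := hR z hz hzR
      have h2 := one_add_mul_lower hε hε1 hz.le
      have h3 : 0 < ‖G (1/2+z+h)‖ := norm_pos_iff.mpr (hne z hz.le)
      simp only [hφ, norm_div, norm_mul, norm_pow]
      rw [div_le_iff₀ (by have := h2.1; positivity)]
      refine h1.trans ?_
      have h4 : (1+‖z‖)^A ≤ (2/ε)^A * ‖1+ε*z‖^A := by
        rw [← mul_pow]
        apply pow_le_pow_left₀ (by positivity)
        rw [div_mul_eq_mul_div, le_div_iff₀ hε]; linarith [h2.2]
      calc C * (1+‖z‖)^A * ‖G (1/2 + z + h)‖ ≤ C * ((2/ε)^A * ‖1+ε*z‖^A) * ‖G (1/2 + z + h)‖ := by gcongr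
        _ = _ := by ring
    have hPL : ‖φ z‖ ≤ 1 := by
      apply PhragmenLindelof.right_half_plane_of_bounded_on_real (f := φ) (C := 1) _ _ _ _ hz
      · apply DifferentiableOn.diffContOnCl
        rw [closure_setOfPred_lt_re]
        exact fun z hz => (hφd z hz).differentiableWithinAt
      · refine ⟨0, by norm_num, 0, ?_⟩
        apply Asymptotics.IsBigO.of_bound (C * (2/ε)^A)
        have : ∀ᶠ z : ℂ in Bornology.cobounded ℂ, R ≤ ‖z‖ :=
          (tendsto_norm_cobounded_atTop (E := ℂ)).eventually (eventually_ge_atTop R)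
        filter_upwards [mem_inf_of_left this, mem_inf_of_right (mem_principal_self _)] with z h1 h2
        simpa using hbig z h2 h1
      · refine ⟨C * (2/ε)^A, ?_⟩
        simp only [eventually_map]
        filter_upwards [eventually_ge_atTop (max R 1)] with x hx
        have hx1 : 1 ≤ x := (le_max_right _ _).trans hx
        refine hbig x (by simpa using by linarith) ?_
        rw [norm_real, Real.norm_of_nonneg (by linarith)]
        exact (le_max_left _ _).trans hx
      · intro y
        simp only [hφ, norm_div, norm_mul, norm_pow]
        have h2 := (one_add_mul_lower hε hε1 (z := y*I) (by simp)).1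
        have h3 := hG.sym h y h0 h8
        rw [mul_comm I] at h3
        have h4 := norm_pos_iff.mpr (hne (y*I) (by simp))
        rw [h3, div_le_one (by positivity)]
        exact le_mul_of_one_le_left h4.le (one_le_pow₀ h2)
    have h2 := (one_add_mul_lower hε hε1 hz).1
    have h3 := norm_pos_iff.mpr (hne z hz)
    simp only [hφ, norm_div, norm_mul, norm_pow] at hPL
    rwa [div_le_one (by positivity)] at hPL
  have ht : Tendsto (fun ε : ℝ => ‖1 + ε*z‖^A * ‖G (1/2 + z + h)‖) (nhdsWithin 0 (Set.Ioi 0)) (nhds (‖G (1/2 + z + h)‖)) := by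
    have : Continuous (fun ε : ℝ => ‖1 + ε*z‖^A * ‖G (1/2 + z + h)‖) := by fun_prop
    have := (this.tendsto 0).mono_left (nhdsWithin_le_nhds (s := Set.Ioi 0))
    simpa using this
  refine ge_of_tendsto ht ?_
  filter_upwards [Ioo_mem_nhdsGT (show (0:ℝ) < 1 by norm_num)] with ε hε
  exact key ε hε.1 hε.2.le

lemma Good.pos {G : ℂ → ℂ} (hG : Good G) {s : ℂ} (hs : 1/2 < s.re) : 0 ≤ (logDeriv G s).re := by
  have hne := hG.ne s hs
  have hd : HasDerivAt (fun h : ℂ => G (s - h) / G (s + h)) (-2 * logDeriv G s) ((0:ℝ):ℂ) := by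
    have h1 : HasDerivAt (fun h : ℂ => G (s - h)) (-deriv G s) ((0:ℝ):ℂ) := by
      have : HasDerivAt G (deriv G s) (s - ((0:ℝ):ℂ)) := by simpa using (hG.diff s).hasDerivAt
      simpa using HasDerivAt.comp_const_sub s _ this
    have h2 : HasDerivAt (fun h : ℂ => G (s + h)) (deriv G s) ((0:ℝ):ℂ) := by
      have : HasDerivAt G (deriv G s) (s + ((0:ℝ):ℂ)) := by simpa using (hG.diff s).hasDerivAt
      exact HasDerivAt.comp_const_add s _ this
    have h3 := h1.div h2 (by simpa using hne)
    simp only [ofReal_zero, sub_zero, add_zero] at h3 ⊢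
    have e : -2 * logDeriv G s = (-deriv G s * G s - G s * deriv G s) / G s ^ 2 := by
      rw [logDeriv_apply]; field_simp; ring
    rw [e]; exact h3
  have hr := hd.real_of_complex
  have := hr.tendsto_slope_zero_right
  have hle : (-2 * logDeriv G s).re ≤ 0 := by
    refine le_of_tendsto this ?_
    filter_upwards [Ioo_mem_nhdsGT (show (0:ℝ) < 1/8 by norm_num)] with h hh
    have hle := hG.le hh.1 hh.2 (z := s - 1/2) (by simp; linarith)
    rw [show 1/2 + (s-1/2) - (h:ℂ) = s - h by ring, show 1/2 + (s-1/2) + (h:ℂ) = s + h by ring] at hle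
    have hq : (G (s - h) / G (s + h)).re ≤ 1 := by
      refine (re_le_norm _).trans ?_
      rw [norm_div]; exact div_le_one_of_le₀ hle (norm_nonneg _)
    have hinv : 0 ≤ h⁻¹ := inv_nonneg.mpr hh.1.le
    simp [hne]
    nlinarith
  simp at hle
  linarith

lemma Good.div {G : ℂ → ℂ} (hG : Good G) {γ : ℝ} (hγ : G (1/2 + I*γ) = 0) : Good (dslope G (1/2+I*γ)) := by
  set ρ : ℂ := 1/2 + I*γ with hρ
  have hρre : ρ.re = 1/2 := by simp [hρ]
  have hval : ∀ z, z ≠ ρ → dslope G ρ z = G z / (z - ρ) := by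
    intro z hz
    rw [dslope_of_ne _ hz, slope_def_field, hγ, sub_zero]
  have hner : ∀ z : ℂ, z.re ≠ 1/2 → z ≠ ρ := by rintro z hz rfl; exact hz hρre
  refine ⟨?_, ?_, ?_, ?_⟩
  · rw [← differentiableOn_univ]
    exact (differentiableOn_dslope univ_mem).mpr hG.diff.differentiableOn
  · intro z hz
    have := hner z hz.ne'
    rw [hval z this]
    exact div_ne_zero (hG.ne z hz) (sub_ne_zero.mpr this)
  · intro h y h0 h8
    rw [hval _ (hner _ (by simp; linarith)), hval _ (hner _ (by simp; linarith)), norm_div, norm_div,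
      hG.sym h y h0 h8]
    congr 1
    rw [Complex.norm_eq_sqrt_sq_add_sq, Complex.norm_eq_sqrt_sq_add_sq]
    simp [hρ]
  · intro h h0 h8
    obtain ⟨C, A, R, hC, hR⟩ := hG.ratio h h0 h8
    refine ⟨2*C, A, max R (|γ|+1), by positivity, fun z hz hzR => ?_⟩
    have h1 := hR z hz ((le_max_left _ _).trans hzR)
    have h2 := (le_max_right _ _).trans hzR
    have ea : 1/2 + z - h - ρ = (z - I*γ) - h := by rw [hρ]; ring
    have eb : 1/2 + z + h - ρ = (z - I*γ) + h := by rw [hρ]; ring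
    have hz1 : 1 ≤ ‖z - I*γ‖ := by
      have := norm_sub_norm_le z (I*γ)
      simp at this; linarith
    have hnh : ‖(h:ℂ)‖ = h := by rw [norm_real, Real.norm_of_nonneg h0.le]
    have ha : ‖z - I*γ‖ - h ≤ ‖(z - I*γ) - h‖ := by
      have := norm_sub_norm_le (z - I*γ) h; rwa [hnh] at this
    have hb : ‖(z - I*γ) + h‖ ≤ ‖z-I*γ‖ + h := by
      have := norm_add_le (z-I*γ) h; rwa [hnh] at this
    have hab : ‖(z - I*γ) + h‖ ≤ 2 * ‖(z - I*γ) - h‖ := by linarith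
    have ha0 : 0 < ‖(z - I*γ) - h‖ := by linarith
    have hb0 : 0 < ‖(z - I*γ) + h‖ := norm_pos_iff.mpr (by
      intro h; have := congrArg re h; simp at this; linarith)
    rw [hval _ (by intro h; rw [← sub_eq_zero, ea] at h; rw [h] at ha0; simp at ha0),
      hval _ (hner _ (by simp; linarith)), norm_div, norm_div, ea, eb]
    rw [div_le_iff₀ ha0]
    calc ‖G (1/2 + z - h)‖ ≤ C * (1+‖z‖)^A * ‖G (1/2 + z + h)‖ := h1
      _ = C * (1+‖z‖)^A * (‖G (1/2 + z + h)‖ / ‖(z - I*γ) + h‖) * ‖(z - I*γ) + h‖ := by field_simp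
      _ ≤ C * (1+‖z‖)^A * (‖G (1/2 + z + h)‖ / ‖(z - I*γ) + h‖) * (2 * ‖(z - I*γ) - h‖) := by gcongr
      _ = _ := by ring

lemma Good.finite_sum (S : Finset ℝ) : ∀ {G : ℂ → ℂ}, Good G → (∀ γ ∈ S, G (1/2+I*γ) = 0) →
    ∀ {s : ℂ}, 1/2 < s.re → ∑ γ ∈ S, ((s - (1/2 + I*γ))⁻¹).re ≤ (logDeriv G s).re := by
  induction S using Finset.induction_on with
  | empty => intro G hG _ s hs; simpa using hG.pos hs
  | insert γ S hγ ih =>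
    intro G hG hz s hs
    have hγ0 := hz γ (Finset.mem_insert_self _ _)
    have hD := hG.div hγ0
    have hne : ∀ s : ℂ, 1/2 < s.re → s ≠ 1/2 + I*γ := by
      rintro s hs rfl; simp at hs
    have h1 := ih hD (by
      intro γ' h'
      have hne : (1/2 + I*γ' : ℂ) ≠ 1/2 + I*γ := by
        intro h
        have := congrArg im h
        simp at this
        exact hγ (this ▸ h')
      rw [dslope_of_ne _ hne, slope_def_field, hγ0, hz γ' (Finset.mem_insert_of_mem h')]; simp) hs
    rw [Finset.sum_insert hγ]
    have heq : G =ᶠ[nhds s] fun z => (z - (1/2+I*γ)) * dslope G (1/2+I*γ) z := by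
      filter_upwards with z
      have := sub_smul_dslope G (1/2+I*γ) z
      rw [hγ0, sub_zero, smul_eq_mul] at this
      exact this.symm
    have hl : logDeriv G s = (s - (1/2+I*γ))⁻¹ + logDeriv (dslope G (1/2+I*γ)) s := by
      have : logDeriv G s = logDeriv (fun z => (z - (1/2+I*γ)) * dslope G (1/2+I*γ) z) s := by
        rw [logDeriv_apply, logDeriv_apply, heq.deriv_eq, heq.eq_of_nhds]
      rw [this, logDeriv_mul (f := fun z => z - (1/2+I*γ)) s (sub_ne_zero.mpr (hne s hs)) (hD.ne s hs) (by fun_prop) (hD.diff s)]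
      congr 1
      rw [logDeriv_apply]; simp
    rw [hl, add_re]; linarith

structure LData (M κ j : ℕ) (Lt G : ℂ → ℂ) : Prop where
  hM : 1 ≤ M
  hκ : κ ≤ 1
  hj : j ≤ 1
  Gd : Differentiable ℂ G
  Ld : Differentiable ℂ Lt
  growth : ∃ C : ℝ, 0 < C ∧ ∃ A : ℕ, ∀ s : ℂ, 1/4 ≤ s.re → ‖Lt s‖ ≤ C * (1+‖s‖)^A
  lower : ∃ c : ℝ, 0 < c ∧ ∀ s : ℂ, 2 ≤ s.re → c ≤ ‖Lt s‖
  ne : ∀ s : ℂ, 1/2 < s.re → Lt s ≠ 0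
  fac : ∀ s : ℂ, 0 < s.re → G s = (M:ℂ)^(s/2) * s^j * Gammaℝ (s+κ) * Lt s
  sym : ∃ e : ℝ, ∀ z : ℂ, 0 < z.re → z.re < 1 → ‖G (1 - (starRingEnd ℂ) z)‖ = e * ‖G z‖

lemma LData.ratio_bounds {M κ j : ℕ} {Lt G : ℂ → ℂ} (D : LData M κ j Lt G) {ε : ℝ} (hε : 0 < ε) :
    ∃ C' A' : ℝ, 0 < C' ∧ 0 ≤ A' ∧ ∀ s : ℂ, 1/2 + ε ≤ s.re →
      ‖logDeriv Lt s‖ ≤ C' * (1 + ‖s‖) ^ (1/2 : ℝ) ∧ 1 ≤ C' * (1 + ‖s‖) ^ A' * ‖Lt s‖ := by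
  obtain ⟨C, hC, A, hA⟩ := D.growth
  obtain ⟨c, hc, hl⟩ := D.lower
  exact _root_.growth (A := A) (Nat.cast_nonneg A) hC hc hε D.Ld.differentiableOn D.ne
    (fun s hs => by simpa [Real.rpow_natCast] using hA s (by linarith)) hl

lemma norm_Gammaℝ (s : ℂ) : ‖Gammaℝ s‖ = Real.pi ^ (-s.re/2) * ‖Gamma (s/2)‖ := by
  rw [Gammaℝ_def, norm_mul, norm_cpow_eq_rpow_re_of_pos Real.pi_pos]
  congr 2
  simp

lemma LData.G_ne {M κ j : ℕ} {Lt G : ℂ → ℂ} (D : LData M κ j Lt G) {z : ℂ} (hz : 1/2 < z.re) : G z ≠ 0 := by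
  have hM := D.hM
  rw [D.fac z (by linarith)]
  refine mul_ne_zero (mul_ne_zero (mul_ne_zero ?_ ?_) ?_) (D.ne z hz)
  · rw [Ne, cpow_eq_zero_iff]; simp; omega
  · apply pow_ne_zero; rintro rfl; simp at hz; linarith
  · apply Gammaℝ_ne_zero_of_re_pos; simp; positivity

lemma LData.good {M κ j : ℕ} {Lt G : ℂ → ℂ} (D : LData M κ j Lt G) : Good G := by
  have hM0 : (0:ℝ) < M := by exact_mod_cast D.hM
  refine ⟨D.Gd, fun z hz => D.G_ne hz, ?_, ?_⟩
  · intro h y h0 h8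
    obtain ⟨e, he⟩ := D.sym
    have h1 := he (1/2 + I*y + h) (by simp; linarith) (by simp; linarith)
    have h2 := he (1/2 + I*y - h) (by simp; linarith) (by simp; linarith)
    have e1 : 1 - (starRingEnd ℂ) (1/2 + I*y + h) = 1/2 + I*y - h := by
      apply Complex.ext <;> simp; ring
    have e2 : 1 - (starRingEnd ℂ) (1/2 + I*y - h) = 1/2 + I*y + h := by
      apply Complex.ext <;> simp; ring
    rw [e1] at h1; rw [e2] at h2
    have hp : 0 < ‖G (1/2 + I*y + h)‖ := norm_pos_iff.mpr (D.G_ne (by simp; linarith))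
    have hn := norm_nonneg (G (1/2 + I*y - h))
    rw [h1] at h2 hn
    have he0 : 0 ≤ e := by
      by_contra hh; push Not at hh; nlinarith
    have : e * e = 1 := by
      have : (e*e - 1) * ‖G (1/2 + I*y + h)‖ = 0 := by linear_combination -h2
      rcases mul_eq_zero.mp this with h | h
      · linarith
      · exact absurd h hp.ne'
    have he1 : e = 1 := by nlinarith
    rw [h1, he1, one_mul]
  · intro h h0 h8
    obtain ⟨C, hC, A, hA⟩ := D.growth
    obtain ⟨C', A', hC', hA', hb⟩ := D.ratio_bounds h0
    obtain ⟨Cg, hCg, hg⟩ := gamma_ratio (h := h) (σ := 3/16) h0 (by norm_num)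
    refine ⟨Real.pi^h * Cg * (C * 2^A) * (C' * 2^⌈A'⌉₊), A + ⌈A'⌉₊, 0, by positivity, ?_⟩
    intro z hz _
    set a : ℂ := 1/2 + z - h with ha
    set b : ℂ := 1/2 + z + h with hbdef
    have hare : a.re = 1/2 + z.re - h := by simp [ha]
    have hbre : b.re = 1/2 + z.re + h := by simp [hbdef]
    rw [D.fac a (by linarith), D.fac b (by linarith)]
    simp only [norm_mul, norm_pow]
    have nh : ‖(h:ℂ)‖ = h := by rw [norm_real, Real.norm_of_nonneg h0.le]
    have nhalf : ‖(1/2 : ℂ)‖ = 1/2 := by norm_num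
    have hna : 1 + ‖a‖ ≤ 2*(1+‖z‖) := by
      have := norm_sub_le (1/2+z) (h:ℂ)
      have h2 := norm_add_le (1/2) z
      rw [nh] at this; rw [nhalf] at h2
      linarith [norm_nonneg z]
    have hnb : 1 + ‖b‖ ≤ 2*(1+‖z‖) := by
      have := norm_add_le (1/2+z) (h:ℂ)
      have h2 := norm_add_le (1/2) z
      rw [nh] at this; rw [nhalf] at h2
      linarith [norm_nonneg z]
    have f1 : ‖(M:ℂ)^(a/2)‖ ≤ ‖(M:ℂ)^(b/2)‖ := by
      have e : (M:ℂ) = ((M:ℝ):ℂ) := by simp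
      rw [e, norm_cpow_eq_rpow_re_of_pos hM0, norm_cpow_eq_rpow_re_of_pos hM0]
      apply Real.rpow_le_rpow_of_exponent_le (by exact_mod_cast D.hM)
      simp; linarith
    have f2 : ‖a‖^j ≤ ‖b‖^j := by
      apply pow_le_pow_left₀ (norm_nonneg _)
      apply le_of_sq_le_sq _ (norm_nonneg _)
      rw [← normSq_eq_norm_sq, ← normSq_eq_norm_sq, normSq_apply, normSq_apply, hare, hbre]
      have : a.im = b.im := by simp [ha, hbdef]
      rw [this]; nlinarith
    have f3 : ‖Gammaℝ (a+κ)‖ ≤ Real.pi^h * Cg * ‖Gammaℝ (b+κ)‖ := by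
      rw [norm_Gammaℝ, norm_Gammaℝ]
      have := hg ((a+κ)/2) (by simp [hare]; have : (0:ℝ) ≤ κ := Nat.cast_nonneg _; linarith)
      rw [show (a+κ)/2 + h = (b+κ)/2 by rw [ha, hbdef]; ring] at this
      have e : Real.pi ^ (-(a+κ).re/2) = Real.pi^h * Real.pi ^ (-(b+κ).re/2) := by
        rw [← Real.rpow_add Real.pi_pos]; congr 1; simp [hare, hbre]; ring
      rw [e]
      calc _ ≤ Real.pi^h * Real.pi ^ (-(b+κ).re/2) * (Cg * ‖Gamma ((b+κ)/2)‖) := by gcongr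
        _ = _ := by ring
    have f4 : ‖Lt a‖ ≤ C * 2^A * (1+‖z‖)^A := by
      refine (hA a (by linarith)).trans ?_
      rw [mul_assoc, ← mul_pow]; gcongr
    have f5 : 1 ≤ C' * 2^⌈A'⌉₊ * (1+‖z‖)^⌈A'⌉₊ * ‖Lt b‖ := by
      refine (hb b (by linarith)).2.trans ?_
      rw [mul_assoc C' (2^⌈A'⌉₊), ← mul_pow]
      have : (1+‖b‖)^A' ≤ (2*(1+‖z‖))^⌈A'⌉₊ := by
        rw [← Real.rpow_natCast]
        calc (1+‖b‖)^A' ≤ (2*(1+‖z‖))^A' := by gcongr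
          _ ≤ _ := Real.rpow_le_rpow_of_exponent_le (by linarith [norm_nonneg z]) (Nat.le_ceil _)
      gcongr
    calc _ ≤ ‖(M:ℂ)^(b/2)‖ * ‖b‖^j * (Real.pi^h * Cg * ‖Gammaℝ (b+κ)‖) * (C * 2^A * (1+‖z‖)^A) := by
          gcongr
      _ ≤ ‖(M:ℂ)^(b/2)‖ * ‖b‖^j * (Real.pi^h * Cg * ‖Gammaℝ (b+κ)‖) * (C * 2^A * (1+‖z‖)^A) *
          (C' * 2^⌈A'⌉₊ * (1+‖z‖)^⌈A'⌉₊ * ‖Lt b‖) := le_mul_of_one_le_right (by positivity) f5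
      _ = _ := by rw [pow_add]; ring

lemma Gammaℝ_conj' (s : ℂ) : Gammaℝ ((starRingEnd ℂ) s) = (starRingEnd ℂ) (Gammaℝ s) := by
  rw [Gammaℝ_def, Gammaℝ_def, map_mul, ← Gamma_conj]
  have h : (Real.pi:ℂ) ^ ((starRingEnd ℂ) (-s/2)) = (starRingEnd ℂ) ((Real.pi:ℂ) ^ (-s/2)) := by
    rw [cpow_conj _ _ (by rw [arg_ofReal_of_nonneg Real.pi_pos.le]; exact Real.pi_pos.ne), conj_ofReal]
  rw [← h]; simp [show (starRingEnd ℂ) (2:ℂ) = 2 from Complex.conj_ofNat 2]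

lemma L_conj {M : ℕ} [NeZero M] {χ : DirichletCharacter ℂ M} (hχ : χ ≠ 1) (s : ℂ) (hs : 0 < s.re) :
    LFunction χ⁻¹ s = (starRingEnd ℂ) (LFunction χ ((starRingEnd ℂ) s)) := by
  have hχ' : χ⁻¹ ≠ 1 := by simpa using hχ
  revert s
  apply halfplane_identity (by norm_num) (differentiable_LFunction hχ').differentiableOn
  · intro s _
    apply DifferentiableAt.differentiableWithinAt
    have := (differentiable_LFunction hχ ((starRingEnd ℂ) s)).conj_conj
    simpa [Function.comp_def] using this
  · intro s hs
    rw [LFunction_eq_LSeries _ hs, LFunction_eq_LSeries _ (by simpa using hs), LSeries, LSeries, conj_tsum]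
    congr 1; ext n
    rcases eq_or_ne n 0 with rfl | hn
    · simp
    · rw [LSeries.term_of_ne_zero hn, LSeries.term_of_ne_zero hn, map_div₀,
        cpow_conj _ _ (by simp [Real.pi_pos.ne]), Complex.conj_conj, Complex.conj_natCast, ← MulChar.star_apply']
      rfl

lemma gammaFactor_eq {M : ℕ} [NeZero M] (χ : DirichletCharacter ℂ M) :
    ∃ κ : ℕ, κ ≤ 1 ∧ (∀ s, gammaFactor χ s = Gammaℝ (s+κ)) ∧ (∀ s, gammaFactor χ⁻¹ s = Gammaℝ (s+κ)) := by
  have hinv : χ⁻¹ (-1) = (starRingEnd ℂ) (χ (-1)) := by rw [← MulChar.star_apply']; rfl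
  rcases χ.even_or_odd with h | h
  · have h' : χ⁻¹.Even := by unfold DirichletCharacter.Even; rw [hinv, h]; simp
    exact ⟨0, by norm_num, fun s => by rw [h.gammaFactor_def]; simp, fun s => by rw [h'.gammaFactor_def]; simp⟩
  · have h' : χ⁻¹.Odd := by unfold DirichletCharacter.Odd; rw [hinv, h]; simp
    exact ⟨1, by norm_num, fun s => by rw [h.gammaFactor_def]; simp, fun s => by rw [h'.gammaFactor_def]; simp⟩

lemma completed_eq {M : ℕ} [NeZero M] (χ : DirichletCharacter ℂ M) {κ : ℕ}
    (h : ∀ s, gammaFactor χ s = Gammaℝ (s+κ)) (s : ℂ) (hs : 0 < s.re) :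
    completedLFunction χ s = Gammaℝ (s+κ) * LFunction χ s := by
  have hne : Gammaℝ (s+κ) ≠ 0 := Gammaℝ_ne_zero_of_re_pos (by simp; positivity)
  rw [LFunction_eq_completed_div_gammaFactor χ s (Or.inl (by rintro rfl; simp at hs)), h]
  field_simp

lemma ldata_nontriv {M : ℕ} [NeZero M] {χ : DirichletCharacter ℂ M} (hχ : χ.IsPrimitive) (hM : M ≠ 1)
    (hG : ∀ s : ℂ, 0 < s.re → s.re < 1 → LFunction χ s = 0 → s.re = 1 / 2) :
    ∃ κ : ℕ, LData M κ 0 (LFunction χ) (fun s => (M:ℂ)^(s/2) * completedLFunction χ s) := by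
  have hχ1 : χ ≠ 1 := by
    intro h
    rw [isPrimitive_def, h, conductor_one] at hχ
    exact hM hχ.symm
  have hM1 : 1 ≤ M := NeZero.one_le
  have hM0 : (0:ℝ) < M := by exact_mod_cast hM1
  have hMc : (M:ℂ) ≠ 0 := NeZero.ne _
  obtain ⟨κ, hκ, hg, hg'⟩ := gammaFactor_eq χ
  refine ⟨κ, hM1, hκ, by norm_num, ?_, differentiable_LFunction hχ1, ?_, ?_, ?_, ?_, ?_⟩
  · have := differentiable_completedLFunction hχ1
    have h2 : Differentiable ℂ (fun s : ℂ => (M:ℂ)^(s/2)) := fun s =>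
      DifferentiableAt.const_cpow (by fun_prop) (Or.inl hMc)
    exact h2.mul this
  · exact ⟨4*(M+1), by positivity, 1, fun s hs => by simpa using L_growth_nontriv hχ1 s hs⟩
  · exact ⟨1/4, by norm_num, fun s hs => L_lower χ s hs⟩
  · intro s hs h0
    by_cases h1 : s.re < 1
    · have := hG s (by linarith) h1 h0; linarith
    · exact LFunction_ne_zero_of_one_le_re χ (Or.inl hχ1) (not_lt.mp h1) h0
  · intro s hs
    rw [completed_eq χ hg s hs]; ring
  · refine ⟨‖rootNumber χ‖, fun z hz0 hz1 => ?_⟩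
    have h1 := IsPrimitive.completedLFunction_one_sub hχ ((starRingEnd ℂ) z)
    have h2 : ‖completedLFunction χ⁻¹ ((starRingEnd ℂ) z)‖ = ‖completedLFunction χ z‖ := by
      rw [completed_eq χ hg z hz0, completed_eq χ⁻¹ hg' _ (by simpa using hz0), L_conj hχ1 _ (by simpa using hz0)]
      have : (starRingEnd ℂ) z + κ = (starRingEnd ℂ) (z + κ) := by simp
      rw [this, Gammaℝ_conj']
      simp
    rw [h1]
    simp only [norm_mul, h2]
    have e : (M:ℂ) = ((M:ℝ):ℂ) := by simp
    rw [e, norm_cpow_eq_rpow_re_of_pos hM0, norm_cpow_eq_rpow_re_of_pos hM0, norm_cpow_eq_rpow_re_of_pos hM0]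
    have : (M:ℝ) ^ ((1 - (starRingEnd ℂ) z)/2).re * (M:ℝ)^((starRingEnd ℂ) z - 1/2).re = (M:ℝ)^(z/2).re := by
      rw [← Real.rpow_add hM0]; congr 1; simp; ring
    rw [← this]; ring

lemma ldata_triv 
    (hG : ∀ s : ℂ, 0 < s.re → s.re < 1 → riemannZeta s = 0 → s.re = 1 / 2) :
    LData 1 0 1 (LFunctionTrivChar₁ 1) (fun s => s*(s-1)*completedRiemannZeta₀ s + 1) := by
  have hLt : ∀ s : ℂ, s ≠ 1 → LFunctionTrivChar₁ 1 s = (s-1) * riemannZeta s := by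
    intro s hs
    rw [LFunctionTrivChar₁, Function.update_of_ne hs, LFunctionTrivChar, LFunction_modOne_eq]
  have hfac : ∀ s : ℂ, 0 < s.re → s*(s-1)*completedRiemannZeta₀ s + 1 = s * Gammaℝ s * LFunctionTrivChar₁ 1 s := by
    intro s hs
    have hs0 : s ≠ 0 := by rintro rfl; simp at hs
    rcases eq_or_ne s 1 with rfl | h1
    · simp [LFunctionTrivChar₁, Gammaℝ_one]
    · have hg : Gammaℝ s ≠ 0 := Gammaℝ_ne_zero_of_re_pos hs
      have h2 : 1 - s ≠ 0 := sub_ne_zero.mpr h1.symm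
      rw [hLt s h1, riemannZeta_def_of_ne_zero hs0, completedRiemannZeta_eq]
      field_simp
      ring
  have hconj : ∀ s : ℂ, LFunctionTrivChar₁ 1 ((starRingEnd ℂ) s) = (starRingEnd ℂ) (LFunctionTrivChar₁ 1 s) := by
    intro s
    rcases eq_or_ne s 1 with rfl | h1
    · simp [LFunctionTrivChar₁]
    · rw [hLt s h1, hLt _ (by intro h; apply h1; rw [← Complex.conj_conj s, h]; simp), riemannZeta_conj]; simp
  refine ⟨le_rfl, by norm_num, le_rfl, ?_, differentiable_LFunctionTrivChar₁ 1, ?_, ?_, ?_, ?_, ?_⟩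
  · have := differentiable_completedZeta₀
    fun_prop
  · exact ⟨5, by norm_num, 2, L_growth_triv⟩
  · refine ⟨1/4, by norm_num, fun s hs => ?_⟩
    rw [hLt s (by rintro rfl; simp at hs), norm_mul]
    have h1 := L_lower (1 : DirichletCharacter ℂ 1) s hs
    rw [LFunction_modOne_eq] at h1
    have h2 : 1 ≤ ‖s - 1‖ := by
      have := re_le_norm (s-1); simp at this; linarith
    nlinarith
  · intro s hs h0
    rcases eq_or_ne s 1 with rfl | hs1
    · exact LFunctionTrivChar₁_apply_one_ne_zero 1 h0
    rw [hLt s hs1] at h0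
    have h0 := (mul_eq_zero.mp h0).resolve_left (sub_ne_zero.mpr hs1)
    by_cases h1 : s.re < 1
    · have := hG s (by linarith) h1 h0; linarith
    · exact riemannZeta_ne_zero_of_one_le_re (not_lt.mp h1) h0
  · intro s hs
    rw [hfac s hs]; simp
  · refine ⟨1, fun z hz0 hz1 => ?_⟩
    have e : (1 - (starRingEnd ℂ) z) * (1 - (starRingEnd ℂ) z - 1) * completedRiemannZeta₀ (1 - (starRingEnd ℂ) z) + 1
      = (starRingEnd ℂ) z * ((starRingEnd ℂ) z - 1) * completedRiemannZeta₀ ((starRingEnd ℂ) z) + 1 := by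
      rw [completedRiemannZeta₀_one_sub]; ring
    rw [e, hfac z hz0, hfac _ (by simpa using hz0), Gammaℝ_conj', hconj]
    simp

lemma FK_integrable {F : ℂ → ℂ} {x L : ℝ} (hx : x ≠ 0) (hL : 0 < L) (hc : ContinuousOn F (Strip x x))
    (hd : Decays F (Strip x x) (1/2)) :
    Integrable (fun y : ℝ => F ((x : ℂ) + (y : ℂ) * I) * Ker L ((x : ℂ) + (y : ℂ) * I)) := by
  have hne : ∀ z ∈ Strip x x, z - 0 ≠ 0 := by
    intro z hz h
    have : z.re = x := le_antisymm hz.2 hz.1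
    rw [sub_zero] at h
    rw [h] at this; exact hx (by simpa using this.symm)
  have h1 := line_integrable (F := fun z => F z * Ker1 L z * (z - 0)⁻¹) (x₁ := x) (x₂ := x) (x := x)
    ((hc.mul (Ker1_diff L).continuous.continuousOn).mul ((by fun_prop : Continuous (fun z : ℂ => z - 0)).continuousOn.inv₀ hne))
    (Decays.mul (r := -(1/2)) (Decays.mul hd (Ker1_decays hL _ _) (by norm_num)) (decays_inv 0 _) (by norm_num)) le_rfl le_rfl
  refine h1.congr (Eventually.of_forall fun y => ?_)
  have hz : (x:ℂ) + y*I ∈ Strip x x := by simp [Strip]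
  have := hne _ hz
  rw [sub_zero] at this
  simp only
  rw [Ker_eq this, sub_zero, mul_assoc]

lemma log_add_le {x y : ℝ} (hx : 1 ≤ x) (hy : 0 ≤ y) : Real.log (x + y) ≤ Real.log x + Real.log (1+y) := by
  rw [← Real.log_mul (by linarith) (by linarith)]
  exact Real.log_le_log (by linarith) (by nlinarith)

lemma logDeriv_Gammaℝ {s : ℂ} (hs : 0 < s.re) :
    logDeriv Gammaℝ s = -(Real.log Real.pi : ℂ)/2 + digamma (s/2) / 2 := by
  have hpi : (Real.pi : ℂ) ≠ 0 := by exact_mod_cast Real.pi_ne_zero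
  have hG : HasDerivAt Gamma (deriv Gamma (s/2)) (s/2) := by
    apply DifferentiableAt.hasDerivAt
    apply differentiableAt_Gamma
    intro m h
    have := congrArg re h
    simp at this
    have : (0:ℝ) ≤ m := Nat.cast_nonneg m
    linarith
  have h1 : HasDerivAt (fun s : ℂ => Gamma (s/2)) (deriv Gamma (s/2) * (1/2)) s :=
    HasDerivAt.comp s hG ((hasDerivAt_id s).div_const 2)
  have h2 : HasDerivAt (fun s : ℂ => (Real.pi:ℂ)^(-s/2)) ((Real.pi:ℂ)^(-s/2) * Complex.log Real.pi * (-1/2)) s := by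
    have := HasDerivAt.const_cpow (c := (Real.pi:ℂ)) (((hasDerivAt_id s).neg).div_const 2) (Or.inl hpi)
    simpa using this
  have h3 := h2.mul h1
  have hne1 : Gamma (s/2) ≠ 0 := Gamma_ne_zero_of_re_pos (by simpa using hs)
  have hne2 : (Real.pi:ℂ)^(-s/2) ≠ 0 := by rw [Ne, cpow_eq_zero_iff]; simp [Real.pi_ne_zero]
  have e : Gammaℝ = ((fun s : ℂ => (Real.pi:ℂ)^(-s/2)) * fun s : ℂ => Gamma (s/2)) := by
    ext s; rw [Gammaℝ_def]; rfl
  rw [logDeriv_apply, e, h3.deriv, digamma_def, logDeriv_apply, ofReal_log Real.pi_pos.le]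
  simp only [Pi.mul_apply]
  field_simp

lemma LData.g_eq {M κ j : ℕ} {Lt G : ℂ → ℂ} (D : LData M κ j Lt G) {s : ℂ} (hs : 1/2 < s.re) :
    logDeriv G s = logDeriv Lt s + (Real.log M / 2 + j / s + logDeriv Gammaℝ (s+κ)) := by
  have hs0 : s ≠ 0 := by rintro rfl; simp at hs; linarith
  have hM0 : (M:ℂ) ≠ 0 := by have := D.hM; exact_mod_cast (by omega : M ≠ 0)
  have hκ : 0 < (s + κ).re := by simp; positivity
  have heq : G =ᶠ[nhds s] fun s => ((M:ℂ)^(s/2) * s^j) * Gammaℝ (s+κ) * Lt s := by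
    have : {z : ℂ | 0 < z.re} ∈ nhds s := (isOpen_lt continuous_const continuous_re).mem_nhds (by simp; linarith)
    filter_upwards [this] with z hz using D.fac z hz
  have e1 : logDeriv G s = logDeriv (fun s => ((M:ℂ)^(s/2) * s^j) * Gammaℝ (s+κ) * Lt s) s := by
    rw [logDeriv_apply, logDeriv_apply, heq.deriv_eq, heq.eq_of_nhds]
  have hΓd : DifferentiableAt ℂ (fun s : ℂ => Gammaℝ (s+κ)) s := by
    have h : DifferentiableAt ℂ Gammaℝ (s+κ) := by
      have := differentiable_Gammaℝ_inv (s+κ)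
      have hne : (Gammaℝ (s+κ))⁻¹ ≠ 0 := inv_ne_zero (Gammaℝ_ne_zero_of_re_pos hκ)
      have h2 := this.inv hne
      have e : (fun s => (Gammaℝ s)⁻¹)⁻¹ = Gammaℝ := by ext; simp
      rwa [e] at h2
    exact DifferentiableAt.comp (g := Gammaℝ) (f := fun s : ℂ => s + κ) s h (by fun_prop)
  have hMd : HasDerivAt (fun s : ℂ => (M:ℂ)^(s/2)) ((M:ℂ)^(s/2) * Complex.log M * (1/2)) s :=
    HasDerivAt.const_cpow ((hasDerivAt_id s).div_const 2) (Or.inl hM0)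
  have hMne : (M:ℂ)^(s/2) ≠ 0 := by rw [Ne, cpow_eq_zero_iff]; simp [hM0]
  have hΓne : Gammaℝ (s+κ) ≠ 0 := Gammaℝ_ne_zero_of_re_pos hκ
  have hpd : DifferentiableAt ℂ (fun s : ℂ => s^j) s := by fun_prop
  rw [e1, logDeriv_mul (f := fun s => ((M:ℂ)^(s/2) * s^j) * Gammaℝ (s+κ)) s (mul_ne_zero (mul_ne_zero hMne (pow_ne_zero _ hs0)) hΓne) (D.ne s hs)
    ((hMd.differentiableAt.mul hpd).mul hΓd) (D.Ld s),
    logDeriv_mul (f := fun s => ((M:ℂ)^(s/2) * s^j)) (g := fun s => Gammaℝ (s+κ)) s (mul_ne_zero hMne (pow_ne_zero _ hs0)) hΓne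
    (hMd.differentiableAt.mul hpd) hΓd,
    logDeriv_mul (f := fun s => (M:ℂ)^(s/2)) (g := fun s => s^j) s hMne (pow_ne_zero _ hs0) hMd.differentiableAt hpd]
  have a1 : logDeriv (fun s : ℂ => (M:ℂ)^(s/2)) s = Real.log M / 2 := by
    rw [logDeriv_apply, hMd.deriv, natCast_log]; field_simp
  have a2 : logDeriv (fun s : ℂ => s^j) s = j / s := by simp [logDeriv_pow]
  have a3 : logDeriv (fun s : ℂ => Gammaℝ (s+κ)) s = logDeriv Gammaℝ (s+κ) := by
    rw [logDeriv_apply, logDeriv_apply, deriv_comp_add_const]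
  rw [a1, a2, a3]; ring

lemma LData.g_bound {M κ j : ℕ} {Lt G : ℂ → ℂ} (D : LData M κ j Lt G) {s : ℂ} (hs : 1/2 < s.re) :
    ‖logDeriv G s - logDeriv Lt s‖ ≤ Real.log M + 24 * Real.log (2+‖s‖) := by
  have hκ : 0 < (s + κ).re := by simp; positivity
  have hκ1 : (κ:ℝ) ≤ 1 := by exact_mod_cast D.hκ
  have hκ0 : (0:ℝ) ≤ κ := Nat.cast_nonneg _
  have hj1 : (j:ℝ) ≤ 1 := by exact_mod_cast D.hj
  have hM1 : (1:ℝ) ≤ M := by exact_mod_cast D.hM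
  rw [D.g_eq hs, add_sub_cancel_left, logDeriv_Gammaℝ hκ]
  have hns : 1/2 < ‖s‖ := hs.trans_le (re_le_norm s)
  have hlM := Real.log_nonneg hM1
  have b1 : ‖(Real.log M / 2 : ℂ)‖ ≤ Real.log M := by
    rw [norm_div, norm_real, Real.norm_of_nonneg hlM]; simp; linarith
  have b2 : ‖(j / s : ℂ)‖ ≤ 2 := by
    rw [norm_div, norm_natCast, div_le_iff₀ (by linarith)]; linarith
  have hlp : 0 ≤ Real.log Real.pi := Real.log_nonneg (by linarith [Real.pi_gt_three])
  have b3 : ‖(-(Real.log Real.pi : ℂ)/2)‖ ≤ 3/2 := by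
    rw [norm_div, norm_neg, norm_real, Real.norm_of_nonneg hlp]
    have := Real.log_le_sub_one_of_pos Real.pi_pos
    have := Real.pi_lt_four
    simp; linarith
  have hl2 := Real.log_two_gt_d9
  have hlog2 : Real.log 2 ≤ Real.log (2+‖s‖) := Real.log_le_log (by norm_num) (by linarith)
  have b4 : ‖digamma ((s+κ)/2) / 2‖ ≤ 16 * Real.log (2+‖s‖) := by
    have h := digamma_bound (z := (s+κ)/2) (by simp; linarith)
    have h2 : ‖(s+κ)/2‖ ≤ ‖s‖ + 1 := by
      rw [norm_div]
      have := norm_add_le s (κ:ℂ)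
      rw [norm_natCast] at this
      simp; linarith
    have h3 : Real.log (2+‖(s+κ)/2‖) ≤ 2 * Real.log (2+‖s‖) := by
      rw [← Real.log_rpow (by linarith), Real.rpow_two]
      apply Real.log_le_log (by positivity)
      nlinarith
    rw [norm_div]; simp; linarith
  have t1 := norm_add_le (Real.log M / 2 + j / s : ℂ) (-(Real.log Real.pi : ℂ)/2 + digamma ((s+κ)/2) / 2)
  have t2 := norm_add_le (Real.log M / 2 : ℂ) (j / s)
  have t3 := norm_add_le (-(Real.log Real.pi : ℂ)/2) (digamma ((s+κ)/2) / 2)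
  linarith

def KK : ℝ := ∫ y : ℝ, (1+|y|)^(-(3/2) : ℝ)

lemma KK_int : Integrable (fun y : ℝ => (1+|y|)^(-(3/2) : ℝ)) := by
  have := integrable_one_add_norm (E := ℝ) (μ := volume) (r := 3/2) (by simp; norm_num)
  simpa using this

lemma poisson_log {b : ℝ} (hb : 0 < b) (hb2 : b ≤ 2) (y : ℝ) :
    b / (b^2+y^2) * Real.log (1+|y|) ≤ 16 * (1+|y|)^(-(3/2) : ℝ) := by
  have hy := abs_nonneg y
  have hl0 : 0 ≤ Real.log (1+|y|) := Real.log_nonneg (by linarith)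
  have hyy : y^2 = |y|^2 := (sq_abs y).symm
  by_cases h1 : |y| ≤ 1
  · have e1 : Real.log (1+|y|) ≤ |y| := by
      have := Real.log_le_sub_one_of_pos (show 0 < 1+|y| by linarith); linarith
    have e2 : b / (b^2+y^2) * |y| ≤ 1/2 := by
      rw [div_mul_eq_mul_div, div_le_iff₀ (by positivity), hyy]
      nlinarith [sq_nonneg (b-|y|)]
    have e3 : (1/4 : ℝ) ≤ (1+|y|)^(-(3/2) : ℝ) := by
      calc (1/4:ℝ) = 2^(-2:ℝ) := by norm_num
        _ ≤ 2^(-(3/2):ℝ) := Real.rpow_le_rpow_of_exponent_le (by norm_num) (by norm_num)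
        _ ≤ _ := Real.rpow_le_rpow_of_nonpos (by positivity) (by linarith) (by norm_num)
    have : b / (b^2+y^2) * Real.log (1+|y|) ≤ b / (b^2+y^2) * |y| := by gcongr
    linarith
  · push Not at h1
    have e1 : Real.log (1+|y|) ≤ 2 * (1+|y|)^(1/2:ℝ) := by
      have := Real.log_le_rpow_div (x := 1+|y|) (ε := 1/2) (by linarith) (by norm_num)
      linarith
    have e2 : b / (b^2+y^2) ≤ 8 * (1+|y|)^(-2:ℝ) := by
      rw [Real.rpow_neg (by linarith), Real.rpow_two, ← div_eq_mul_inv, div_le_div_iff₀ (by positivity) (by positivity), hyy]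
      nlinarith [sq_nonneg b]
    calc _ ≤ 8 * (1+|y|)^(-2:ℝ) * (2 * (1+|y|)^(1/2:ℝ)) := by gcongr
      _ = 16 * ((1+|y|)^(-2:ℝ) * (1+|y|)^(1/2:ℝ)) := by ring
      _ = _ := by rw [← Real.rpow_add (by linarith)]; norm_num

lemma s1_norm {b : ℝ} (hb : 0 < b) (t c : ℝ) (hc : 0 ≤ c) (y : ℝ) :
    ‖(1/2 + c + I*t + y*I : ℂ)‖ ≤ 1/2 + c + |t| + |y| := by
  have h1 := norm_add_le (1/2 + c + I*t : ℂ) (y*I)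
  have h2 := norm_add_le (1/2 + c : ℂ) (I*t)
  have h3 : ‖(1/2 + c : ℂ)‖ = 1/2 + c := by
    rw [show (1/2 + c : ℂ) = ((1/2 + c : ℝ) : ℂ) by push_cast; ring, norm_real, Real.norm_of_nonneg (by linarith)]
  simp at h1 h2
  simp at h3
  simp
  linarith

lemma LData.main {M κ j : ℕ} {Lt G : ℂ → ℂ} (D : LData M κ j Lt G) {b L t : ℝ} (hb : 0 < b) (hb2 : b ≤ 2)
    (hbL : b * L = 2) :
    (∀ {x : ℝ}, x ≠ 0 → -b ≤ x → Integrable (fun y : ℝ => logDeriv Lt (1/2 + 2*b + I*t + ((x:ℂ)+y*I)) * Ker L ((x:ℂ)+y*I))) ∧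
    (logDeriv G (1/2 + 2*b + I*t)).re ≤ 1000 * (1 + KK) * (Real.log M + Real.log (2+|t|)) +
      ‖VI (fun w => logDeriv Lt (1/2 + 2*b + I*t + w) * Ker L w) 1‖ / Real.pi := by
  have hL : 0 < L := by
    by_contra h; push Not at h; nlinarith
  set s₁ : ℂ := 1/2 + 2*b + I*t with hs₁
  have hs₁re : s₁.re = 1/2 + 2*b := by simp [hs₁]
  set F : ℂ → ℂ := fun w => logDeriv Lt (s₁ + w) with hF
  set H : ℂ → ℂ := fun w => logDeriv G (s₁ + w) with hH
  have hGood := D.good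
  have hre : ∀ w : ℂ, -b ≤ w.re → 1/2 + b ≤ (s₁ + w).re := by
    intro w hw; rw [add_re, hs₁re]; linarith
  have dlog : ∀ (f : ℂ → ℂ), Differentiable ℂ f → (∀ z : ℂ, 1/2 < z.re → f z ≠ 0) →
      DifferentiableOn ℂ (fun w => logDeriv f (s₁ + w)) {z | -b ≤ z.re} := by
    intro f hf hne w hw
    have hfd : Differentiable ℂ (deriv f) := hf.deriv
    have h1 : DifferentiableAt ℂ (logDeriv f) (s₁ + w) :=
      (hfd _).div (hf _) (hne _ (by have := hre w hw; linarith))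
    exact (h1.comp w (by fun_prop)).differentiableWithinAt
  have hFd := dlog Lt D.Ld D.ne
  have hHd := dlog G D.Gd hGood.ne
  obtain ⟨C', A', hC', hA', hb'⟩ := D.ratio_bounds hb
  have hone : ∀ w : ℂ, 1 + ‖s₁ + w‖ ≤ (2+‖s₁‖) * (1+‖w‖) := by
    intro w
    have := norm_add_le s₁ w
    nlinarith [norm_nonneg s₁, norm_nonneg w]
  have hFb : ∀ z : ℂ, -b ≤ z.re → ‖F z‖ ≤ C' * (2+‖s₁‖)^(1/2:ℝ) * (1 + ‖z‖) ^ (1/2 : ℝ) := by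
    intro z hz
    refine (hb' _ (hre z hz)).1.trans ?_
    rw [mul_assoc, ← Real.mul_rpow (by positivity) (by positivity)]
    have := hone z
    gcongr
  have hM1 : (1:ℝ) ≤ M := by exact_mod_cast D.hM
  have hlM := Real.log_nonneg hM1
  have hgb : ∀ z : ℂ, -b ≤ z.re → ‖H z - F z‖ ≤ Real.log M + 24 * Real.log (2+‖s₁+z‖) :=
    fun z hz => D.g_bound (by have := hre z hz; linarith)
  have hgb2 : ∀ z : ℂ, -b ≤ z.re → ‖H z - F z‖ ≤ (Real.log M + 48 * (3+‖s₁‖)^(1/2:ℝ)) * (1 + ‖z‖) ^ (1/2 : ℝ) := by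
    intro z hz
    refine (hgb z hz).trans ?_
    have h1 := Real.log_le_rpow_div (x := 2+‖s₁+z‖) (ε := 1/2) (by positivity) (by norm_num)
    have h2 : (2+‖s₁+z‖)^(1/2:ℝ) ≤ (3+‖s₁‖)^(1/2:ℝ) * (1 + ‖z‖) ^ (1/2 : ℝ) := by
      rw [← Real.mul_rpow (by positivity) (by positivity)]
      have := norm_add_le s₁ z
      gcongr
      nlinarith [norm_nonneg s₁, norm_nonneg z]
    have h3 : 1 ≤ (1 + ‖z‖) ^ (1/2 : ℝ) := Real.one_le_rpow (by linarith [norm_nonneg z]) (by norm_num)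
    nlinarith
  have hHb : ∀ z : ℂ, -b ≤ z.re → ‖H z‖ ≤ (C' * (2+‖s₁‖)^(1/2:ℝ) + (Real.log M + 48 * (3+‖s₁‖)^(1/2:ℝ))) * (1 + ‖z‖) ^ (1/2 : ℝ) := by
    intro z hz
    have h1 := hFb z hz
    have h2 := hgb2 z hz
    have h3 := norm_add_le (F z) (H z - F z)
    rw [add_sub_cancel] at h3
    linarith
  have hpos : ∀ z : ℂ, -b ≤ z.re → 0 ≤ (H z).re := fun z hz => hGood.pos (by have := hre z hz; linarith)
  have hint : ∀ (f : ℂ → ℂ) (C : ℝ), DifferentiableOn ℂ f {z | -b ≤ z.re} →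
      (∀ z : ℂ, -b ≤ z.re → ‖f z‖ ≤ C * (1 + ‖z‖) ^ (1/2 : ℝ)) → ∀ {x : ℝ}, x ≠ 0 → -b ≤ x →
      Integrable (fun y : ℝ => f ((x : ℂ) + (y : ℂ) * I) * Ker L ((x : ℂ) + (y : ℂ) * I)) := by
    intro f C hf hfb x hx0 hx
    exact FK_integrable hx0 hL (hf.continuousOn.mono fun z hz => hx.trans hz.1)
      ⟨C, 0, fun z hz _ => hfb z (hx.trans hz.1)⟩
  refine ⟨fun hx0 hx => hint F _ hFd hFb hx0 hx, ?_⟩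
  have hshift := VI_shift hb hL hFd hFb
  have hker := kernel_est hb hbL hHd hHb hpos
  have hJ : VI (fun w => (H w - F w) * Ker L w) (-b) = VI (fun w => H w * Ker L w) (-b) - VI (fun w => F w * Ker L w) (-b) := by
    rw [← VI_sub]
    · congr 1; ext w; ring
    · exact hint H _ hHd hHb (by linarith) le_rfl
    · exact hint F _ hFd hFb (by linarith) le_rfl
  have hlt : Real.log 2 ≤ Real.log (2+|t|) := Real.log_le_log (by norm_num) (by linarith [abs_nonneg t])
  have hl2 := Real.log_two_gt_d9
  have hlog5 : Real.log (7+|t|) ≤ 3 * Real.log (2+|t|) := by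
    rw [show (3:ℝ) = ((3:ℕ):ℝ) by norm_num, ← Real.log_pow]
    have := abs_nonneg t
    apply Real.log_le_log (by linarith)
    nlinarith [mul_nonneg this this, mul_nonneg (mul_nonneg this this) this]
  set Q : ℝ := Real.log M + Real.log (2+|t|) with hQ
  have hQ1 : Real.log 2 ≤ Q := by linarith
  -- bound of J_g
  have hJb : ‖VI (fun w => (H w - F w) * Ker L w) (-b)‖ ≤ 72 * Q * Real.pi + 384 * KK := by
    have hi : Integrable (fun y : ℝ => 72 * Q * (b/(b^2+y^2)) + 384 * (1+|y|)^(-(3/2):ℝ)) :=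
      ((integrable_poisson hb).const_mul _).add (KK_int.const_mul _)
    have := norm_integral_le_of_norm_le (f := fun y : ℝ => (H (((-b:ℝ):ℂ) + y*I) - F (((-b:ℝ):ℂ) + y*I)) * Ker L (((-b:ℝ):ℂ) + y*I)) hi (by
      filter_upwards with y
      have hre' : ((((-b:ℝ):ℂ) + y*I)).re = -b := by simp
      have h1 := hgb (((-b:ℝ):ℂ) + y*I) (by rw [hre'])
      have h2 := Ker_norm_le hL (w := ((-b:ℝ):ℂ) + y*I) (by rw [hre']; linarith)
      rw [line_sq] at h2
      have h3 : 2 / ((b^2+y^2) * L) = b/(b^2+y^2) := by rw [← hbL]; field_simp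
      rw [h3] at h2
      have h4 : ‖s₁ + (((-b:ℝ):ℂ) + y*I)‖ ≤ 1/2 + b + |t| + |y| := by
        have := s1_norm hb t b hb.le y
        convert this using 2
        rw [hs₁]; push_cast; ring
      have h5 : Real.log (2 + ‖s₁ + (((-b:ℝ):ℂ) + y*I)‖) ≤ Real.log (7+|t|) + Real.log (1+|y|) := by
        refine le_trans (Real.log_le_log (by positivity) ?_) (log_add_le (x := 7+|t|) (y := |y|) (by linarith [abs_nonneg t]) (abs_nonneg y))
        linarith
      have h6 : ‖H (((-b:ℝ):ℂ) + y*I) - F (((-b:ℝ):ℂ) + y*I)‖ ≤ 72 * Q + 24 * Real.log (1+|y|) := by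
        linarith
      rw [norm_mul]
      have h7 := poisson_log hb hb2 y
      have h8 : 0 ≤ Real.log (1+|y|) := Real.log_nonneg (by linarith [abs_nonneg y])
      have hpos0 : 0 ≤ 72 * Q + 24 * Real.log (1+|y|) := le_trans (norm_nonneg _) h6
      calc _ ≤ (72 * Q + 24 * Real.log (1+|y|)) * (b/(b^2+y^2)) := by
            exact mul_le_mul h6 h2 (norm_nonneg _) hpos0
        _ ≤ _ := by linarith)
    refine this.trans (le_of_eq ?_)
    rw [integral_add ((integrable_poisson hb).const_mul _) (KK_int.const_mul _), integral_const_mul,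
      integral_const_mul, integral_poisson hb, KK]
  have hg0 : ‖H 0 - F 0‖ ≤ 72 * Q := by
    have h1 := hgb 0 (by simpa using hb.le)
    have h4 : ‖s₁ + 0‖ ≤ 1/2 + 2*b + |t| := by
      have := s1_norm hb t (2*b) (by linarith) 0
      simp at this
      simpa [hs₁] using this
    have h5 : Real.log (2 + ‖s₁ + 0‖) ≤ Real.log (7+|t|) := Real.log_le_log (by positivity) (by linarith)
    linarith
  set V := VI (fun w => F w * Ker L w) 1 with hV
  have hpi := Real.pi_pos
  have hpi3 := Real.pi_gt_three
  have eq1 : 2 * Real.pi * H 0 = 2*Real.pi * (H 0 - F 0) + V - VI (fun w => H w * Ker L w) (-b) + VI (fun w => (H w - F w) * Ker L w) (-b) := by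
    rw [hJ]; linear_combination -hshift
  have hn : ‖2 * Real.pi * H 0‖ ≤ 2 * Real.pi * (72*Q) + ‖V‖ + Real.pi * (H 0).re + (72 * Q * Real.pi + 384 * KK) := by
    rw [eq1]
    refine (norm_add_le _ _).trans (add_le_add ((norm_sub_le _ _).trans (add_le_add ((norm_add_le _ _).trans (add_le_add ?_ le_rfl)) hker)) hJb)
    rw [norm_mul]
    have : ‖(2 * Real.pi : ℂ)‖ = 2*Real.pi := by simp [abs_of_pos hpi]
    rw [this]; gcongr
  have hn2 : 2 * Real.pi * (H 0).re ≤ ‖2 * Real.pi * H 0‖ := by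
    rw [norm_mul]
    have : ‖(2 * Real.pi : ℂ)‖ = 2*Real.pi := by simp [abs_of_pos hpi]
    rw [this]
    have := re_le_norm (H 0)
    gcongr
  have hKK : 0 ≤ KK := integral_nonneg fun y => by positivity
  have hH0 : H 0 = logDeriv G s₁ := by simp [hH]
  rw [← hH0]
  have hfin : Real.pi * (H 0).re ≤ Real.pi * (1000 * (1+KK) * Q) + ‖V‖ := by
    have hk : 384 * KK ≤ Real.pi * (700 * KK * Q) := by
      have : 1 ≤ Real.pi * Q := by nlinarith
      nlinarith [mul_nonneg hKK (show 0 ≤ Real.pi * Q - 1 by linarith)]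
    have hpq : 0 ≤ Real.pi * Q := by nlinarith
    nlinarith [mul_nonneg hKK hpq]
  have : (H 0).re ≤ (Real.pi * (1000 * (1+KK) * Q) + ‖V‖)/Real.pi := by
    rw [le_div_iff₀ hpi]; linarith
  refine this.trans (le_of_eq ?_)
  field_simp

lemma Wt_eq_wX {X : ℝ} (hX : 4 ≤ X) {n : ℕ} (hn : 1 ≤ n) (hn2 : (n:ℝ) ≤ X^2) : Wt (Real.log X) n = wX X n := by
  have hX0 : 0 < X := by linarith
  have hL : 0 < Real.log X := Real.log_pos (by linarith)
  have hn0 : (0:ℝ) < n := by exact_mod_cast hn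
  have h2 : Real.log n ≤ 2 * Real.log X := by
    have := Real.log_le_log hn0 hn2
    rwa [Real.log_pow] at this
  rw [Wt, wX, max_eq_left (by linarith)]
  split_ifs with h
  · have := Real.log_le_log hn0 h
    rw [max_eq_left (by linarith)]
    field_simp; ring
  · have := Real.log_le_log hX0 (not_le.mp h).le
    rw [max_eq_right (by linarith), Real.log_div (by positivity) hn0.ne', Real.log_pow]
    push_cast; ring

lemma Wt_eq_zero {X : ℝ} (hX : 4 ≤ X) {n : ℕ} (hn2 : X^2 < (n:ℝ)) : Wt (Real.log X) n = 0 := by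
  have hX0 : 0 < X := by linarith
  have hL : 0 < Real.log X := Real.log_pos (by linarith)
  have h2 : 2 * Real.log X ≤ Real.log n := by
    have := Real.log_le_log (by positivity) hn2.le
    rwa [Real.log_pow] at this
  rw [Wt, max_eq_right (by linarith), max_eq_right (by linarith)]
  simp

lemma tsum_Wt {M : ℕ} (χ : DirichletCharacter ℂ M) {X : ℝ} (hX : 4 ≤ X) (t : ℝ) :
    ∑' n, LSeries.term ((fun n : ℕ => χ (n : ZMod M)) * fun n : ℕ => (ArithmeticFunction.vonMangoldt n : ℂ))
      ((sigma1 X : ℂ) + I * t) n * Wt (Real.log X) n =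
    ∑ m ∈ Finset.Icc 1 ⌊X ^ 2⌋₊,
      (LambdaX X m : ℂ) * χ (m : ZMod M) * (m : ℂ) ^ (-(sigma1 X : ℂ) - I * t) := by
  rw [tsum_eq_sum (s := Finset.Icc 1 ⌊X^2⌋₊)]
  · refine Finset.sum_congr rfl fun n hn => ?_
    rw [Finset.mem_Icc] at hn
    have h2 : (n:ℝ) ≤ X^2 := (Nat.le_floor_iff (by positivity)).mp hn.2
    rw [Wt_eq_wX hX hn.1 h2, LSeries.term_of_ne_zero (by omega), LambdaX, ← neg_add', cpow_neg]
    simp only [Pi.mul_apply]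
    push_cast
    rw [div_eq_mul_inv]; ring
  · intro n hn
    rcases Nat.eq_zero_or_pos n with rfl | h
    · simp
    · rw [Finset.mem_Icc, not_and] at hn
      have := hn h
      rw [Nat.le_floor_iff (by positivity), not_le] at this
      rw [Wt_eq_zero hX this]; simp

lemma logDeriv_LFunction_eq {M : ℕ} [NeZero M] (χ : DirichletCharacter ℂ M) {s : ℂ} (hs : 1 < s.re) :
    logDeriv (LFunction χ) s = -LSeries ((fun n : ℕ => χ (n : ZMod M)) * fun n : ℕ => (ArithmeticFunction.vonMangoldt n : ℂ)) s := by
  have h := LSeries_twist_vonMangoldt_eq χ hs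
  rw [logDeriv_apply, deriv_LFunction_eq_deriv_LSeries χ hs, LFunction_eq_LSeries χ hs]
  rw [h]; ring

lemma VI_congr {F G : ℂ → ℂ} {x : ℝ} (h : ∀ z : ℂ, z.re = x → F z = G z) : VI F x = VI G x := by
  unfold VI
  refine integral_congr_ae (Eventually.of_forall fun y => ?_)
  exact h _ (by simp)

lemma VI_D {M : ℕ} [NeZero M] (χ : DirichletCharacter ℂ M) {X : ℝ} (hX : 4 ≤ X) (t : ℝ) :
    VI (fun w => logDeriv (LFunction χ) ((sigma1 X : ℂ) + I * t + w) * Ker (Real.log X) w) 1 =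
    -(2 * Real.pi * ∑ m ∈ Finset.Icc 1 ⌊X ^ 2⌋₊,
      (LambdaX X m : ℂ) * χ (m : ZMod M) * (m : ℂ) ^ (-(sigma1 X : ℂ) - I * t)) := by
  have hL : 0 < Real.log X := Real.log_pos (by linarith)
  have hs : (0:ℝ) < sigma1 X := by unfold sigma1; positivity
  rw [← tsum_Wt χ hX, ← VI_series hL]
  · rw [VI, VI, ← integral_neg]
    refine integral_congr_ae (Eventually.of_forall fun y => ?_)
    simp only
    rw [logDeriv_LFunction_eq χ (by simpa using hs)]
    ring
  · exact LSeriesSummable_twist_vonMangoldt χ (by simpa using hs)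

lemma norm_VI_triv {X t : ℝ} (hX : 4 ≤ X) (hXt : X ≤ t^2)
    (hint : Integrable (fun y : ℝ => logDeriv (LFunctionTrivChar₁ 1) ((sigma1 X : ℂ) + I * t + (((1:ℝ):ℂ) + y * I)) * Ker (Real.log X) (((1:ℝ):ℂ) + y * I)))
    (χ : DirichletCharacter ℂ 1) :
    ‖VI (fun w => logDeriv (LFunctionTrivChar₁ 1) ((sigma1 X : ℂ) + I * t + w) * Ker (Real.log X) w) 1‖ ≤
    2 * Real.pi * ‖∑ m ∈ Finset.Icc 1 ⌊X ^ 2⌋₊,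
      (LambdaX X m : ℂ) * χ (m : ZMod 1) * (m : ℂ) ^ (-(sigma1 X : ℂ) - I * t)‖ + 5 * Real.pi := by
  obtain rfl : χ = 1 := Subsingleton.elim _ _
  have hl4 : 1 ≤ Real.log 4 := by
    rw [show (4:ℝ) = 2^2 by norm_num, Real.log_pow]
    have := Real.log_two_gt_d9
    push_cast; linarith
  have hL1 : 1 ≤ Real.log X := hl4.trans (Real.log_le_log (by norm_num) hX)
  have hL : 0 < Real.log X := by linarith
  have hs : (1/2:ℝ) < sigma1 X := by unfold sigma1; have : 0 < 4 / Real.log X := by positivity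
                                     linarith
  have ht : 2 ≤ |t| := by
    rw [← abs_of_pos (by norm_num : (0:ℝ) < 2)]
    apply sq_le_sq.mp; linarith
  set s₁ : ℂ := (sigma1 X : ℂ) + I * t with hs₁
  have hs₁re : s₁.re = sigma1 X := by simp [hs₁]
  set p : ℂ := 1 - s₁ with hp
  have hpre : p.re ≤ 1/2 := by simp [hp, hs₁]; linarith
  have hpim : |t| ≤ ‖p‖ := by
    have := abs_im_le_norm p
    simpa [hp, hs₁] using this
  have hp0 : p ≠ 0 := by
    intro h; rw [h] at hpim; simp at hpim; rw [hpim] at ht; simp at ht; linarith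
  have hld : ∀ w : ℂ, w.re = 1 → logDeriv (LFunctionTrivChar₁ 1) (s₁ + w) = (w - p)⁻¹ + logDeriv (LFunction (1 : DirichletCharacter ℂ 1)) (s₁ + w) := by
    intro w hw
    have hre : 1 < (s₁ + w).re := by rw [add_re, hs₁re, hw]; linarith
    have hne : s₁ + w ≠ 1 := by intro h; rw [h] at hre; simp at hre
    have heq : LFunctionTrivChar₁ 1 =ᶠ[nhds (s₁+w)] fun s => (s - 1) * LFunction (1 : DirichletCharacter ℂ 1) s := by
      filter_upwards [isOpen_ne.mem_nhds hne] with z hz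
      simp [LFunctionTrivChar₁, Function.update_of_ne hz, LFunctionTrivChar]
    have e1 : logDeriv (LFunctionTrivChar₁ 1) (s₁+w) = logDeriv (fun s => (s - 1) * LFunction (1 : DirichletCharacter ℂ 1) s) (s₁+w) := by
      rw [logDeriv_apply, logDeriv_apply, heq.deriv_eq, heq.eq_of_nhds]
    rw [e1, logDeriv_mul (f := fun s => s - 1) (s₁+w) (sub_ne_zero.mpr hne)
      (LFunction_ne_zero_of_one_le_re _ (Or.inr hne) hre.le) (by fun_prop)
      (differentiableAt_LFunction _ _ (Or.inl hne))]
    congr 1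
    rw [logDeriv_apply, hp]
    have e2 : w - (1 - s₁) = s₁ + w - 1 := by ring
    rw [e2]; simp
  have hint2 : Integrable (fun y : ℝ => (fun w => (w - p)⁻¹) (((1:ℝ):ℂ) + y * I) * Ker (Real.log X) (((1:ℝ):ℂ) + y * I)) := by
    refine FK_integrable (F := fun w => (w-p)⁻¹) one_ne_zero hL ?_ ((decays_inv p _).mono_exp (by norm_num))
    refine (by fun_prop : Continuous (fun z : ℂ => z - p)).continuousOn.inv₀ ?_
    intro z hz h
    have h1 : z.re = 1 := le_antisymm hz.2 hz.1
    rw [sub_eq_zero.mp h] at h1; linarith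
  have hsub := VI_sub (F := fun w => logDeriv (LFunctionTrivChar₁ 1) (s₁ + w) * Ker (Real.log X) w)
    (G := fun w => (w - p)⁻¹ * Ker (Real.log X) w) (x := 1) hint hint2
  rw [VI_pole hL hp0 (by linarith), VI_congr (G := fun w => logDeriv (LFunction (1 : DirichletCharacter ℂ 1)) (s₁ + w) * Ker (Real.log X) w)
    (by intro z hz; rw [hld z hz]; ring), VI_D 1 hX t] at hsub
  have hfin := eq_add_of_sub_eq hsub.symm
  rw [hfin]
  have hpi := Real.pi_pos
  have hn2 : ‖(2 * Real.pi : ℂ)‖ = 2*Real.pi := by simp [abs_of_pos hpi]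
  refine (norm_add_le _ _).trans (add_le_add ?_ ?_)
  · rw [norm_neg, norm_mul, hn2]
  · rw [norm_mul, hn2]
    have hp2 : 2 ≤ ‖p‖ := ht.trans hpim
    have k1 : ‖p⁻¹‖ ≤ 1/2 := by
      rw [norm_inv, inv_le_comm₀ (by linarith) (by norm_num)]; linarith
    have k2 : ‖Ker (Real.log X) p‖ ≤ 2 := by
      rw [Ker, norm_div, norm_mul, norm_pow, norm_real, Real.norm_of_nonneg hL.le, div_le_iff₀ (by positivity)]
      have a1 := norm_exp_real_mul_le (L := 2 * Real.log X) (by positivity) hpre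
      have a2 := norm_exp_real_mul_le (L := Real.log X) (by positivity) hpre
      rw [show 2 * Real.log X * (1/2) = Real.log X by ring, Real.exp_log (by linarith)] at a1
      have a3 : Real.exp (Real.log X * (1/2)) ≤ X := by
        conv_rhs => rw [← Real.exp_log (by linarith : 0 < X)]
        apply Real.exp_le_exp.mpr; linarith
      push_cast at a1
      have a4 : t^2 ≤ ‖p‖^2 := by rw [← sq_abs]; gcongr
      have := norm_sub_le (cexp (2 * Real.log X * p)) (cexp (Real.log X * p))
      have a5 : t^2 * 1 ≤ ‖p‖^2 * Real.log X := by gcongr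
      linarith
    have := norm_sub_le (Ker (Real.log X) p) p⁻¹
    nlinarith

lemma zero_sum {M κ j : ℕ} {Lt G : ℂ → ℂ} (D : LData M κ j Lt G) {t X : ℝ} (hX : 4 ≤ X)
    (S : Finset ℝ) (hS : ∀ γ ∈ S, Lt (1/2 + I*γ) = 0) :
    (∀ {x:ℝ}, x ≠ 0 → 0 ≤ x → Integrable (fun y:ℝ => logDeriv Lt ((sigma1 X : ℂ) + I*t+((x:ℂ)+y*I)) * Ker (Real.log X) ((x:ℂ)+y*I))) ∧
    ∑ γ ∈ S, (sigma1 X - 1 / 2) / ((sigma1 X - 1 / 2) ^ 2 + (t - γ) ^ 2) ≤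
      1000*(1+KK)*(Real.log M + Real.log (2+|t|)) +
      ‖VI (fun w => logDeriv Lt ((sigma1 X : ℂ) + I * t + w) * Ker (Real.log X) w) 1‖ / Real.pi := by
  have hl4 : 1 ≤ Real.log 4 := by
    rw [show (4:ℝ) = 2^2 by norm_num, Real.log_pow]
    have := Real.log_two_gt_d9
    push_cast; linarith
  have hL1 : 1 ≤ Real.log X := hl4.trans (Real.log_le_log (by norm_num) hX)
  have hL : 0 < Real.log X := by linarith
  set b : ℝ := 2 / Real.log X with hb
  have hb0 : 0 < b := by positivity
  have hb2 : b ≤ 2 := by rw [hb, div_le_iff₀ hL]; linarith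
  have hs : (1/2 + 2*b + I*t : ℂ) = (sigma1 X : ℂ) + I * t := by
    rw [hb, sigma1]; push_cast; ring
  have hm := D.main (t := t) hb0 hb2 (by rw [hb]; field_simp : b * Real.log X = 2)
  rw [hs] at hm
  refine ⟨fun hx hx0 => hm.1 hx (by linarith), ?_⟩
  refine le_trans ?_ hm.2
  have ha : (0:ℝ) < sigma1 X - 1/2 := by unfold sigma1; have : 0 < 4 / Real.log X := by positivity
                                         linarith
  have := Good.finite_sum S D.good (fun γ hγ => by
    rw [D.fac _ (by simp), hS γ hγ, mul_zero]) (s := (sigma1 X : ℂ) + I * t) (by simp; linarith)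
  refine le_trans (le_of_eq (Finset.sum_congr rfl fun γ _ => ?_)) this
  rw [inv_re, normSq_apply]
  simp
  ring

lemma sum_to_tsum {P : ℝ → Prop} {f : ℝ → ℝ} {B : ℝ} (hf : ∀ x, 0 ≤ f x)
    (h : ∀ S : Finset ℝ, (∀ γ ∈ S, P γ) → ∑ γ ∈ S, f γ ≤ B) :
    Summable (fun x : {x : ℝ // P x} => f x) ∧ ∑' x : {x : ℝ // P x}, f x ≤ B := by
  have h' : ∀ S : Finset {x : ℝ // P x}, ∑ x ∈ S, f x ≤ B := by
    intro S
    have := h (S.map ⟨Subtype.val, Subtype.val_injective⟩) (by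
      intro γ hγ
      obtain ⟨x, _, rfl⟩ := Finset.mem_map.mp hγ
      exact x.2)
    rwa [Finset.sum_map] at this
  exact ⟨summable_of_sum_le (fun x => hf x) h', Real.tsum_le_of_sum_le (fun x => hf x) h'⟩

lemma KK_nonneg : 0 ≤ KK := integral_nonneg fun y => by positivity

lemma final_arith {M : ℕ} (hM : 1 ≤ M) {t D A S : ℝ} (ht : 2 ≤ |t|) (hD : 0 ≤ D) (hA : 0 ≤ A)
    (h : S ≤ A * (Real.log M + Real.log (2+|t|)) + (2 * D + 5)) :
    S ≤ (2 * A + 7) * (D + Real.log (M * (1 + |t|))) := by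
  have hM1 : (1:ℝ) ≤ M := by exact_mod_cast hM
  have hlM := Real.log_nonneg hM1
  rw [Real.log_mul (by linarith) (by linarith)]
  have h1 : Real.log (2+|t|) ≤ 2 * Real.log (1+|t|) := by
    rw [← Real.log_rpow (by linarith), Real.rpow_two]
    exact Real.log_le_log (by linarith) (by nlinarith)
  have h2 : 1 ≤ Real.log (1+|t|) := by
    rw [Real.le_log_iff_exp_le (by linarith)]
    have := Real.exp_one_lt_d9
    linarith
  have h3 : A * (Real.log M + Real.log (2+|t|)) ≤ A * (2 * (Real.log M + Real.log (1+|t|))) := by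
    gcongr; linarith
  nlinarith [mul_nonneg hA hD]

/-- **Equation (2.2)**: under GRH for `L(s,χ)`, the sum over ordinates `γ_χ` of the
nontrivial zeros of `L(s,χ)` of `(σ₁-1/2)/((σ₁-1/2)² + (t-γ_χ)²)` converges and is
`O(E_χ(X,t))`, with an absolute implied constant. -/
theorem sum_over_zeros_of_L_bound :
    ∃ C > (0 : ℝ), ∀ (M : ℕ) [NeZero M] (χ : DirichletCharacter ℂ M), χ.IsPrimitive →
      GRHchar χ →
      ∀ t : ℝ, ∀ X : ℝ, 4 ≤ X → X ≤ t ^ 2 →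
      Summable (fun x : {x : ℝ // LFunction χ (1 / 2 + I * x) = 0} =>
        (sigma1 X - 1 / 2) / ((sigma1 X - 1 / 2) ^ 2 + (t - (x : ℝ)) ^ 2)) ∧
      (∑' x : {x : ℝ // LFunction χ (1 / 2 + I * x) = 0},
          (sigma1 X - 1 / 2) / ((sigma1 X - 1 / 2) ^ 2 + (t - (x : ℝ)) ^ 2))
        ≤ C * EchiT χ X t := by
  have hK := KK_nonneg
  refine ⟨2 * (1000 * (1 + KK)) + 7, by positivity, ?_⟩
  intro M _ χ hχ hG t X hX hXt
  have hMpos : 1 ≤ M := Nat.one_le_iff_ne_zero.mpr (NeZero.ne M)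
  have hL : 0 < Real.log X := Real.log_pos (by linarith)
  have ha : (0:ℝ) ≤ sigma1 X - 1/2 := by
    unfold sigma1
    have : 0 < 4 / Real.log X := by positivity
    linarith
  have ht : 2 ≤ |t| := by
    rw [← abs_of_pos (by norm_num : (0:ℝ) < 2)]
    apply sq_le_sq.mp; linarith
  have hpi := Real.pi_pos
  apply sum_to_tsum (P := fun x : ℝ => LFunction χ (1 / 2 + I * x) = 0)
    (f := fun x => (sigma1 X - 1 / 2) / ((sigma1 X - 1 / 2) ^ 2 + (t - x) ^ 2)) (fun x => by positivity)
  intro S hS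
  unfold EchiT
  refine final_arith hMpos ht (norm_nonneg _) (by positivity) ?_
  rcases eq_or_ne M 1 with rfl | hM
  · have D := ldata_triv (by
      intro s h0 h1 hz
      exact hG s h0 h1 (by rw [LFunction_modOne_eq]; exact hz))
    obtain ⟨hint, hsum⟩ := zero_sum D (t := t) hX S (by
      intro γ hγ
      have := hS γ hγ
      have hne : (1/2 + I * γ : ℂ) ≠ 1 := by
        intro h; have := congrArg re h; norm_num at this
      obtain rfl : χ = 1 := Subsingleton.elim _ _
      simp only [LFunctionTrivChar₁, Function.update_of_ne hne, LFunctionTrivChar]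
      rw [this, mul_zero])
    have hv := norm_VI_triv hX hXt (hint one_ne_zero zero_le_one) χ
    refine hsum.trans ?_
    gcongr
    rw [div_le_iff₀ hpi]
    linarith
  · obtain ⟨κ, D⟩ := ldata_nontriv hχ hM hG
    obtain ⟨-, hsum⟩ := zero_sum D (t := t) hX S hS
    refine hsum.trans ?_
    gcongr
    rw [VI_D χ hX t, norm_neg, norm_mul, div_le_iff₀ hpi]
    have hn2 : ‖(2 * Real.pi : ℂ)‖ = 2*Real.pi := by simp [abs_of_pos hpi]
    rw [hn2]
    linarith

end
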